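/- arXiv:1902.08064 — 2 statements merged into one kernel-verified Lean document; each statement's English description precedes it below -/
import Mathlib

section
/- Let λ, μ be positive real numbers and ν ∈ ℂ with 2·Re ν > λ + μ + 4, and let ε ∈ {0,1}. Then for all s, t ∈ [−1,1], |s − t|^{2ν} · sgn(s − t)^ε = Σ b^{λ,μ,ν}_{ℓ,m} C_ℓ^λ(s) C_m^μ(t), where the sum ranges over all pairs (ℓ,m) ∈ ℕ² with ℓ + m ≡ ε (mod 2), and the series on the right-hand side converges absolutely and uniformly on [−1,1]². -/
open MeasureTheory Filter

/-- The Gegenbauer (ultraspherical) polynomial `C_n^λ(x)`, via its explicit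
expansion (equivalent to the generating function
`(1 - 2xr + r²)^{-λ} = Σ C_n^λ(x) r^n`). -/
noncomputable def gegenbauer (l : ℂ) (n : ℕ) (x : ℂ) : ℂ :=
  ∑ k ∈ Finset.range (n / 2 + 1),
    ((-1 : ℂ) ^ k * (ascPochhammer ℂ (n - k)).eval l /
      ((Nat.factorial k : ℂ) * (Nat.factorial (n - 2 * k) : ℂ))) * (2 * x) ^ (n - 2 * k)

/-- The coefficient `b^{λ,μ,ν}_{ℓ,m}`. -/
noncomputable def bCoef (l μ ν : ℂ) (ℓ m : ℕ) : ℂ :=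
  ((-1 : ℂ) ^ m * (l + ℓ) * (μ + m) * Complex.Gamma (l + μ + 2 * ν + 1) *
      Complex.Gamma l * Complex.Gamma μ * Complex.Gamma (2 * ν + 1)) /
    ((2 : ℂ) ^ (2 * ν) *
      (Complex.Gamma (ν + 1 + (l + μ) / 2 + (l + ℓ) / 2 + (μ + m) / 2) *
        Complex.Gamma (ν + 1 + (l + μ) / 2 + (l + ℓ) / 2 - (μ + m) / 2) *
        Complex.Gamma (ν + 1 + (l + μ) / 2 - (l + ℓ) / 2 + (μ + m) / 2) *
        Complex.Gamma (ν + 1 + (l + μ) / 2 - (l + ℓ) / 2 - (μ + m) / 2)))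


namespace GB

/-- coefficient terms -/
noncomputable def T (l : ℂ) (n : ℕ) (x : ℂ) (k : ℕ) : ℂ :=
  if 2 * k ≤ n then ((-1 : ℂ) ^ k * (ascPochhammer ℂ (n - k)).eval l /
      ((Nat.factorial k : ℂ) * (Nat.factorial (n - 2 * k) : ℂ))) * (2 * x) ^ (n - 2 * k) else 0

lemma geg_eq (l : ℂ) (n : ℕ) (x : ℂ) (N : ℕ) (hN : n / 2 + 1 ≤ N) :
    gegenbauer l n x = ∑ k ∈ Finset.range N, T l n x k := by
  unfold gegenbauer
  rw [← Finset.sum_subset (s₁ := Finset.range (n / 2 + 1)) (s₂ := Finset.range N) (f := T l n x)]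
  · apply Finset.sum_congr rfl
    intro k hk
    rw [Finset.mem_range] at hk
    rw [T, if_pos (by omega)]
  · intro k hk
    simp only [Finset.mem_range] at *
    omega
  · intro k hk hk'
    simp only [Finset.mem_range] at *
    rw [T, if_neg (by omega)]

lemma geg_zero (l x : ℂ) : gegenbauer l 0 x = 1 := by simp [gegenbauer]
lemma geg_one (l x : ℂ) : gegenbauer l 1 x = 2 * l * x := by
  simp [gegenbauer]; ring

lemma asc_succ (l : ℂ) (n : ℕ) :
    (ascPochhammer ℂ (n + 1)).eval l = (ascPochhammer ℂ n).eval l * (l + n) := by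
  rw [ascPochhammer_succ_right]; simp

lemma asc_succ' (l : ℂ) (n : ℕ) :
    l * (ascPochhammer ℂ n).eval (l + 1) = (ascPochhammer ℂ n).eval l * (l + n) := by
  rw [← asc_succ, ascPochhammer_succ_left]; simp

lemma T_eq (l x : ℂ) (a k n : ℕ) (h : n = a + 2 * k) :
    T l n x k = ((-1 : ℂ) ^ k * (ascPochhammer ℂ (a + k)).eval l /
      ((Nat.factorial k : ℂ) * (Nat.factorial a : ℂ))) * (2 * x) ^ a := by
  subst h
  rw [T, if_pos (by omega), show a + 2 * k - k = a + k by omega, show a + 2 * k - 2 * k = a by omega]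

lemma T_zero (l x : ℂ) (k n : ℕ) (h : n < 2 * k) :
    T l n x k = 0 := by
  rw [T, if_neg (by omega)]

lemma R1 (l x : ℂ) (n : ℕ) :
    ((n : ℂ) + 2) * gegenbauer l (n + 2) x
      = 2 * (n + 1 + l) * x * gegenbauer l (n + 1) x - (n + 2 * l) * gegenbauer l n x := by
  rw [geg_eq l (n+2) x (n + 3) (by omega), geg_eq l (n+1) x (n + 3) (by omega),
    geg_eq l n x (n + 2) (by omega), Finset.sum_range_succ' _ (n+2),
    Finset.sum_range_succ' _ (n+2)]
  have h0 : ((n : ℂ) + 2) * T l (n+2) x 0 = 2 * (n + 1 + l) * x * T l (n + 1) x 0 := by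
    rw [T_eq l x (n+2) 0 (n+2) (by omega), T_eq l x (n+1) 0 (n+1) (by omega)]
    rw [add_zero, add_zero, asc_succ, Nat.factorial_succ (n+1)]
    have := Nat.factorial_ne_zero (n+1)
    have h2 : (n : ℂ) + 2 ≠ 0 := by exact_mod_cast (show n + 2 ≠ 0 by omega)
    push_cast
    rw [show (n : ℂ) + 1 + 1 = n + 2 by ring]
    field_simp
    ring
  have hk : ∀ k, ((n : ℂ) + 2) * T l (n+2) x (k+1) =
      2 * (n + 1 + l) * x * T l (n + 1) x (k+1) - (n + 2 * l) * T l n x k := by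
    intro k
    by_cases h : n < 2 * k
    · rw [T_zero _ _ _ _ (by omega), T_zero _ _ _ _ (by omega), T_zero _ _ _ _ (by omega)]; ring
    obtain ⟨a, rfl⟩ : ∃ a, n = a + 2 * k := ⟨n - 2 * k, by omega⟩
    rw [T_eq l x a (k+1) _ (by ring), T_eq l x a k _ rfl]
    have h1 := Nat.factorial_ne_zero k
    have hk2 : (k : ℂ) + 1 ≠ 0 := by exact_mod_cast (show k + 1 ≠ 0 by omega)
    rcases a with _ | a
    · rw [T_zero _ _ _ _ (by omega)]
      rw [← add_assoc, asc_succ, Nat.factorial_succ k, pow_succ (-1 : ℂ)]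
      push_cast
      field_simp
      ring
    · rw [T_eq l x a (k+1) _ (by ring)]
      rw [show a + 1 + (k + 1) = (a + (k+1)) + 1 by ring, asc_succ,
        show a + 1 + k = a + (k+1) by ring, Nat.factorial_succ k, Nat.factorial_succ a,
        pow_succ (-1 : ℂ)]
      have h3 := Nat.factorial_ne_zero a
      have hk3 : (a : ℂ) + 1 ≠ 0 := by exact_mod_cast (show a + 1 ≠ 0 by omega)
      push_cast
      field_simp
      ring
  rw [mul_add, mul_add, Finset.mul_sum, Finset.mul_sum, Finset.mul_sum, h0,
    Finset.sum_congr rfl (fun k _ => hk k), Finset.sum_sub_distrib]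
  ring

lemma R3 (l x : ℂ) (n : ℕ) :
    ((n : ℂ) + 2 + l) * gegenbauer l (n + 2) x
      = l * (gegenbauer (l+1) (n + 2) x - gegenbauer (l+1) n x) := by
  rw [geg_eq l (n+2) x (n + 3) (by omega), geg_eq (l+1) (n+2) x (n + 3) (by omega),
    geg_eq (l+1) n x (n + 2) (by omega), Finset.sum_range_succ' _ (n+2),
    Finset.sum_range_succ' _ (n+2)]
  have h0 : ((n : ℂ) + 2 + l) * T l (n+2) x 0 = l * T (l+1) (n + 2) x 0 := by
    rw [T_eq l x (n+2) 0 (n+2) (by omega), T_eq (l+1) x (n+2) 0 (n+2) (by omega)]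
    have := asc_succ' l (n+2)
    push_cast at this
    rw [add_zero]
    linear_combination (-((-1) ^ 0 / (((Nat.factorial 0 : ℕ) : ℂ) * ((n+2).factorial : ℂ)) * (2 * x) ^ (n+2))) * this
  have hk : ∀ k, ((n : ℂ) + 2 + l) * T l (n+2) x (k+1) =
      l * T (l+1) (n+2) x (k+1) - l * T (l+1) n x k := by
    intro k
    by_cases h : n < 2 * k
    · rw [T_zero _ _ _ _ (by omega), T_zero _ _ _ _ (by omega), T_zero _ _ _ _ (by omega)]; ring
    obtain ⟨a, rfl⟩ : ∃ a, n = a + 2 * k := ⟨n - 2 * k, by omega⟩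
    rw [T_eq l x a (k+1) _ (by ring), T_eq (l+1) x a k _ rfl, T_eq (l+1) x a (k+1) _ (by ring)]
    have h1 := Nat.factorial_ne_zero k
    have hk2 : (k : ℂ) + 1 ≠ 0 := by exact_mod_cast (show k + 1 ≠ 0 by omega)
    have e1 := asc_succ' l (a + (k+1))
    have e2 := asc_succ' l (a + k)
    rw [← asc_succ] at e2
    rw [← add_assoc] at *
    rw [Nat.factorial_succ k, pow_succ (-1 : ℂ)]
    have h3 := Nat.factorial_ne_zero a
    push_cast at *
    field_simp
    linear_combination ((2 * x) ^ a) * e1 + ((2*x)^a * (k+1)) * e2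
  rw [mul_add, mul_sub, mul_add, Finset.mul_sum, Finset.mul_sum, Finset.mul_sum, h0,
    Finset.sum_congr rfl (fun k _ => hk k), Finset.sum_sub_distrib]
  ring

lemma R2 (l x : ℂ) (n : ℕ) :
    HasDerivAt (fun x => gegenbauer l (n + 1) x) (2 * l * gegenbauer (l+1) n x) x := by
  have : (fun x => gegenbauer l (n + 1) x) =
      fun x => ∑ k ∈ Finset.range (n+2), T l (n+1) x k := by
    funext y; exact geg_eq _ _ _ _ (by omega)
  rw [this, geg_eq (l+1) n x (n + 2) (by omega), Finset.mul_sum]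
  apply HasDerivAt.fun_sum
  intro k _
  by_cases h : n + 1 < 2 * k
  · have hh : (fun x => T l (n+1) x k) = fun _ => 0 := by
      funext y; exact T_zero _ _ _ _ h
    rw [hh, T_zero _ _ _ _ (by omega), mul_zero]
    exact hasDerivAt_const x (0:ℂ)
  by_cases h' : n + 1 = 2 * k
  · have : (fun x => T l (n+1) x k) = fun x => T l (n+1) 0 k := by
      funext y; rw [T_eq _ _ 0 k _ (by omega), T_eq _ _ 0 k _ (by omega)]; simp
    rw [this, T_zero (l+1) _ k n (by omega), mul_zero]
    exact hasDerivAt_const x _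
  obtain ⟨a, rfl⟩ : ∃ a, n = a + 2 * k := ⟨n - 2 * k, by omega⟩
  have : (fun x => T l (a + 2 * k + 1) x k) = fun x => ((-1 : ℂ) ^ k * (ascPochhammer ℂ (a + 1 + k)).eval l /
      ((Nat.factorial k : ℂ) * (Nat.factorial (a+1) : ℂ))) * (2 * x) ^ (a+1) := by
    funext y; exact T_eq _ _ (a+1) k _ (by ring)
  rw [this, T_eq _ _ a k _ rfl]
  have d : HasDerivAt (fun y : ℂ => (2 * y) ^ (a+1)) (((a+1 : ℕ) : ℂ) * (2 * x) ^ a * 2) x := by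
    have h1 : HasDerivAt (fun y : ℂ => 2 * y) 2 x := by simpa using (hasDerivAt_id x).const_mul 2
    simpa using h1.fun_pow (a+1)
  refine (d.const_mul _).congr_deriv ?_
  have e2 := asc_succ' l (a + k)
  rw [← asc_succ, show a + k + 1 = a + 1 + k by ring] at e2
  rw [← e2, Nat.factorial_succ a]
  have h3 := Nat.factorial_ne_zero a
  have h1 := Nat.factorial_ne_zero k
  have hk3 : (a : ℂ) + 1 ≠ 0 := by exact_mod_cast (show a + 1 ≠ 0 by omega)
  push_cast
  field_simp

lemma parity (l x : ℂ) (n : ℕ) : gegenbauer l n (-x) = (-1) ^ n * gegenbauer l n x := by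
  unfold gegenbauer
  rw [Finset.mul_sum]
  apply Finset.sum_congr rfl
  intro k hk
  rw [Finset.mem_range] at hk
  obtain ⟨a, rfl⟩ : ∃ a, n = a + 2 * k := ⟨n - 2 * k, by omega⟩
  rw [show a + 2 * k - 2 * k = a by omega, mul_neg, neg_pow (2 * x), pow_add, pow_mul]
  simp
  ring

/-- multiplication by x, shifted parameter -/
lemma xmul (l x : ℂ) (n : ℕ) (hl : (n : ℂ) + 1 + l ≠ 0) : x * gegenbauer l (n+1) x =
    ((n + 2) * gegenbauer l (n+2) x + (n + 2 * l) * gegenbauer l n x) / (2 * (n + 1 + l)) := by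
  rw [R1]; field_simp; ring

lemma R5a (l x : ℂ) (n : ℕ) (hl : ∀ k : ℕ, l + k ≠ 0) :
    ((n : ℂ) + 2) * gegenbauer l (n+2) x =
      2 * l * (x * gegenbauer (l+1) (n+1) x - gegenbauer (l+1) n x) := by
  have e1 : (n : ℂ) + 2 + l ≠ 0 := by
    have := hl (n+2); push_cast at this; convert this using 1; ring
  have a1 := R3 l x n
  have c1 := R1 (l+1) x n
  apply mul_left_cancel₀ e1
  linear_combination ((n : ℂ) + 2) * a1 + l * c1

lemma R5b (l x : ℂ) (n : ℕ) (hl : ∀ k : ℕ, l + k ≠ 0) :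
    ((n : ℂ) + 1 + 2 * l) * gegenbauer l (n+1) x =
      2 * l * (gegenbauer (l+1) (n+1) x - x * gegenbauer (l+1) n x) := by
  rcases n with _ | n
  · simp only [zero_add, geg_one, geg_zero, Nat.cast_zero]; ring
  have e1 : (n : ℂ) + 2 + l ≠ 0 := by
    have := hl (n+2); push_cast at this; convert this using 1; ring
  have a1 := R3 l x n
  have c1 := R1 (l+1) x n
  apply mul_left_cancel₀ e1
  push_cast
  linear_combination ((n : ℂ) + 2 + 2 * l) * a1 - l * c1

lemma R4 (l x : ℂ) (n : ℕ) (hl : ∀ k : ℕ, l + k ≠ 0) :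
    (1 - x ^ 2) * (2 * l * gegenbauer (l+1) n x) =
      (n + 1 + 2 * l) * x * gegenbauer l (n+1) x - (n + 2) * gegenbauer l (n+2) x := by
  linear_combination (-x) * R5b l x n hl + R5a l x n hl

end GB

namespace GB
open PowerSeries in
/-- power series -/
noncomputable def ff (l : ℂ) : PowerSeries ℂ :=
  PowerSeries.mk fun n => (ascPochhammer ℂ n).eval l / (n.factorial : ℂ)

/-- product coefficient -/
noncomputable def DD (l z w : ℂ) (n : ℕ) : ℂ :=
  PowerSeries.coeff n (PowerSeries.rescale z (ff l) * PowerSeries.rescale w (ff l))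

open PowerSeries in
lemma ff_deriv (l z : ℂ) : (1 - C z * X) * (d⁄dX ℂ (rescale z (ff l))) =
    C (l * z) * rescale z (ff l) := by
  ext n
  rw [sub_mul, one_mul, map_sub, coeff_C_mul, mul_assoc, coeff_C_mul, coeff_derivative, coeff_rescale,
    coeff_rescale]
  rcases n with _ | n
  · simp [ff]; ring
  rw [coeff_succ_X_mul, coeff_derivative, coeff_rescale]
  simp only [ff, coeff_mk]
  rw [asc_succ l (n+1), Nat.factorial_succ (n+1)]
  have := Nat.factorial_ne_zero (n+1)
  have h2 : (n : ℂ) + 1 + 1 ≠ 0 := by exact_mod_cast (show n + 1 + 1 ≠ 0 by omega)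
  push_cast
  field_simp
  ring

open PowerSeries in
lemma DD_rec (l z w : ℂ) (hzw : z * w = 1) (n : ℕ) :
    ((n : ℂ) + 2) * DD l z w (n+2) = (n + 1 + l) * (z + w) * DD l z w (n+1)
      - (n + 2 * l) * DD l z w n := by
  set G := rescale z (ff l) * rescale w (ff l) with hG
  have key : d⁄dX ℂ G - C (z + w) * (X * d⁄dX ℂ G) + X * (X * d⁄dX ℂ G) =
      C (l * (z + w)) * G - C (2 * l) * (X * G) := by
    have hC : (C z : PowerSeries ℂ) * C w = 1 := by rw [← map_mul, hzw, map_one]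
    have hd : d⁄dX ℂ G = rescale z (ff l) * d⁄dX ℂ (rescale w (ff l)) +
      rescale w (ff l) * d⁄dX ℂ (rescale z (ff l)) := by
      rw [hG, Derivation.leibniz]; simp
    have e1 := ff_deriv l z
    have e2 := ff_deriv l w
    rw [hd, hG]
    simp only [map_mul, map_add, map_ofNat] at *
    linear_combination (1 - C w * X) * rescale w (ff l) * e1 + (1 - C z * X) * rescale z (ff l) * e2
      + (-(X * X) * (rescale z (ff l) * d⁄dX ℂ (rescale w (ff l)) +
      rescale w (ff l) * d⁄dX ℂ (rescale z (ff l))) - 2 * C l * X * rescale z (ff l) * rescale w (ff l)) * hC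
  have := congrArg (coeff (n+1)) key
  rw [map_add, map_sub, map_sub] at this
  simp only [coeff_C_mul, coeff_succ_X_mul, coeff_derivative] at this
  have h1 : DD l z w (n+2) = coeff (n+1+1) G := rfl
  have h2 : DD l z w (n+1) = coeff (n+1) G := rfl
  have h3 : DD l z w n = coeff n G := rfl
  rw [h1, h2, h3]
  have h4 : coeff (n+1) (X * (X * d⁄dX ℂ G)) = coeff n G * n := by
    rw [coeff_succ_X_mul]
    rcases n with _ | n
    · simp
    · rw [coeff_succ_X_mul, coeff_derivative]; push_cast; rfl
  simp only [coeff_succ_X_mul] at h4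
  rw [h4] at this
  push_cast at this
  linear_combination this

lemma geg_eq_DD (l z w x : ℂ) (hzw : z * w = 1) (hx : z + w = 2 * x) (n : ℕ) :
    gegenbauer l n x = DD l z w n := by
  induction n using Nat.twoStepInduction with
  | zero => simp [geg_zero, DD, ff, PowerSeries.coeff_mul]
  | one =>
    rw [geg_one]
    rw [DD, PowerSeries.coeff_mul, show Finset.HasAntidiagonal.antidiagonal 1 = {((0:ℕ),(1:ℕ)),(1,0)} from rfl]
    simp [ff, PowerSeries.coeff_rescale]
    linear_combination (-l) * hx
  | more n h1 h2 =>
    have h3 : (n : ℂ) + 2 ≠ 0 := by exact_mod_cast (show n + 2 ≠ 0 by omega)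
    apply mul_left_cancel₀ h3
    rw [R1, DD_rec l z w hzw, h1, h2, hx]; ring

lemma asc_real (l : ℝ) (n : ℕ) :
    (ascPochhammer ℂ n).eval (l : ℂ) = (((ascPochhammer ℝ n).eval l : ℝ) : ℂ) := by
  induction n with
  | zero => simp
  | succ n ih => rw [asc_succ, ih, ascPochhammer_succ_right]; simp

lemma norm_geg_le (l : ℝ) (hl : 0 < l) (n : ℕ) (x : ℝ) (hx : x ∈ Set.Icc (-1 : ℝ) 1) :
    ‖gegenbauer l n x‖ ≤ ‖gegenbauer l n 1‖ := by
  have hpos : ∀ n : ℕ, 0 ≤ (ascPochhammer ℝ n).eval l / (n.factorial : ℝ) := fun n => by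
    have := ascPochhammer_pos n l hl
    positivity
  have h1 : gegenbauer l n 1 = ((∑ p ∈ Finset.HasAntidiagonal.antidiagonal n,
      ((ascPochhammer ℝ p.1).eval l / (p.1.factorial : ℝ)) *
       ((ascPochhammer ℝ p.2).eval l / (p.2.factorial : ℝ)) : ℝ) : ℂ) := by
    rw [geg_eq_DD l 1 1 1 (by simp) (by norm_num), DD, PowerSeries.coeff_mul]
    push_cast
    refine Finset.sum_congr rfl fun p _ => ?_
    simp [ff, asc_real]
  have h2 : ‖gegenbauer l n x‖ ≤ (∑ p ∈ Finset.HasAntidiagonal.antidiagonal n,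
      ((ascPochhammer ℝ p.1).eval l / (p.1.factorial : ℝ)) *
       ((ascPochhammer ℝ p.2).eval l / (p.2.factorial : ℝ)) : ℝ) := by
    set θ := Real.arccos x
    have hc : Real.cos θ = x := Real.cos_arccos hx.1 hx.2
    have hn : ∀ θ : ℝ, ‖Complex.exp (θ * Complex.I)‖ = 1 := fun θ => Complex.norm_exp_ofReal_mul_I θ
    rw [geg_eq_DD l (Complex.exp (θ * Complex.I)) (Complex.exp ((-θ : ℝ) * Complex.I)) x
      (by rw [← Complex.exp_add]; simp)
      (by rw [← hc, Complex.ofReal_cos, Complex.cos]; push_cast; ring), DD, PowerSeries.coeff_mul]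
    refine (norm_sum_le _ _).trans (Finset.sum_le_sum fun p _ => ?_)
    rw [norm_mul, PowerSeries.coeff_rescale, PowerSeries.coeff_rescale, norm_mul, norm_mul, norm_pow, norm_pow,
      hn, hn]
    simp only [ff, PowerSeries.coeff_mk, asc_real, one_pow, one_mul]
    apply le_of_eq
    congr 1
    · rw [← Complex.ofReal_natCast, ← Complex.ofReal_div, Complex.norm_real, Real.norm_of_nonneg (hpos _)]
    · rw [← Complex.ofReal_natCast, ← Complex.ofReal_div, Complex.norm_real, Real.norm_of_nonneg (hpos _)]
  rw [h1, Complex.norm_real, Real.norm_of_nonneg]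
  · exact h2
  · exact Finset.sum_nonneg fun p _ => mul_nonneg (hpos _) (hpos _)

/-- Pochhammer product -/
noncomputable def PP (s : ℂ) (n : ℕ) : ℂ := ∏ j ∈ Finset.range n, (s + j)

/-- normalized -/
noncomputable def vv (s : ℂ) (n : ℕ) : ℝ := ‖PP s n‖ / ((n.factorial : ℝ) * ((n : ℝ) + 1) ^ (s.re - 1))

lemma ratio_tendsto (σ : ℝ) : Tendsto (fun n : ℕ => ((n : ℝ) + 1) * ((n : ℝ) + 2) ^ (σ - 1) / (n : ℝ) ^ σ)
    atTop (nhds 1) := by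
  have h1 : Tendsto (fun n : ℕ => (1 + 2 / (n : ℝ))) atTop (nhds 1) := by
    simpa using (tendsto_const_nhds (x := (1:ℝ))).add (tendsto_const_div_atTop_nhds_zero_nat 2)
  have h2 : Tendsto (fun n : ℕ => (1 + 1 / (n : ℝ))) atTop (nhds 1) := by
    simpa using (tendsto_const_nhds (x := (1:ℝ))).add (tendsto_const_div_atTop_nhds_zero_nat 1)
  have h3 := h2.mul (h1.rpow_const (p := σ - 1) (Or.inl one_ne_zero))
  rw [Real.one_rpow, one_mul] at h3
  refine h3.congr' ?_
  filter_upwards [eventually_gt_atTop 0] with n hn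
  have hn' : (0:ℝ) < n := by exact_mod_cast hn
  rw [show (1 + 2 / (n:ℝ)) = ((n : ℝ) + 2) / n by field_simp, Real.div_rpow (by positivity) hn'.le,
    Real.rpow_sub hn', Real.rpow_one]
  field_simp

lemma vv_inv_tendsto (s : ℂ) : Tendsto (fun n => (vv s (n+1))⁻¹) atTop (nhds ‖Complex.Gamma s‖) := by
  have h := ((Complex.GammaSeq_tendsto_Gamma s).norm).mul (ratio_tendsto s.re)
  rw [mul_one] at h
  refine h.congr' ?_
  filter_upwards [eventually_gt_atTop 0] with n hn
  have hn' : (0:ℝ) < n := by exact_mod_cast hn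
  have e : ‖(n : ℂ) ^ s‖ = (n : ℝ) ^ s.re := by
    have := Complex.norm_cpow_eq_rpow_re_of_pos hn' s
    simpa using this
  have := Real.rpow_pos_of_pos hn' s.re
  have := Nat.factorial_pos n
  rw [vv, Complex.GammaSeq, norm_div, norm_mul, e, PP, inv_div, Nat.factorial_succ]
  rw [show ‖((n.factorial : ℕ) : ℂ)‖ = n.factorial by simp]
  push_cast
  rw [show (n:ℝ) + 1 + 1 = n + 2 by ring]
  field_simp

lemma PP_upper (s : ℂ) : ∃ C, 0 < C ∧ ∀ n, ‖PP s n‖ ≤ C * ((n.factorial : ℝ) * ((n : ℝ) + 1) ^ (s.re - 1)) := by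
  have : ∃ L, Tendsto (fun n => (vv s (n+1))) atTop (nhds L) := by
    by_cases h : Complex.Gamma s = 0
    · obtain ⟨m, hm⟩ := (Complex.Gamma_eq_zero_iff s).1 h
      refine ⟨0, tendsto_const_nhds.congr' ?_⟩
      filter_upwards [eventually_gt_atTop m] with n hn
      have : PP s (n+1) = 0 := by
        apply Finset.prod_eq_zero (i := m) (by simp; omega)
        rw [hm]; simp
      rw [vv, this]; simp
    · refine ⟨_, ((vv_inv_tendsto s).inv₀ (by simpa using h)).congr fun n => by simp⟩
  obtain ⟨L, hL⟩ := this
  rw [tendsto_add_atTop_iff_nat] at hL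
  obtain ⟨C, hC⟩ := hL.bddAbove_range
  refine ⟨max C 1, by positivity, fun n => ?_⟩
  have h := hC ⟨n, rfl⟩
  have hp : 0 < (n.factorial : ℝ) * ((n : ℝ) + 1) ^ (s.re - 1) := by positivity
  simp only [vv] at h
  rw [div_le_iff₀ hp] at h
  exact h.trans (by gcongr; exact le_max_left _ _)

lemma PP_lower (s : ℂ) (hs : ∀ m : ℕ, s + m ≠ 0) :
    ∃ C, 0 < C ∧ ∀ n : ℕ, ((n.factorial : ℝ) * ((n : ℝ) + 1) ^ (s.re - 1)) ≤ C * ‖PP s n‖ := by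
  have hL := vv_inv_tendsto s
  rw [tendsto_add_atTop_iff_nat (f := fun n => (vv s n)⁻¹)] at hL
  obtain ⟨C, hC⟩ := hL.bddAbove_range
  refine ⟨max C 1, by positivity, fun n => ?_⟩
  have h := hC ⟨n, rfl⟩
  have hp : 0 < ‖PP s n‖ := by
    rw [norm_pos_iff]
    exact Finset.prod_ne_zero_iff.2 fun m _ => hs m
  simp only [vv, inv_div] at h
  rw [div_le_iff₀ hp] at h
  exact h.trans (by gcongr; exact le_max_left _ _)

lemma Gamma_PP (s : ℂ) (hs : ∀ m : ℕ, s + m ≠ 0) (n : ℕ) :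
    Complex.Gamma (s + n) = PP s n * Complex.Gamma s := by
  induction n with
  | zero => simp [PP]
  | succ n ih =>
    rw [PP, Finset.prod_range_succ, ← PP]
    push_cast
    rw [← add_assoc, Complex.Gamma_add_one _ (hs n), ih]; ring

lemma Gamma_PP' (s : ℂ) (n : ℕ) :
    (Complex.Gamma (s - n))⁻¹ = (-1) ^ n * PP (1 - s) n * (Complex.Gamma s)⁻¹ := by
  induction n with
  | zero => simp [PP]
  | succ n ih =>
    rw [PP, Finset.prod_range_succ, ← PP]
    have := Complex.one_div_Gamma_eq_self_mul_one_div_Gamma_add_one (s - (n+1 : ℕ))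
    rw [this, show s - ((n+1 : ℕ):ℂ) + 1 = s - n by push_cast; ring, ih]
    push_cast; ring

/-- the function 1/(Γ(A+z)Γ(A-z)) -/
noncomputable def Fz (A z : ℂ) : ℂ := (Complex.Gamma (A + z))⁻¹ * (Complex.Gamma (A - z))⁻¹

lemma Fz_neg (A z : ℂ) : Fz A (-z) = Fz A z := by
  rw [Fz, Fz, mul_comm, sub_neg_eq_add, ← sub_eq_add_neg]

lemma Fz_bound (A : ℂ) (z : ℝ) (h : 0 < A.re + z) :
    ∃ C, 0 < C ∧ ∀ n : ℕ, ‖Fz A (z + n)‖ ≤ C * ((n : ℝ) + 1) ^ (1 - 2 * A.re) := by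
  have hs : ∀ m : ℕ, (A + z) + m ≠ 0 := fun m hm => by
    have := congrArg Complex.re hm
    simp at this
    have : (0:ℝ) ≤ m := by positivity
    linarith
  obtain ⟨C1, hC1, h1⟩ := PP_upper (1 - (A - z))
  obtain ⟨C2, hC2, h2⟩ := PP_lower (A + z) hs
  refine ⟨C1 * C2 * (‖Fz A z‖ + 1), by positivity, fun n => ?_⟩
  have e : ‖Fz A (z + n)‖ = ‖Fz A z‖ * (‖PP (1 - (A - z)) n‖ / ‖PP (A + z) n‖) := by
    rw [Fz, ← add_assoc, ← sub_sub, Gamma_PP _ hs, Gamma_PP', Fz]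
    simp only [norm_mul, norm_inv, norm_pow, norm_neg, norm_one, one_pow]
    field_simp
  have hp : 0 < ‖PP (A + z) n‖ := by
    rw [norm_pos_iff]
    exact Finset.prod_ne_zero_iff.2 fun m _ => hs m
  have hn : (0:ℝ) < (n:ℝ) + 1 := by positivity
  have : ‖PP (1 - (A - z)) n‖ / ‖PP (A + z) n‖ ≤ C1 * C2 * ((n : ℝ) + 1) ^ (1 - 2 * A.re) := by
    rw [div_le_iff₀ hp]
    calc _ ≤ _ := h1 n
      _ = C1 * (((n:ℝ)+1) ^ (1 - 2 * A.re) * (n.factorial * ((n:ℝ)+1) ^ ((A + z).re - 1))) := by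
        have : ((n:ℝ)+1) ^ ((1 - (A - z)).re - 1) = ((n:ℝ)+1) ^ (1 - 2 * A.re) * ((n:ℝ)+1) ^ ((A + z).re - 1) := by
          rw [← Real.rpow_add hn]; congr 1; simp; ring
        rw [this]; ring
      _ ≤ C1 * (((n:ℝ)+1) ^ (1 - 2 * A.re) * (C2 * ‖PP (A + z) n‖)) :=
        mul_le_mul_of_nonneg_left (mul_le_mul_of_nonneg_left (h2 n) (by positivity)) hC1.le
      _ = _ := by ring
  rw [e]
  calc _ ≤ (‖Fz A z‖ + 1) * (C1 * C2 * ((n : ℝ) + 1) ^ (1 - 2 * A.re)) := by gcongr; linarith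
    _ = _ := by ring

lemma geg_at_one (l : ℂ) (n : ℕ) : gegenbauer l n 1 * n.factorial = PP (2 * l) n := by
  induction n using Nat.twoStepInduction with
  | zero => simp [geg_zero, PP]
  | one => simp [geg_one, PP]
  | more n h1 h2 =>
    have h := R1 l 1 n
    rw [PP, Finset.prod_range_succ, Finset.prod_range_succ, ← PP]
    rw [PP, Finset.prod_range_succ, ← PP] at h2
    rw [Nat.factorial_succ] at *
    rw [Nat.factorial_succ] at *
    push_cast at *
    linear_combination (n.factorial * (n + 1) : ℂ) * h +
      2 * (n + 1 + l) * h2 - (n + 1) * (n + 2 * l) * h1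

lemma geg_bound (l : ℝ) (hl : 0 < l) : ∃ C, 0 < C ∧ ∀ (n : ℕ) (x : ℝ), x ∈ Set.Icc (-1 : ℝ) 1 →
    ‖gegenbauer l n x‖ ≤ C * ((n : ℝ) + 1) ^ (2 * l - 1) := by
  obtain ⟨C, hC, h⟩ := PP_upper (2 * l)
  refine ⟨C, hC, fun n x hx => (norm_geg_le l hl n x hx).trans ?_⟩
  have h1 := h n
  rw [← geg_at_one, norm_mul] at h1
  have hf : (0:ℝ) < n.factorial := by positivity
  have e : (2 * (l:ℂ)).re = 2 * l := by simp
  rw [e, Complex.norm_natCast] at h1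
  rw [← mul_le_mul_iff_left₀ hf]
  linarith
end GB

namespace GB

/-- product of four reciprocal Gammas -/
noncomputable def HH (A x y : ℂ) : ℂ := Fz A ((x + y) / 2) * Fz A ((x - y) / 2)

/-- the constant -/
noncomputable def Gc (l μ ν : ℂ) : ℂ :=
  Complex.Gamma (l + μ + 2 * ν + 1) *
      Complex.Gamma l * Complex.Gamma μ * Complex.Gamma (2 * ν + 1) / (2 : ℂ) ^ (2 * ν)

lemma bCoef_eq (l μ ν : ℂ) (ℓ m : ℕ) : bCoef l μ ν ℓ m =
    (-1) ^ m * Gc l μ ν * (l + ℓ) * (μ + m) * HH (ν + 1 + (l + μ) / 2) (l + ℓ) (μ + m) := by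
  rw [bCoef, Gc, HH, Fz, Fz]
  rw [show ν + 1 + (l + μ) / 2 + (l + ℓ) / 2 + (μ + m) / 2 = ν + 1 + (l + μ) / 2 + (l + ℓ + (μ + m)) / 2 by ring,
    show ν + 1 + (l + μ) / 2 + (l + ℓ) / 2 - (μ + m) / 2 = ν + 1 + (l + μ) / 2 + (l + ℓ - (μ + m)) / 2 by ring,
    show ν + 1 + (l + μ) / 2 - (l + ℓ) / 2 + (μ + m) / 2 = ν + 1 + (l + μ) / 2 - (l + ℓ - (μ + m)) / 2 by ring,
    show ν + 1 + (l + μ) / 2 - (l + ℓ) / 2 - (μ + m) / 2 = ν + 1 + (l + μ) / 2 - (l + ℓ + (μ + m)) / 2 by ring]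
  simp only [div_eq_mul_inv, mul_inv]
  ring

lemma HH_rec (l μ ν ℓ m : ℂ) :
    (μ + m) * ((2 * ν - ℓ) * HH (ν + 1 + (l + μ) / 2) (l + ℓ) (μ + m)
      - (2 * ν + ℓ + 2 * l + 2) * HH (ν + 1 + (l + μ) / 2) (l + (ℓ + 2)) (μ + m))
    = (l + ℓ + 1) * (m * HH (ν + 1 + (l + μ) / 2) (l + (ℓ + 1)) (μ + (m - 1))
      + (m + 2 * μ) * HH (ν + 1 + (l + μ) / 2) (l + (ℓ + 1)) (μ + (m + 1))) := by
  have key : ∀ s : ℂ, (Complex.Gamma s)⁻¹ = s * (Complex.Gamma (s + 1))⁻¹ := fun s => by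
    simpa using Complex.one_div_Gamma_eq_self_mul_one_div_Gamma_add_one s
  set p := ν + 1 + (l + μ) / 2 + (l + ℓ + 1 + (μ + m)) / 2 - 1 / 2 with hp
  set q := ν + 1 + (l + μ) / 2 + (l + ℓ + 1 - (μ + m)) / 2 - 1 / 2 with hq
  set r := ν + 1 + (l + μ) / 2 - (l + ℓ + 1 - (μ + m)) / 2 - 1 / 2 with hr
  set w := ν + 1 + (l + μ) / 2 - (l + ℓ + 1 + (μ + m)) / 2 - 1 / 2 with hw
  have e1 : HH (ν + 1 + (l + μ) / 2) (l + ℓ) (μ + m) = (Complex.Gamma p)⁻¹ * (Complex.Gamma (w+1))⁻¹ *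
     ((Complex.Gamma q)⁻¹ * (Complex.Gamma (r+1))⁻¹) := by
    rw [HH, Fz, Fz, hp, hq, hr, hw]; ring_nf
  have e2 : HH (ν + 1 + (l + μ) / 2) (l + (ℓ + 2)) (μ + m) = (Complex.Gamma (p+1))⁻¹ * (Complex.Gamma (w))⁻¹ *
     ((Complex.Gamma (q+1))⁻¹ * (Complex.Gamma (r))⁻¹) := by
    rw [HH, Fz, Fz, hp, hq, hr, hw]; ring_nf
  have e3 : HH (ν + 1 + (l + μ) / 2) (l + (ℓ + 1)) (μ + (m - 1)) = (Complex.Gamma (p))⁻¹ * (Complex.Gamma (w+1))⁻¹ *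
     ((Complex.Gamma (q+1))⁻¹ * (Complex.Gamma (r))⁻¹) := by
    rw [HH, Fz, Fz, hp, hq, hr, hw]; ring_nf
  have e4 : HH (ν + 1 + (l + μ) / 2) (l + (ℓ + 1)) (μ + (m + 1)) = (Complex.Gamma (p+1))⁻¹ * (Complex.Gamma (w))⁻¹ *
     ((Complex.Gamma (q))⁻¹ * (Complex.Gamma (r+1))⁻¹) := by
    rw [HH, Fz, Fz, hp, hq, hr, hw]; ring_nf
  rw [e1, e2, e3, e4, key p, key q, key r, key w]
  have : (μ + m) * ((2 * ν - ℓ) * p * q - (2 * ν + ℓ + 2 * l + 2) * r * w) =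
     (l + ℓ + 1) * (m * p * r + (m + 2 * μ) * q * w) := by
    rw [hp, hq, hr, hw]; ring
  linear_combination ((Complex.Gamma (p+1))⁻¹ * (Complex.Gamma (q+1))⁻¹ * (Complex.Gamma (r+1))⁻¹ * (Complex.Gamma (w+1))⁻¹) * this

lemma Fz_bound2 (A : ℂ) (z : ℝ) (h : 0 < A.re + z) (hA : 1 / 2 < A.re) :
    ∃ C, 0 < C ∧ ∀ N : ℕ, ‖Fz A (z + N / 2)‖ ≤ C * ((N : ℝ) + 1) ^ (1 - 2 * A.re) := by
  obtain ⟨C1, hC1, h1⟩ := Fz_bound A z h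
  obtain ⟨C2, hC2, h2⟩ := Fz_bound A (z + 1 / 2) (by linarith)
  have aux : ∀ (k N : ℕ), N ≤ 2 * k + 1 → ((k : ℝ) + 1) ^ (1 - 2 * A.re) ≤
      (1 / 2) ^ (1 - 2 * A.re) * ((N : ℝ) + 1) ^ (1 - 2 * A.re) := by
    intro k N hkN
    rw [← Real.mul_rpow (by positivity) (by positivity)]
    apply Real.rpow_le_rpow_of_nonpos (by positivity) _ (by linarith)
    have : (N:ℝ) ≤ 2 * k + 1 := by exact_mod_cast hkN
    linarith
  have hp : (0:ℝ) < (1 / 2) ^ (1 - 2 * A.re) := by positivity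
  refine ⟨(C1 + C2) * (1 / 2) ^ (1 - 2 * A.re), by positivity, fun N => ?_⟩
  rcases Nat.even_or_odd' N with ⟨k, rfl | rfl⟩
  · rw [show (z : ℂ) + ((2 * k : ℕ) : ℂ) / 2 = z + k by push_cast; ring]
    refine (h1 k).trans ?_
    rw [mul_assoc]
    refine mul_le_mul (by linarith) (aux k _ (by omega)) (by positivity) (by positivity)
  · rw [show (z : ℂ) + ((2 * k + 1 : ℕ) : ℂ) / 2 = (z + 1 / 2 : ℝ) + k by push_cast; ring]
    refine (h2 k).trans ?_
    rw [mul_assoc]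
    refine mul_le_mul (by linarith) (aux k _ (by omega)) (by positivity) (by positivity)

lemma bCoef_bound (l μ : ℝ) (hl : 0 < l) (hμ : 0 < μ) (ν : ℂ) (hν : l + μ + 4 < 2 * ν.re) :
    ∃ C, 0 < C ∧ ∀ ℓ m : ℕ, ‖bCoef l μ ν ℓ m‖ ≤
      C * (((ℓ:ℝ) + 1) * ((m:ℝ)+1)) * ((ℓ : ℝ) + m + 1) ^ (-(2 * l + 2 * μ + 5)) := by
  set A : ℂ := ν + 1 + ((l:ℂ) + μ) / 2 with hA
  have hAre : A.re = ν.re + 1 + (l + μ) / 2 := by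
    rw [hA, show ν + 1 + ((l:ℂ) + μ) / 2 = ν + ((1 + (l + μ) / 2 : ℝ) : ℂ) by push_cast; ring, Complex.add_re,
      Complex.ofReal_re]; ring
  obtain ⟨C1, hC1, h1⟩ := Fz_bound2 A ((l + μ) / 2) (by linarith) (by linarith)
  obtain ⟨C2, hC2, h2⟩ := Fz_bound2 A ((l - μ) / 2) (by linarith) (by linarith)
  obtain ⟨C3, hC3, h3⟩ := Fz_bound2 A ((μ - l) / 2) (by linarith) (by linarith)
  have one : ∀ N : ℕ, ((N : ℝ) + 1) ^ (1 - 2 * A.re) ≤ 1 := fun N =>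
    Real.rpow_le_one_of_one_le_of_nonpos (by linarith [(Nat.cast_nonneg N : (0:ℝ) ≤ N)]) (by linarith)
  refine ⟨‖Gc l μ ν‖ * (l + 1) * (μ + 1) * C1 * (C2 + C3) + 1, by positivity, fun ℓ m => ?_⟩
  have b1 : ‖Fz A (((l:ℂ) + ℓ + (μ + m)) / 2)‖ ≤ C1 * ((ℓ : ℝ) + m + 1) ^ (-(2 * l + 2 * μ + 5)) := by
    have := h1 (ℓ + m)
    rw [show (((l + μ) / 2 : ℝ) : ℂ) + ((ℓ + m : ℕ) : ℂ) / 2 = ((l:ℂ) + ℓ + (μ + m)) / 2 by push_cast; ring] at this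
    refine this.trans ?_
    push_cast
    refine mul_le_mul_of_nonneg_left ?_ hC1.le
    apply Real.rpow_le_rpow_of_exponent_le
    · have : (0:ℝ) ≤ ℓ + m := by positivity
      linarith
    · rw [hAre]; linarith
  have b2 : ‖Fz A (((l:ℂ) + ℓ - (μ + m)) / 2)‖ ≤ C2 + C3 := by
    rcases le_total m ℓ with h | h
    · obtain ⟨N, rfl⟩ := Nat.exists_eq_add_of_le h
      have := h2 N
      rw [show (((l - μ) / 2 : ℝ) : ℂ) + (N : ℂ) / 2 = ((l:ℂ) + ((m + N : ℕ):ℂ) - (μ + m)) / 2 by push_cast; ring] at this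
      have := mul_le_mul_of_nonneg_left (one N) hC2.le
      linarith
    · obtain ⟨N, rfl⟩ := Nat.exists_eq_add_of_le h
      have := h3 N
      rw [← Fz_neg, show -((((μ - l) / 2 : ℝ) : ℂ) + (N : ℂ) / 2) = ((l:ℂ) + ℓ - (μ + ((ℓ + N : ℕ) : ℂ))) / 2 by push_cast; ring] at this
      have := mul_le_mul_of_nonneg_left (one N) hC3.le
      linarith
  rw [bCoef_eq, HH, ← hA]
  simp only [norm_mul, norm_pow, norm_neg, norm_one, one_pow, one_mul]
  have c1 : ‖(l:ℂ) + ℓ‖ ≤ (l + 1) * ((ℓ:ℝ)+1) := by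
    refine (norm_add_le _ _).trans ?_
    rw [Complex.norm_real, Complex.norm_natCast, Real.norm_of_nonneg hl.le]
    have : (0:ℝ) ≤ ℓ := by positivity
    nlinarith
  have c2 : ‖(μ:ℂ) + m‖ ≤ (μ + 1) * ((m:ℝ)+1) := by
    refine (norm_add_le _ _).trans ?_
    rw [Complex.norm_real, Complex.norm_natCast, Real.norm_of_nonneg hμ.le]
    have : (0:ℝ) ≤ m := by positivity
    nlinarith
  set R := ((ℓ : ℝ) + m + 1) ^ (-(2 * l + 2 * μ + 5))
  have hR : 0 < R := by positivity
  calc ‖Gc l μ ν‖ * ‖(l:ℂ) + ℓ‖ * ‖(μ:ℂ) + m‖ * (_ * _)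
      ≤ ‖Gc l μ ν‖ * ((l + 1) * ((ℓ:ℝ)+1)) * ((μ + 1) * ((m:ℝ)+1)) * ((C1 * R) * (C2 + C3)) := by
        gcongr
    _ = (‖Gc l μ ν‖ * (l + 1) * (μ + 1) * C1 * (C2 + C3)) * (((ℓ:ℝ) + 1) * ((m:ℝ)+1)) * R := by ring
    _ ≤ _ := by gcongr; linarith

/-- summable majorant -/
noncomputable def V (p : ℕ × ℕ) : ℝ := (((p.1:ℝ) + 1) ^ (3 / 2 : ℝ))⁻¹ * (((p.2 : ℝ) + 1) ^ (3 / 2 : ℝ))⁻¹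

lemma V_summable : Summable V := by
  have h : Summable (fun n : ℕ => (((n:ℝ) + 1) ^ (3 / 2 : ℝ))⁻¹) := by
    have := (summable_nat_add_iff 1).2 (Real.summable_nat_rpow_inv.2 (show (1:ℝ) < 3 / 2 by norm_num))
    simpa using this
  exact h.mul_of_nonneg h (fun n => by positivity) (fun n => by positivity)

lemma V_pos (p : ℕ × ℕ) : 0 < V p := by unfold V; positivity

lemma main_bound (l μ : ℝ) (hl : 0 < l) (hμ : 0 < μ) (ν : ℂ) (hν : l + μ + 4 < 2 * ν.re) :
    ∃ C, 0 < C ∧ ∀ (ℓ m ℓ' m' : ℕ) (s t : ℝ), s ∈ Set.Icc (-1 : ℝ) 1 → t ∈ Set.Icc (-1 : ℝ) 1 →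
      ℓ' ≤ ℓ → m' ≤ m + 1 → m ≤ m' + 1 →
      ‖bCoef l μ ν ℓ m * gegenbauer (l + 1) ℓ' s * gegenbauer μ m' t‖ ≤ C * V (ℓ, m) := by
  obtain ⟨C1, hC1, h1⟩ := bCoef_bound l μ hl hμ ν hν
  obtain ⟨C2, hC2, h2⟩ := geg_bound (l + 1) (by linarith)
  obtain ⟨C3, hC3, h3⟩ := geg_bound μ hμ
  refine ⟨C1 * C2 * C3 * (2 * 2 ^ (2 * μ)), by positivity, ?_⟩
  intro ℓ m ℓ' m' s t hs ht hℓ hm hm'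
  set N : ℝ := (ℓ : ℝ) + m + 1 with hN
  have hℓ0 : (0:ℝ) ≤ ℓ := by positivity
  have hm0 : (0:ℝ) ≤ m := by positivity
  have hNp : 0 < N := by positivity
  have hm1 : (m':ℝ) + 1 ≤ 2 * ((m:ℝ) + 1) := by
    have : (m':ℝ) ≤ m + 1 := by exact_mod_cast hm
    linarith
  have hm2 : (m:ℝ) + 1 ≤ 2 * ((m':ℝ) + 1) := by
    have : (m:ℝ) ≤ m' + 1 := by exact_mod_cast hm'
    linarith [(Nat.cast_nonneg m' : (0:ℝ) ≤ m')]
  have g1 : ‖gegenbauer ((l:ℂ) + 1) ℓ' s‖ ≤ C2 * ((ℓ : ℝ) + 1) ^ (2 * l + 1) := by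
    have := h2 ℓ' s hs
    push_cast at this
    refine this.trans (mul_le_mul_of_nonneg_left ?_ hC2.le)
    rw [show 2 * (l + 1) - 1 = 2 * l + 1 by ring]
    apply Real.rpow_le_rpow (by positivity) _ (by linarith)
    have : (ℓ' : ℝ) ≤ ℓ := by exact_mod_cast hℓ
    linarith
  have g2 : ‖gegenbauer (μ:ℂ) m' t‖ ≤ C3 * ((2 * 2 ^ (2 * μ)) * (((m : ℝ) + 1) ^ (2 * μ) / ((m:ℝ) + 1))) := by
    refine (h3 m' t ht).trans (mul_le_mul_of_nonneg_left ?_ hC3.le)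
    rw [Real.rpow_sub (by positivity), Real.rpow_one]
    have : ((m':ℝ)+1) ^ (2 * μ) ≤ 2 ^ (2 * μ) * ((m:ℝ)+1) ^ (2 * μ) := by
      rw [← Real.mul_rpow (by positivity) (by positivity)]
      exact Real.rpow_le_rpow (by positivity) hm1 (by linarith)
    calc ((m':ℝ)+1) ^ (2 * μ) / ((m':ℝ)+1) ≤ (2 ^ (2 * μ) * ((m:ℝ)+1) ^ (2 * μ)) / (((m:ℝ)+1) / 2) := by
          gcongr; linarith
      _ = _ := by field_simp
  have hb := h1 ℓ m
  rw [norm_mul, norm_mul]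
  have k1 : ((ℓ:ℝ)+1) * ((ℓ:ℝ)+1) ^ (2 * l + 1) ≤ N ^ (2 * l + 2) := by
    rw [show 2 * l + 2 = 1 + (2 * l + 1) by ring, Real.rpow_add hNp, Real.rpow_one]
    gcongr <;> linarith
  have k2 : ((m:ℝ)+1) ^ (2 * μ) ≤ N ^ (2 * μ) := by
    gcongr; linarith
  have k3 : N ^ (-3 : ℝ) ≤ V (ℓ, m) := by
    rw [V, Real.rpow_neg hNp.le, ← mul_inv, show (3:ℝ) = 3 / 2 + 3 / 2 by norm_num, Real.rpow_add hNp]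
    norm_num only
    gcongr <;> simp only [hN] <;> linarith
  calc _ ≤ (C1 * (((ℓ:ℝ) + 1) * ((m:ℝ)+1)) * N ^ (-(2 * l + 2 * μ + 5))) * (C2 * ((ℓ : ℝ) + 1) ^ (2 * l + 1)) *
        (C3 * ((2 * 2 ^ (2 * μ)) * (((m : ℝ) + 1) ^ (2 * μ) / ((m:ℝ) + 1)))) := by gcongr
    _ = C1 * C2 * C3 * (2 * 2 ^ (2 * μ)) * ((((ℓ:ℝ)+1) * ((ℓ:ℝ)+1) ^ (2 * l + 1)) * ((m:ℝ)+1) ^ (2 * μ) * N ^ (-(2 * l + 2 * μ + 5))) := by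
        field_simp
    _ ≤ C1 * C2 * C3 * (2 * 2 ^ (2 * μ)) * (N ^ (2 * l + 2) * N ^ (2 * μ) * N ^ (-(2 * l + 2 * μ + 5))) := by gcongr
    _ = C1 * C2 * C3 * (2 * 2 ^ (2 * μ)) * N ^ (-3 : ℝ) := by
        rw [← Real.rpow_add hNp, ← Real.rpow_add hNp]; congr 2; ring
    _ ≤ _ := by gcongr
end GB

namespace GB

/-- parity indicator -/
noncomputable def chi (ε n : ℕ) : ℂ := if n % 2 = ε % 2 then 1 else 0

lemma chi_add_two (ε n : ℕ) : chi ε (n + 2) = chi ε n := by simp [chi]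
lemma norm_chi (ε n : ℕ) : ‖chi ε n‖ ≤ 1 := by unfold chi; split_ifs <;> simp

/-- general term -/
noncomputable def tm (l μ : ℝ) (ν : ℂ) (ε : ℕ) (p : ℕ × ℕ) (s t : ℝ) : ℂ :=
  chi ε (p.1 + p.2) * (bCoef l μ ν p.1 p.2 * gegenbauer l p.1 s * gegenbauer μ p.2 t)

/-- the sum -/
noncomputable def K (l μ : ℝ) (ν : ℂ) (ε : ℕ) (s t : ℝ) : ℂ := ∑' p, tm l μ ν ε p s t

/-- shifted -/
noncomputable def Y1 (l : ℂ) (n : ℕ) (x : ℂ) : ℂ := if n = 0 then 0 else gegenbauer l (n - 1) x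
/-- shifted by two -/
noncomputable def Y2 (l : ℂ) (n : ℕ) (x : ℂ) : ℂ := if n ≤ 1 then 0 else gegenbauer l (n - 2) x

/-- derivative term -/
noncomputable def dtm (l μ : ℝ) (ν : ℂ) (ε : ℕ) (p : ℕ × ℕ) (s t : ℝ) : ℂ :=
  chi ε (p.1 + p.2) * (bCoef l μ ν p.1 p.2 * (2 * l * Y1 (l+1) p.1 s) * gegenbauer μ p.2 t)

lemma geg_conn (l x : ℂ) (n : ℕ) : (l + n) * gegenbauer l n x =
    l * (gegenbauer (l+1) n x - Y2 (l+1) n x) := by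
  rcases n with _ | _ | n
  · simp [geg_zero, Y2]
  · simp [geg_one, Y2]; ring
  · have := R3 l x n
    simp only [Y2, show ¬ (n + 1 + 1 ≤ 1) by omega, if_false, show n + 1 + 1 - 2 = n by omega]
    push_cast
    linear_combination this

lemma Y1_xmul (l x : ℂ) (n : ℕ) : 2 * (l + n) * (x * Y1 (l+1) n x) =
    n * gegenbauer (l+1) n x + (n + 2 * l) * Y2 (l+1) n x := by
  rcases n with _ | _ | n
  · simp [Y1, Y2]
  · simp [geg_one, geg_zero, Y2, Y1]
  · have := R1 (l+1) x n
    simp only [Y2, Y1, show ¬ (n + 1 + 1 ≤ 1) by omega, if_false, show n + 1 + 1 - 2 = n by omega,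
      show ¬ (n + 1 + 1 = 0) by omega, show n + 1 + 1 - 1 = n + 1 by omega]
    push_cast
    linear_combination (-1) * this

lemma Z_xmul (l x : ℂ) (n : ℕ) : 2 * (l + n) * (x * gegenbauer l n x) =
    (n + 1) * gegenbauer l (n+1) x + (n + 2 * l - 1) * Y1 l n x := by
  rcases n with _ | n
  · simp [geg_one, geg_zero, Y1]
  · have := R1 l x n
    simp only [Y1, if_false, show ¬ (n + 1 = 0) by omega, show n + 1 - 1 = n by omega]
    push_cast
    linear_combination (-1) * this

lemma shift1 (G : ℕ × ℕ → ℂ) (h : ∀ m, G (0, m) = 0) :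
    ∑' p : ℕ × ℕ, G (p.1 + 1, p.2) = ∑' p, G p := by
  have hi : Function.Injective (fun p : ℕ × ℕ => (p.1 + 1, p.2)) := by
    intro p q hpq
    simp at hpq
    exact Prod.ext hpq.1 hpq.2
  apply hi.tsum_eq
  rintro ⟨a, b⟩ hp
  rcases a with _ | a
  · exact absurd (h b) hp
  · exact ⟨(a, b), rfl⟩

lemma shift2 (G : ℕ × ℕ → ℂ) (h : ∀ m, G (m, 0) = 0) :
    ∑' p : ℕ × ℕ, G (p.1, p.2 + 1) = ∑' p, G p := by
  have hi : Function.Injective (fun p : ℕ × ℕ => (p.1, p.2 + 1)) := by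
    intro p q hpq
    simp at hpq
    exact Prod.ext hpq.1 hpq.2
  apply hi.tsum_eq
  rintro ⟨b, a⟩ hp
  rcases a with _ | a
  · exact absurd (h b) hp
  · exact ⟨(b, a), rfl⟩

lemma summable_sh1 (G : ℕ × ℕ → ℂ) (h : Summable G) : Summable (fun p : ℕ × ℕ => G (p.1 + 1, p.2)) := by
  have hi : Function.Injective (fun p : ℕ × ℕ => (p.1 + 1, p.2)) := by
    intro p q hpq
    simp at hpq
    exact Prod.ext hpq.1 hpq.2
  exact h.comp_injective hi

lemma summable_sh2 (G : ℕ × ℕ → ℂ) (h : Summable G) : Summable (fun p : ℕ × ℕ => G (p.1, p.2 + 1)) := by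
  have hi : Function.Injective (fun p : ℕ × ℕ => (p.1, p.2 + 1)) := by
    intro p q hpq
    simp at hpq
    exact Prod.ext hpq.1 hpq.2
  exact h.comp_injective hi

lemma ratio_bound (a : ℂ) (l : ℝ) (hl : 0 < l) : ∃ C, 0 < C ∧ ∀ n : ℕ, ‖(a + n) / ((l:ℂ) + n)‖ ≤ C := by
  refine ⟨‖a‖ / l + 1, by positivity, fun n => ?_⟩
  have e : ‖(l:ℂ) + n‖ = l + n := by
    rw [← Complex.ofReal_natCast, ← Complex.ofReal_add, Complex.norm_real, Real.norm_of_nonneg (by positivity)]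
  have hn : (0:ℝ) ≤ n := by positivity
  rw [norm_div, e, div_le_iff₀ (by positivity)]
  refine (norm_add_le _ _).trans ?_
  rw [Complex.norm_natCast]
  have : (‖a‖ / l + 1) * (l + n) = ‖a‖ + n + (‖a‖ / l * n + l) := by field_simp; ring
  rw [this]
  have : 0 ≤ ‖a‖ / l * n + l := by positivity
  linarith

lemma lne (l : ℝ) (hl : 0 < l) (n : ℕ) : (l:ℂ) + n ≠ 0 := by
  rw [← Complex.ofReal_natCast, ← Complex.ofReal_add, Complex.ofReal_ne_zero]; positivity

section
variable (l μ : ℝ) (hl : 0 < l) (hμ : 0 < μ) (ν : ℂ) (hν : l + μ + 4 < 2 * ν.re) (ε : ℕ)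

include hl hμ hν

lemma tm_bound : ∃ C, 0 < C ∧ ∀ (p : ℕ × ℕ) (s t : ℝ), s ∈ Set.Icc (-1 : ℝ) 1 → t ∈ Set.Icc (-1 : ℝ) 1 →
    ‖tm l μ ν ε p s t‖ ≤ C * V p := by
  obtain ⟨C, hC, h⟩ := main_bound l μ hl hμ ν hν
  obtain ⟨R, hR, hr⟩ := ratio_bound l l hl
  refine ⟨2 * C, by positivity, fun p s t hs ht => ?_⟩
  obtain ⟨ℓ, m⟩ := p
  have hq : ‖(l:ℂ) / ((l:ℂ) + ℓ)‖ ≤ 1 := by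
    have e : ‖(l:ℂ) + ℓ‖ = l + ℓ := by
      rw [← Complex.ofReal_natCast, ← Complex.ofReal_add, Complex.norm_real, Real.norm_of_nonneg (by positivity)]
    rw [norm_div, e, Complex.norm_real, Real.norm_of_nonneg hl.le]
    apply div_le_one_of_le₀ _ (by positivity)
    linarith [(Nat.cast_nonneg ℓ : (0:ℝ) ≤ ℓ)]
  have e : tm l μ ν ε (ℓ, m) s t = chi ε (ℓ + m) * ((l:ℂ) / ((l:ℂ) + ℓ)) *
      (bCoef l μ ν ℓ m * gegenbauer (l+1) ℓ s * gegenbauer μ m t -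
        bCoef l μ ν ℓ m * Y2 (l+1) ℓ s * gegenbauer μ m t) := by
    have := geg_conn l s ℓ
    have h0 := lne l hl ℓ
    rw [tm]
    simp only
    field_simp
    linear_combination (chi ε (ℓ+m) * bCoef l μ ν ℓ m * gegenbauer μ m t) * this
  rw [e, norm_mul, norm_mul]
  have h1 := h ℓ m ℓ m s t hs ht le_rfl (by omega) (by omega)
  have h2 : ‖bCoef l μ ν ℓ m * Y2 (l+1) ℓ s * gegenbauer μ m t‖ ≤ C * V (ℓ, m) := by
    unfold Y2
    split_ifs
    · simp; have := V_pos (ℓ, m); positivity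
    · exact h ℓ m (ℓ - 2) m s t hs ht (by omega) (by omega) (by omega)
  have := V_pos (ℓ, m)
  calc _ ≤ 1 * 1 * (C * V (ℓ, m) + C * V (ℓ, m)) := by
        gcongr
        · exact norm_chi _ _
        · exact (norm_sub_le _ _).trans (add_le_add h1 h2)
    _ = _ := by ring

lemma dtm_bound : ∃ C, 0 < C ∧ ∀ (p : ℕ × ℕ) (s t : ℝ), s ∈ Set.Icc (-1 : ℝ) 1 → t ∈ Set.Icc (-1 : ℝ) 1 →
    ‖dtm l μ ν ε p s t‖ ≤ C * V p := by
  obtain ⟨C, hC, h⟩ := main_bound l μ hl hμ ν hν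
  refine ⟨2 * l * C, by positivity, fun p s t hs ht => ?_⟩
  obtain ⟨ℓ, m⟩ := p
  have e : dtm l μ ν ε (ℓ, m) s t = chi ε (ℓ + m) * (2 * l) *
      (bCoef l μ ν ℓ m * Y1 (l+1) ℓ s * gegenbauer μ m t) := by
    rw [dtm]; ring
  have := V_pos (ℓ, m)
  have h2 : ‖bCoef l μ ν ℓ m * Y1 (l+1) ℓ s * gegenbauer μ m t‖ ≤ C * V (ℓ, m) := by
    unfold Y1
    split_ifs
    · simp; positivity
    · exact h ℓ m (ℓ - 1) m s t hs ht (by omega) (by omega) (by omega)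
  rw [e, norm_mul, norm_mul]
  have e2 : ‖(2 * l : ℂ)‖ = 2 * l := by
    rw [norm_mul, Complex.norm_real, Real.norm_of_nonneg hl.le]; simp
  rw [e2]
  calc _ ≤ 1 * (2 * l) * (C * V (ℓ, m)) := by
        gcongr
        exact norm_chi _ _
    _ = _ := by ring

lemma tm_summable (s t : ℝ) (hs : s ∈ Set.Icc (-1 : ℝ) 1) (ht : t ∈ Set.Icc (-1 : ℝ) 1) :
    Summable (fun p => tm l μ ν ε p s t) := by
  obtain ⟨C, hC, h⟩ := tm_bound l μ hl hμ ν hν ε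
  exact Summable.of_norm_bounded (V_summable.mul_left C) (fun p => h p s t hs ht)

lemma dtm_summable (s t : ℝ) (hs : s ∈ Set.Icc (-1 : ℝ) 1) (ht : t ∈ Set.Icc (-1 : ℝ) 1) :
    Summable (fun p => dtm l μ ν ε p s t) := by
  obtain ⟨C, hC, h⟩ := dtm_bound l μ hl hμ ν hν ε
  exact Summable.of_norm_bounded (V_summable.mul_left C) (fun p => h p s t hs ht)

lemma K_ode_alg (s t : ℝ) (hs : s ∈ Set.Icc (-1 : ℝ) 1) (ht : t ∈ Set.Icc (-1 : ℝ) 1) :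
    ((s : ℂ) - t) * ∑' p, dtm l μ ν ε p s t = 2 * ν * K l μ ν ε s t := by
  obtain ⟨C, hC, h⟩ := main_bound l μ hl hμ ν hν
  have sumC : ∀ (f g : ℕ × ℕ → ℂ) (c d : ℂ) (R : ℝ), (∀ p, f p = chi ε (p.1 + p.2) * c * d * g p) → 
      (∀ p, ‖g p‖ ≤ R * (C * V p)) → Summable f := by
    intro f g c d R hf hg
    have : Summable g := Summable.of_norm_bounded ((V_summable.mul_left C).mul_left R) hg
    refine Summable.of_norm_bounded (g := fun p => ‖c * d‖ * ‖g p‖) (this.norm.mul_left _) fun p => ?_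
    rw [hf, norm_mul, mul_assoc, norm_mul]
    calc _ ≤ 1 * ‖c * d‖ * ‖g p‖ := by gcongr; exact norm_chi _ _
      _ = _ := by ring
  set A : ℂ := ν + 1 + ((l:ℂ) + μ) / 2 with hA
  set B : ℕ × ℕ → ℂ := fun p => (-1) ^ p.2 * Gc l μ ν * HH A (l + p.1) (μ + p.2) with hB
  have hb : ∀ p : ℕ × ℕ, bCoef l μ ν p.1 p.2 = (l + p.1) * (μ + p.2) * B p := fun p => by
    rw [bCoef_eq, hB]; ring
  set Y : ℕ → ℂ := fun n => gegenbauer (l+1) n s with hY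
  set Z : ℕ → ℂ := fun n => gegenbauer μ n t with hZ
  set i1 : ℕ × ℕ → ℂ := fun p => chi ε (p.1 + p.2) * l * (μ + p.2) * B p * (2 * ν - p.1) * Y p.1 * Z p.2 with hi1
  set i2 : ℕ × ℕ → ℂ := fun p => chi ε (p.1 + p.2) * l * (μ + p.2) * B p * (2 * ν + p.1 + 2 * l) * Y2 (l+1) p.1 s * Z p.2 with hi2
  set w1 : ℕ × ℕ → ℂ := fun p => chi ε (p.1 + p.2) * l * (l + p.1) * B p * Y1 (l+1) p.1 s * (p.2 + 1) * Z (p.2 + 1) with hw1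
  set w2 : ℕ × ℕ → ℂ := fun p => chi ε (p.1 + p.2) * l * (l + p.1) * B p * Y1 (l+1) p.1 s * (p.2 + 2 * μ - 1) * Y1 μ p.2 t with hw2
  set G : ℕ × ℕ → ℂ := fun p => chi ε (p.1 + p.2) * l * (l + p.1 + 1) * (-(-1) ^ p.2 * Gc l μ ν * HH A (l + (p.1 + 1)) (μ + (p.2 - 1))) *
      Y p.1 * p.2 * Z p.2 with hG
  have nl := lne l hl
  have nμ := lne μ hμ
  have hVp := V_pos
  have si1 : Summable i1 := by
    obtain ⟨R, hR, hr⟩ := ratio_bound (-(2 * ν)) l hl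
    refine sumC i1 (fun p => ((-(2 * ν) + p.1) / (l + p.1)) * (bCoef l μ ν p.1 p.2 * Y p.1 * Z p.2)) l (-1) R (fun p => ?_) (fun p => ?_)
    · have := nl p.1
      simp only [hi1, hb]; field_simp; ring
    · rw [norm_mul]
      exact mul_le_mul (hr _) (h p.1 p.2 p.1 p.2 s t hs ht le_rfl (by omega) (by omega)) (norm_nonneg _) hR.le
  have si2 : Summable i2 := by
    obtain ⟨R, hR, hr⟩ := ratio_bound (2 * ν + 2 * l) l hl
    refine sumC i2 (fun p => ((2 * ν + 2 * l + p.1) / (l + p.1)) * (bCoef l μ ν p.1 p.2 * Y2 (l+1) p.1 s * Z p.2)) l 1 R (fun p => ?_) (fun p => ?_)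
    · have := nl p.1
      simp only [hi2, hb]; field_simp; ring
    · rw [norm_mul]
      refine mul_le_mul (hr _) ?_ (norm_nonneg _) hR.le
      unfold Y2
      split_ifs
      · simp; have := hVp p; positivity
      · exact (h p.1 p.2 (p.1 - 2) p.2 s t hs ht (by omega) (by omega) (by omega))
  have sw1 : Summable w1 := by
    obtain ⟨R, hR, hr⟩ := ratio_bound 1 μ hμ
    refine sumC w1 (fun p => ((1 + p.2) / (μ + p.2)) * (bCoef l μ ν p.1 p.2 * Y1 (l+1) p.1 s * Z (p.2 + 1))) l 1 R (fun p => ?_) (fun p => ?_)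
    · have := nμ p.2
      simp only [hw1, hb]; field_simp; ring
    · rw [norm_mul]
      refine mul_le_mul (hr _) ?_ (norm_nonneg _) hR.le
      unfold Y1
      split_ifs
      · simp; have := hVp p; positivity
      · exact (h p.1 p.2 (p.1 - 1) (p.2 + 1) s t hs ht (by omega) (by omega) (by omega))
  have sw2 : Summable w2 := by
    obtain ⟨R, hR, hr⟩ := ratio_bound (2 * μ - 1) μ hμ
    refine sumC w2 (fun p => ((2 * μ - 1 + p.2) / (μ + p.2)) * (bCoef l μ ν p.1 p.2 * Y1 (l+1) p.1 s * Y1 μ p.2 t)) l 1 R (fun p => ?_) (fun p => ?_)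
    · have := nμ p.2
      simp only [hw2, hb]; field_simp; ring
    · rw [norm_mul]
      refine mul_le_mul (hr _) ?_ (norm_nonneg _) hR.le
      unfold Y1
      split_ifs
      · simp; have := hVp p; positivity
      · simp; have := hVp p; positivity
      · simp; have := hVp p; positivity
      · exact (h p.1 p.2 (p.1 - 1) (p.2 - 1) s t hs ht (by omega) (by omega) (by omega))
  have sK := tm_summable l μ hl hμ ν hν ε s t hs ht
  have sd := dtm_summable l μ hl hμ ν hν ε s t hs ht
  -- first relation
  have r1 : 2 * ν * K l μ ν ε s t - s * ∑' p, dtm l μ ν ε p s t = ∑' p, i1 p - ∑' p, i2 p := by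
    rw [K, ← tsum_mul_left, ← tsum_mul_left, ← (sK.mul_left _).tsum_sub (sd.mul_left _), ← si1.tsum_sub si2]
    congr 1; funext p
    have g1 := geg_conn l s p.1
    have g2 := Y1_xmul l s p.1
    simp only [tm, dtm, hb, hi1, hi2, hY, hZ]
    linear_combination (chi ε (p.1+p.2) * (μ + p.2) * B p * gegenbauer μ p.2 t) * (2 * ν * g1 - l * g2)
  have r2 : t * ∑' p, dtm l μ ν ε p s t = ∑' p, w1 p + ∑' p, w2 p := by
    rw [← tsum_mul_left, ← sw1.tsum_add sw2]
    congr 1; funext p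
    have g1 := Z_xmul μ t p.2
    simp only [dtm, hb, hw1, hw2, hZ]
    linear_combination (chi ε (p.1+p.2) * (l + p.1) * B p * l * Y1 (l+1) p.1 s) * g1
  have q2 : ∑' p, i2 p = ∑' p : ℕ × ℕ, i2 (p.1 + 1 + 1, p.2) := by
    rw [shift1 (fun p => i2 (p.1 + 1, p.2)) (fun m => by simp [hi2, Y2]), shift1 i2 (fun m => by simp [hi2, Y2])]
  have q3 : ∑' p, w1 p = ∑' p, G p := by
    rw [← shift1 w1 (fun m => by simp [hw1, Y1]), ← shift2 G (fun m => by simp [hG])]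
    congr 1; funext p
    simp only [hw1, hG, hB, hY]
    rw [show p.1 + 1 + p.2 = p.1 + (p.2 + 1) by ring]
    simp only [Y1, Nat.add_sub_cancel, if_neg (Nat.succ_ne_zero _)]
    push_cast
    rw [show (μ:ℂ) + (p.2 + 1 - 1) = μ + p.2 by ring]
    ring
  have q4 : ∑' p, w2 p = ∑' p : ℕ × ℕ, w2 (p.1 + 1, p.2 + 1) := by
    rw [shift2 (fun p => w2 (p.1 + 1, p.2)) (fun m => by simp [hw2, Y1]), shift1 w2 (fun m => by simp [hw2, Y1])]
  have pt : ∀ p : ℕ × ℕ, i1 p - i2 (p.1 + 1 + 1, p.2) + G p + w2 (p.1 + 1, p.2 + 1) = 0 := by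
    intro p
    have key := HH_rec l μ ν p.1 p.2
    rw [← hA] at key
    simp only [hi1, hi2, hG, hw2, hB, hY, hZ]
    rw [show p.1 + 1 + 1 + p.2 = p.1 + p.2 + 2 by ring, show p.1 + 1 + (p.2 + 1) = p.1 + p.2 + 2 by ring, chi_add_two]
    simp only [Y1, Y2, if_neg (Nat.succ_ne_zero _), Nat.add_sub_cancel, show ¬ (p.1 + 1 + 1 ≤ 1) by omega, if_false,
      show p.1 + 1 + 1 - 2 = p.1 by omega]
    push_cast
    rw [show (p.1 : ℂ) + 1 + 1 = p.1 + 2 by ring]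
    linear_combination (chi ε (p.1 + p.2) * l * (-1) ^ p.2 * Gc l μ ν * gegenbauer (l+1) p.1 s * gegenbauer μ p.2 t) * key
  have sG : Summable G := by
    have : G = fun p => -(i1 p - i2 (p.1 + 1 + 1, p.2) + w2 (p.1 + 1, p.2 + 1)) := by
      funext p; linear_combination pt p
    rw [this]
    exact ((si1.sub (summable_sh1 _ (summable_sh1 _ si2))).add (summable_sh2 _ (summable_sh1 _ sw2))).neg
  have : ∑' p, i1 p - ∑' p, i2 p + (∑' p, w1 p + ∑' p, w2 p) = 0 := by
    rw [q2, q3, q4, ← si1.tsum_sub (summable_sh1 _ (summable_sh1 _ si2)), 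
      ← sG.tsum_add (summable_sh2 _ (summable_sh1 _ sw2)),
      ← (si1.sub (summable_sh1 _ (summable_sh1 _ si2))).tsum_add (sG.add (summable_sh2 _ (summable_sh1 _ sw2)))]
    rw [← tsum_zero (α := ℂ) (β := ℕ × ℕ)]
    congr 1; funext p
    linear_combination pt p
  rw [← r1, ← r2] at this
  linear_combination -this
end
end GB

namespace GB

/-- the kernel -/
noncomputable def phi (p : ℂ) (ε : ℕ) (u : ℝ) : ℂ :=
  ((|u| : ℝ) : ℂ) ^ p * (((Real.sign u) ^ ε : ℝ) : ℂ)

lemma phi_pos (p : ℂ) (ε : ℕ) (u : ℝ) (hu : 0 < u) : phi p ε u = (u : ℂ) ^ p := by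
  simp [phi, abs_of_pos hu, Real.sign_of_pos hu]

lemma phi_neg (p : ℂ) (ε : ℕ) (u : ℝ) : phi p ε (-u) = (-1) ^ ε * phi p ε u := by
  rw [phi, phi, abs_neg, Real.sign_neg, neg_pow]; push_cast; ring

lemma phi_zero (p : ℂ) (hp : 0 < p.re) (ε : ℕ) : phi p ε 0 = 0 := by
  have : p ≠ 0 := by rintro rfl; simp at hp
  simp [phi, Complex.zero_cpow this]

lemma norm_phi_le (p : ℂ) (hp : 0 < p.re) (ε : ℕ) (u : ℝ) : ‖phi p ε u‖ ≤ |u| ^ p.re := by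
  rcases eq_or_ne u 0 with rfl | hu
  · rw [phi_zero p hp]; simp; positivity
  · rw [phi, norm_mul, Complex.norm_cpow_eq_rpow_re_of_pos (abs_pos.2 hu)]
    have : ‖(((Real.sign u) ^ ε : ℝ) : ℂ)‖ ≤ 1 := by
      rw [Complex.norm_real, norm_pow]
      apply pow_le_one₀ (norm_nonneg _)
      rcases Real.sign_apply_eq u with h | h | h <;> simp [h]
    exact mul_le_of_le_one_right (by positivity) this

lemma phi_succ (p : ℂ) (hp : 0 < p.re) (ε : ℕ) (u : ℝ) : (u : ℂ) * phi p (ε + 1) u = phi (p + 1) ε u := by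
  rcases eq_or_ne u 0 with rfl | hu
  · rw [phi_zero (p+1) (by simp; linarith)]; simp
  · have h0 : ((|u| : ℝ) : ℂ) ≠ 0 := by simpa using hu
    rw [phi, phi, Complex.cpow_add _ _ h0, Complex.cpow_one, pow_succ]
    have : (u : ℂ) * ((Real.sign u : ℝ) : ℂ) = ((|u| : ℝ) : ℂ) := by
      rw [← Complex.ofReal_mul]
      congr 1
      rcases lt_or_gt_of_ne hu with h | h
      · rw [Real.sign_of_neg h, abs_of_neg h]; ring
      · rw [Real.sign_of_pos h, abs_of_pos h]; ring 
    push_cast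
    push_cast at this
    rw [← this]; ring

lemma phi_hasDeriv_pos (p : ℂ) (ε : ℕ) (u : ℝ) (hu : 0 < u) :
    HasDerivAt (phi p ε) (p * phi (p - 1) (ε + 1) u) u := by
  rw [phi_pos _ _ _ hu]
  have h1 : HasDerivAt (fun x : ℂ => x ^ p) (p * (u:ℂ) ^ (p - 1)) (u : ℂ) :=
    by simpa using (hasDerivAt_id (u:ℂ)).cpow_const (c := p) (Or.inl (by simpa using hu))
  refine h1.comp_ofReal.congr_of_eventuallyEq ?_
  filter_upwards [lt_mem_nhds hu] with x hx
  rw [phi_pos _ _ _ hx]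

lemma phi_hasDeriv_ne (p : ℂ) (ε : ℕ) (u : ℝ) (hu : u ≠ 0) :
    HasDerivAt (phi p ε) (p * phi (p - 1) (ε + 1) u) u := by
  rcases lt_or_gt_of_ne hu with h | h
  · have h1 := phi_hasDeriv_pos p ε (-u) (by linarith)
    have h2 := (h1.scomp u (hasDerivAt_neg u)).const_mul ((-1 : ℂ) ^ ε)
    have e : (fun y => (-1:ℂ) ^ ε * (phi p ε ∘ Neg.neg) y) = phi p ε := by
      funext y
      simp only [Function.comp, phi_neg]
      rw [← mul_assoc, ← pow_add, ← two_mul, pow_mul]; simp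
    rw [e] at h2
    refine h2.congr_deriv ?_
    rw [phi_neg]
    have : ((-1:ℂ) ^ ε) * (-1) ^ ε = 1 := by rw [← pow_add, ← two_mul, pow_mul]; simp
    simp only [neg_smul, one_smul, pow_succ]
    linear_combination (p * phi (p-1) (ε+1) u) * this
  · exact phi_hasDeriv_pos p ε u h

lemma phi_hasDeriv (p : ℂ) (hp : 1 < p.re) (ε : ℕ) (u : ℝ) :
    HasDerivAt (phi p ε) (p * phi (p - 1) (ε + 1) u) u := by
  rcases eq_or_ne u 0 with rfl | hu
  · rw [phi_zero (p-1) (by simp; linarith), mul_zero, hasDerivAt_iff_isLittleO_nhds_zero]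
    simp only [zero_add, phi_zero p (by linarith), sub_zero, smul_zero]
    have h1 : (fun h : ℝ => phi p ε h) =O[nhds 0] (fun h : ℝ => |h| ^ p.re) :=
      Asymptotics.isBigO_of_le _ (fun h => by
        rw [Real.norm_of_nonneg (by positivity)]; exact norm_phi_le p (by linarith) ε h)
    refine h1.trans_isLittleO ?_
    rw [Asymptotics.isLittleO_iff_tendsto' (by
      filter_upwards with x hx; rw [hx]; simp; rw [Real.zero_rpow (by linarith)])]
    have h2 : Tendsto (fun x : ℝ => |x| ^ (p.re - 1)) (nhds 0) (nhds 0) := by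
      have : Continuous (fun x : ℝ => |x| ^ (p.re - 1)) :=
        (continuous_abs).rpow_const (fun x => Or.inr (by linarith))
      have := this.tendsto 0
      simpa [Real.zero_rpow (show p.re - 1 ≠ 0 by linarith)] using this
    refine squeeze_zero_norm (fun x => ?_) h2
    rcases eq_or_ne x 0 with rfl | hx
    · simp; positivity
    · rw [norm_div, Real.norm_of_nonneg (by positivity), Real.norm_eq_abs, Real.rpow_sub_one (by simpa using hx)]
  · exact phi_hasDeriv_ne p ε u hu

lemma phi_cont (p : ℂ) (hp : 0 < p.re) (ε : ℕ) : Continuous (phi p ε) := by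
  rw [continuous_iff_continuousAt]
  intro u
  rcases eq_or_ne u 0 with rfl | hu
  · rw [ContinuousAt, phi_zero p hp]
    have : Continuous (fun x : ℝ => |x| ^ (p.re)) :=
        (continuous_abs).rpow_const (fun x => Or.inr (by linarith))
    have := this.tendsto 0
    simp only [abs_zero, Real.zero_rpow hp.ne'] at this
    exact squeeze_zero_norm (fun x => norm_phi_le p hp ε x) this
  · exact (phi_hasDeriv_ne p ε u hu).continuousAt

lemma geg_cont (l : ℂ) (n : ℕ) : Continuous (fun s : ℝ => gegenbauer l n s) := by
  unfold gegenbauer; fun_prop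

lemma Y1_cont (l : ℂ) (n : ℕ) : Continuous (fun s : ℝ => Y1 l n s) := by
  unfold Y1; split_ifs
  · fun_prop
  · exact geg_cont _ _

lemma tm_cont (l μ : ℝ) (ν : ℂ) (ε : ℕ) (p : ℕ × ℕ) : Continuous (fun q : ℝ × ℝ => tm l μ ν ε p q.1 q.2) := by
  unfold tm
  have h1 := (geg_cont l p.1).comp (continuous_fst (X := ℝ) (Y := ℝ))
  have h2 := (geg_cont μ p.2).comp (continuous_snd (X := ℝ) (Y := ℝ))
  simp only [Function.comp_def] at h1 h2
  fun_prop

lemma dtm_cont (l μ : ℝ) (ν : ℂ) (ε : ℕ) (p : ℕ × ℕ) : Continuous (fun q : ℝ × ℝ => dtm l μ ν ε p q.1 q.2) := by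
  unfold dtm
  have h1 := (Y1_cont (l+1) p.1).comp (continuous_fst (X := ℝ) (Y := ℝ))
  have h2 := (geg_cont μ p.2).comp (continuous_snd (X := ℝ) (Y := ℝ))
  simp only [Function.comp_def] at h1 h2
  fun_prop

lemma tm_hasDeriv (l μ : ℝ) (ν : ℂ) (ε : ℕ) (p : ℕ × ℕ) (s t : ℝ) :
    HasDerivAt (fun s : ℝ => tm l μ ν ε p s t) (dtm l μ ν ε p s t) s := by
  obtain ⟨n, m⟩ := p
  have h : HasDerivAt (fun s : ℝ => gegenbauer l n s) (2 * l * Y1 (l+1) n s) s := by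
    rcases n with _ | n
    · simp only [geg_zero, Y1, if_true, mul_zero]; exact hasDerivAt_const _ _
    · exact (R2 (l:ℂ) s n).comp_ofReal
  exact ((h.const_mul (bCoef l μ ν n m)).mul_const (gegenbauer μ m t)).const_mul (chi ε (n+m))

section
variable (l μ : ℝ) (hl : 0 < l) (hμ : 0 < μ) (ν : ℂ) (hν : l + μ + 4 < 2 * ν.re) (ε : ℕ)
include hl hμ hν

lemma K_cont : ContinuousOn (fun q : ℝ × ℝ => K l μ ν ε q.1 q.2) (Set.Icc (-1 : ℝ) 1 ×ˢ Set.Icc (-1 : ℝ) 1) := by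
  obtain ⟨C, hC, h⟩ := tm_bound l μ hl hμ ν hν ε
  exact continuousOn_tsum (fun p => (tm_cont l μ ν ε p).continuousOn) (V_summable.mul_left C)
    (fun p q hq => h p q.1 q.2 hq.1 hq.2)

lemma K_hasDeriv (s t : ℝ) (hs : s ∈ Set.Ioo (-1 : ℝ) 1) (ht : t ∈ Set.Icc (-1 : ℝ) 1) :
    HasDerivAt (fun s : ℝ => K l μ ν ε s t) (∑' p, dtm l μ ν ε p s t) s := by
  obtain ⟨C, hC, h⟩ := dtm_bound l μ hl hμ ν hν ε
  exact hasDerivAt_tsum_of_isPreconnected (V_summable.mul_left C) isOpen_Ioo isPreconnected_Ioo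
    (fun p y _ => tm_hasDeriv l μ ν ε p y t)
    (fun p y hy => h p y t (Set.Ioo_subset_Icc_self hy) ht) hs 
    (tm_summable l μ hl hμ ν hν ε s t (Set.Ioo_subset_Icc_self hs) ht) hs

lemma K_diag (s : ℝ) (hs : s ∈ Set.Icc (-1 : ℝ) 1) : K l μ ν ε s s = 0 := by
  have := K_ode_alg l μ hl hμ ν hν ε s s hs hs
  have hν0 : ν ≠ 0 := by rintro rfl; simp at hν; linarith
  simpa [hν0] using this

lemma K_const1 (t : ℝ) (ht : t ∈ Set.Icc (-1 : ℝ) 1) : ∃ c : ℂ, ∀ s, t < s → s < 1 →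
    K l μ ν ε s t = c * ((s - t : ℝ) : ℂ) ^ (2 * ν) := by
  have hd : ∀ s ∈ Set.Ioo t 1, HasDerivAt (fun s : ℝ => K l μ ν ε s t * phi (-(2*ν)) 0 (s - t)) 0 s := by
    intro s hs
    have h1 := K_hasDeriv l μ hl hμ ν hν ε s t ⟨by linarith [ht.1, hs.1], hs.2⟩ ht
    have h2 := (phi_hasDeriv_pos (-(2*ν)) 0 (s - t) (by linarith [hs.1])).comp_sub_const s t
    have h3 := h1.mul h2
    refine h3.congr_deriv ?_
    have hst : (0:ℝ) < s - t := by linarith [hs.1]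
    rw [phi_pos _ _ _ hst, phi_pos _ _ _ hst]
    have h0 : ((s - t : ℝ) : ℂ) ≠ 0 := by exact_mod_cast hst.ne'
    have := K_ode_alg l μ hl hμ ν hν ε s t ⟨by linarith [ht.1, hs.1], hs.2.le⟩ ht
    rw [Complex.cpow_sub _ _ h0, Complex.cpow_one]
    push_cast at h0 ⊢
    have e : ∑' p, dtm l μ ν ε p s t = 2 * ν * K l μ ν ε s t / ((s:ℂ) - t) := by
      rw [← this]; field_simp
    rw [e]; ring
  obtain ⟨c, hc⟩ := isOpen_Ioo.exists_is_const_of_deriv_eq_zero isPreconnected_Ioo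
    (fun s hs => (hd s hs).differentiableAt.differentiableWithinAt) (fun s hs => (hd s hs).deriv)
  refine ⟨c, fun s h1 h2 => ?_⟩
  have hst : (0:ℝ) < s - t := by linarith
  have h0 : ((s - t : ℝ) : ℂ) ≠ 0 := by exact_mod_cast hst.ne'
  rw [← hc s ⟨h1, h2⟩, phi_pos _ _ _ hst, mul_assoc, ← Complex.cpow_add _ _ h0]
  simp

lemma K_neg (s t : ℝ) : K l μ ν ε (-s) (-t) = (-1) ^ ε * K l μ ν ε s t := by
  rw [K, K, ← tsum_mul_left]
  congr 1; funext p
  unfold tm chi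
  split_ifs with h
  · push_cast
    rw [parity, parity]
    have : (-1 : ℂ) ^ ε = (-1) ^ (p.1 + p.2) := by
      rw [neg_one_pow_eq_pow_mod_two (n := ε), neg_one_pow_eq_pow_mod_two (n := p.1 + p.2), h]
    rw [this]; ring
  · simp

lemma K_symm (s t : ℝ) : K μ l ν ε t s = (-1) ^ ε * K l μ ν ε s t := by
  rw [K, K, ← tsum_mul_left, ← (Equiv.prodComm ℕ ℕ).tsum_eq]
  congr 1; funext p
  obtain ⟨a, b⟩ := p
  simp only [Equiv.prodComm_apply, Prod.swap_prod_mk]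
  unfold tm chi
  simp only [add_comm b a]
  split_ifs with h
  · have h1 : bCoef μ l ν b a = (-1) ^ ε * bCoef l μ ν a b := by
      have : (-1 : ℂ) ^ ε = (-1) ^ (a + b) := by
        rw [neg_one_pow_eq_pow_mod_two (n := ε), neg_one_pow_eq_pow_mod_two (n := a + b), h]
      rw [this]
      have h2 : ((-1 : ℂ) ^ b) * (-1) ^ b = 1 := by rw [← pow_add, ← two_mul, pow_mul]; simp
      rw [bCoef_eq, bCoef_eq, HH, HH, add_comm (μ:ℂ) l, show ((μ:ℂ) + b - (l + a)) / 2 = -((l + a - (μ + b)) / 2) by ring,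
        Fz_neg, show Gc μ l ν = Gc l μ ν by simp only [Gc, add_comm (μ:ℂ) l]; ring, 
        show (μ:ℂ) + b + (l + a) = l + a + (μ + b) by ring]
      rw [pow_add]
      linear_combination (-(-1 : ℂ) ^ a * Gc l μ ν * (l + a) * (μ + b) * Fz (ν + 1 + (l + μ) / 2) ((l + a + (μ + b)) / 2)
        * Fz (ν + 1 + (l + μ) / 2) ((l + a - (μ + b)) / 2)) * h2
    rw [h1]; ring
  · simp

lemma K_gt_const (a b : ℝ → ℂ)
    (ha : ∀ t ∈ Set.Icc (-1:ℝ) 1, ∀ s, t < s → s < 1 → K l μ ν ε s t = a t * ((s - t : ℝ) : ℂ) ^ (2 * ν))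
    (hb : ∀ t ∈ Set.Icc (-1:ℝ) 1, ∀ s, t < s → s < 1 → K μ l ν ε s t = b t * ((s - t : ℝ) : ℂ) ^ (2 * ν)) :
    ∀ s t : ℝ, -1 < t → t < s → s < 1 → K l μ ν ε s t = a 0 * phi (2*ν) ε (s - t) := by
  have sq : ((-1 : ℂ) ^ ε) * (-1) ^ ε = 1 := by rw [← pow_add, ← two_mul, pow_mul]; simp
  have hs2 : ∀ s t, K l μ ν ε s t = K μ l ν ε (-t) (-s) := by
    intro s t
    rw [K_neg μ l hμ hl ν (by linarith), K_symm l μ hl hμ ν hν, ← mul_assoc, sq, one_mul]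
  have hab : ∀ s t : ℝ, -1 < t → t < s → s < 1 → a t = b (-s) := by
    intro s t h1 h2 h3
    have e1 := ha t ⟨h1.le, by linarith⟩ s h2 h3
    have e2 := hb (-s) ⟨by linarith, by linarith⟩ (-t) (by linarith) (by linarith)
    rw [← hs2, e1, show -t - -s = s - t by ring] at e2
    have hst : (0:ℝ) < s - t := by linarith
    have h0 : ((s - t : ℝ) : ℂ) ≠ 0 := by exact_mod_cast hst.ne'
    exact mul_right_cancel₀ (fun h => h0 ((Complex.cpow_eq_zero_iff _ _).1 h).1 : ((s - t : ℝ) : ℂ) ^ (2*ν) ≠ 0) e2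
  have hc : ∀ t, -1 < t → t < 1 → a t = a 0 := by
    intro t h1 h2
    obtain ⟨s, hs1, hs2⟩ := exists_between (max_lt h2 (zero_lt_one (α := ℝ)))
    rw [hab s t h1 (lt_of_le_of_lt (le_max_left _ _) hs1) hs2, hab s 0 (by norm_num) (lt_of_le_of_lt (le_max_right _ _) hs1) hs2]
  intro s t h1 h2 h3
  rw [ha t ⟨h1.le, by linarith⟩ s h2 h3, hc t h1 (by linarith), phi_pos _ _ _ (by linarith)]

lemma K_open (c : ℂ) (hgt : ∀ s t : ℝ, -1 < t → t < s → s < 1 → K l μ ν ε s t = c * phi (2*ν) ε (s - t)) :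
    ∀ s t : ℝ, s ∈ Set.Ioo (-1:ℝ) 1 → t ∈ Set.Ioo (-1:ℝ) 1 → K l μ ν ε s t = c * phi (2*ν) ε (s - t) := by
  intro s t hs ht
  have hp : 0 < (2*ν).re := by simp; linarith
  rcases lt_trichotomy t s with h | h | h
  · exact hgt s t ht.1 h hs.2
  · rw [h, K_diag l μ hl hμ ν hν ε s ⟨hs.1.le, hs.2.le⟩, sub_self, phi_zero _ hp, mul_zero]
  · have := hgt (-s) (-t) (by linarith [ht.2]) (by linarith) (by linarith [hs.1])
    rw [K_neg l μ hl hμ ν hν, show -s - -t = -(s - t) by ring, phi_neg] at this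
    apply mul_left_cancel₀ (show ((-1:ℂ)^ε) ≠ 0 by simp)
    rw [this]; ring

lemma K_ext (c : ℂ) (hgt : ∀ s t : ℝ, -1 < t → t < s → s < 1 → K l μ ν ε s t = c * phi (2*ν) ε (s - t)) :
    ∀ s ∈ Set.Icc (-1:ℝ) 1, ∀ t ∈ Set.Icc (-1:ℝ) 1, K l μ ν ε s t = c * phi (2*ν) ε (s - t) := by
  intro s hs t ht
  have hp : 0 < (2*ν).re := by simp; linarith
  have hc := K_cont l μ hl hμ ν hν ε
  have hf : ContinuousOn (fun q : ℝ × ℝ => c * phi (2*ν) ε (q.1 - q.2)) (Set.Icc (-1 : ℝ) 1 ×ˢ Set.Icc (-1 : ℝ) 1) := by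
    have h1 : Continuous (fun q : ℝ × ℝ => q.1 - q.2) := by fun_prop
    have h2 := (phi_cont (2*ν) hp ε).comp h1
    have h3 : Continuous (fun q : ℝ × ℝ => c * phi (2*ν) ε (q.1 - q.2)) := continuous_const.mul h2
    exact h3.continuousOn
  have ho : Set.EqOn (fun q : ℝ × ℝ => K l μ ν ε q.1 q.2) (fun q : ℝ × ℝ => c * phi (2*ν) ε (q.1 - q.2))
      (Set.Ioo (-1:ℝ) 1 ×ˢ Set.Ioo (-1:ℝ) 1) := fun q hq => K_open l μ hl hμ ν hν ε c hgt q.1 q.2 hq.1 hq.2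
  have hcl : Set.Icc (-1 : ℝ) 1 ×ˢ Set.Icc (-1 : ℝ) 1 ⊆ closure (Set.Ioo (-1:ℝ) 1 ×ˢ Set.Ioo (-1:ℝ) 1) := by
    have h1 : (-1:ℝ) ≠ 1 := by norm_num
    have h2 := closure_Ioo h1
    rw [closure_prod_eq, h2]
  have := Set.EqOn.of_subset_closure ho hc hf 
    (Set.prod_mono Set.Ioo_subset_Icc_self Set.Ioo_subset_Icc_self) hcl
  have h5 := this (x := (s, t)) (Set.mk_mem_prod hs ht)
  simpa only using h5

lemma K_eq_const : ∃ c : ℂ, ∀ s ∈ Set.Icc (-1:ℝ) 1, ∀ t ∈ Set.Icc (-1:ℝ) 1, K l μ ν ε s t = c * phi (2*ν) ε (s - t) := by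
  have hp : 0 < (2*ν).re := by simp; linarith
  have h1 := K_const1 l μ hl hμ ν hν ε
  have h2 := K_const1 μ l hμ hl ν (by linarith) ε
  choose! a ha using h1
  choose! b hb using h2
  have hgt := K_gt_const l μ hl hμ ν hν ε a b ha hb
  refine ⟨a 0, K_ext l μ hl hμ ν hν ε (a 0) hgt⟩
end
end GB

namespace GB
open Set

/-- base measure -/
noncomputable def W0 (l : ℝ) : Measure ℝ :=
  (volume.restrict (Ioc 0 Real.pi)).withDensity (fun θ => ENNReal.ofReal (Real.sin θ ^ (2 * l)))
/-- Gegenbauer weight on [-1,1] -/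
noncomputable def W (l : ℝ) : Measure ℝ := (W0 l).map Real.cos

lemma sin_rpow_cont (a : ℝ) (ha : 0 ≤ a) : Continuous (fun θ : ℝ => Real.sin θ ^ a) :=
  Real.continuous_sin.rpow_const (fun _ => Or.inr ha)

lemma W_integral (l : ℝ) (hl : 0 < l) (g : ℝ → ℂ) (hg : Continuous g) :
    ∫ x, g x ∂(W l) = ∫ θ in (0:ℝ)..Real.pi, ((Real.sin θ ^ (2 * l) : ℝ) : ℂ) * g (Real.cos θ) := by
  rw [W, integral_map Real.continuous_cos.aemeasurable hg.aestronglyMeasurable, W0,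
    integral_withDensity_eq_integral_toReal_smul₀, intervalIntegral.integral_of_le Real.pi_pos.le]
  · apply setIntegral_congr_fun measurableSet_Ioc
    intro θ hθ
    have : 0 ≤ Real.sin θ := Real.sin_nonneg_of_nonneg_of_le_pi hθ.1.le hθ.2
    simp only
    rw [ENNReal.toReal_ofReal (by positivity), Complex.real_smul]
  · exact ((sin_rpow_cont (2*l) (by linarith)).measurable.ennreal_ofReal).aemeasurable
  · simp

instance W_finite (l : ℝ) [Fact (0 < l)] : IsFiniteMeasure (W l) := by
  have : IsFiniteMeasure (W0 l) := by
    apply isFiniteMeasure_withDensity_ofReal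
    have hl : (0:ℝ) < l := Fact.out
    exact ((sin_rpow_cont (2*l) (by linarith)).integrableOn_Icc.mono_set Ioc_subset_Icc_self).2
  unfold W; infer_instance

lemma W_ae (l : ℝ) : ∀ᵐ x ∂(W l), x ∈ Icc (-1:ℝ) 1 := by
  refine (ae_map_iff (p := fun x => x ∈ Icc (-1:ℝ) 1) Real.continuous_cos.aemeasurable measurableSet_Icc).2 ?_
  exact Filter.Eventually.of_forall (fun θ => Real.cos_mem_Icc θ)

lemma W_integrable (l : ℝ) [Fact (0 < l)] {g : ℝ → ℂ} (hg : Continuous g) : Integrable g (W l) := by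
  obtain ⟨C, hC⟩ := (isCompact_Icc (a := (-1:ℝ)) (b := 1)).exists_bound_of_continuousOn hg.continuousOn
  exact Integrable.of_bound hg.aestronglyMeasurable C ((W_ae l).mono hC)

lemma W_ibp (l : ℝ) [Fact (0 < l)] (h h' : ℝ → ℂ) (hd : ∀ x, HasDerivAt h (h' x) x) (hc : Continuous h') :
    (2 * l + 1) * ∫ x, x * h x ∂(W l) = ∫ x, (1 - (x:ℂ) ^ 2) * h' x ∂(W l) := by
  have hl : (0:ℝ) < l := Fact.out
  have hcont : Continuous h := continuous_iff_continuousAt.2 fun x => (hd x).continuousAt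
  have hcd := Complex.continuous_ofReal
  rw [W_integral l hl _ (by fun_prop), W_integral l hl _ (by fun_prop)]
  have hs1 := Complex.continuous_ofReal.comp (sin_rpow_cont (2*l) (by linarith))
  have hs2 := Complex.continuous_ofReal.comp (sin_rpow_cont (2*l+1) (by linarith))
  simp only [Function.comp_def] at hs1 hs2
  have D : ∀ θ ∈ Ioo (0:ℝ) Real.pi, HasDerivAt (fun θ : ℝ => ((Real.sin θ ^ (2 * l + 1) : ℝ) : ℂ) * h (Real.cos θ))
      ((2 * l + 1) * (((Real.sin θ ^ (2 * l) : ℝ) : ℂ) * (((Real.cos θ : ℝ) : ℂ) * h (Real.cos θ))) -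
        ((Real.sin θ ^ (2 * l) : ℝ) : ℂ) * ((1 - ((Real.cos θ : ℝ) : ℂ) ^ 2) * h' (Real.cos θ))) θ := by
    intro θ hθ
    have hs : 0 < Real.sin θ := Real.sin_pos_of_mem_Ioo hθ
    have d1 := ((Real.hasDerivAt_sin θ).rpow_const (p := 2 * l + 1) (Or.inl hs.ne')).ofReal_comp
    have d2 := (hd (Real.cos θ)).scomp θ (Real.hasDerivAt_cos θ)
    refine (d1.mul d2).congr_deriv ?_
    have e1 : Real.sin θ ^ (2 * l + 1) = Real.sin θ ^ (2 * l) * Real.sin θ := by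
      rw [Real.rpow_add hs, Real.rpow_one]
    have e2 : (1 - ((Real.cos θ : ℝ) : ℂ) ^ 2) = ((Real.sin θ : ℝ) : ℂ) ^ 2 := by
      have := Real.sin_sq_add_cos_sq θ
      have : ((Real.sin θ : ℝ) : ℂ) ^ 2 + ((Real.cos θ : ℝ) : ℂ) ^ 2 = 1 := by exact_mod_cast this
      linear_combination -this
    rw [e2, e1, add_sub_cancel_right]
    simp only [Function.comp, Complex.real_smul, Complex.ofReal_mul, Complex.ofReal_neg, Complex.ofReal_add, Complex.ofReal_one, Complex.ofReal_ofNat]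
    ring
  have I : ∀ f : ℝ → ℂ, Continuous f → IntervalIntegrable f volume 0 Real.pi := fun f hf => hf.intervalIntegrable _ _
  have key := intervalIntegral.integral_eq_sub_of_hasDerivAt_of_le Real.pi_pos.le
    (f := (fun θ : ℝ => ((Real.sin θ ^ (2 * l + 1) : ℝ) : ℂ) * h (Real.cos θ)))
    (by fun_prop) D (I _ (by fun_prop))
  rw [intervalIntegral.integral_sub (I _ (by fun_prop)) (I _ (by fun_prop)), intervalIntegral.integral_const_mul] at key
  rw [← sub_eq_zero, key]
  simp [Real.zero_rpow (show 2 * l + 1 ≠ 0 by linarith)]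

lemma W_succ (l : ℝ) [Fact (0 < l)] (g : ℝ → ℂ) (hg : Continuous g) :
    ∫ x, g x ∂(W (l+1)) = ∫ x, (1 - (x:ℂ) ^ 2) * g x ∂(W l) := by
  have hl : (0:ℝ) < l := Fact.out
  have hcd := Complex.continuous_ofReal
  rw [W_integral l hl _ (by fun_prop), W_integral (l+1) (by linarith) _ hg]
  apply intervalIntegral.integral_congr
  intro θ hθ
  rw [uIcc_of_le Real.pi_pos.le] at hθ
  have hs : 0 ≤ Real.sin θ := Real.sin_nonneg_of_mem_Icc hθ
  have e2 : (1 - ((Real.cos θ : ℝ) : ℂ) ^ 2) = ((Real.sin θ : ℝ) : ℂ) ^ 2 := by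
      have := Real.sin_sq_add_cos_sq θ
      have : ((Real.sin θ : ℝ) : ℂ) ^ 2 + ((Real.cos θ : ℝ) : ℂ) ^ 2 = 1 := by exact_mod_cast this
      linear_combination -this
  simp only
  rw [e2, ← mul_assoc, show 2 * (l + 1) = 2 * l + 2 by ring, Real.rpow_add' hs (by linarith)]
  push_cast
  norm_num

/-- normalisation -/
noncomputable def Z (l : ℝ) : ℂ := ∫ _, (1:ℂ) ∂(W l)

lemma Z_eq (l : ℝ) : Z l = (((W l).real univ : ℝ) : ℂ) := by simp [Z]

lemma W_pos (l : ℝ) [Fact (0 < l)] : 0 < (W l).real univ := by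
  have hl : (0:ℝ) < l := Fact.out
  have h1 : ∫ x, (1:ℂ) ∂(W l) = ((∫ θ in (0:ℝ)..Real.pi, Real.sin θ ^ (2 * l) : ℝ) : ℂ) := by
    rw [W_integral l hl _ continuous_const, ← intervalIntegral.integral_ofReal]; simp
  have h2 : 0 < ∫ θ in (0:ℝ)..Real.pi, Real.sin θ ^ (2 * l) := by
    apply intervalIntegral.intervalIntegral_pos_of_pos_on ((sin_rpow_cont (2*l) (by linarith)).intervalIntegrable _ _)
    · intro θ hθ
      exact Real.rpow_pos_of_pos (Real.sin_pos_of_mem_Ioo hθ) _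
    · exact Real.pi_pos
  have h3 : (((W l).real univ : ℝ) : ℂ) = ((∫ θ in (0:ℝ)..Real.pi, Real.sin θ ^ (2 * l) : ℝ) : ℂ) := by
    rw [← Z_eq, Z, h1]
  rw [Complex.ofReal_inj.1 h3]; exact h2

lemma Z_ne (l : ℝ) [Fact (0 < l)] : Z l ≠ 0 := by
  rw [Z_eq]; exact_mod_cast (W_pos l).ne'

lemma Z_succ (l : ℝ) [Fact (0 < l)] : (2 * l + 2) * Z (l+1) = (2 * l + 1) * Z l := by
  have h1 := W_ibp l (fun x => (x:ℂ)) (fun _ => 1) (fun x => (hasDerivAt_id (x:ℂ)).comp_ofReal) continuous_const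
  have h2 := W_succ l (fun _ => 1) continuous_const
  have hcd := Complex.continuous_ofReal
  have e : ∫ x : ℝ, (1 - (x:ℂ) ^ 2) * 1 ∂(W l) = Z l - ∫ x : ℝ, (x:ℂ) * x ∂(W l) := by
    rw [Z, ← integral_sub (W_integrable l (by fun_prop)) (W_integrable l (by fun_prop))]
    congr 1; funext x; ring
  rw [e] at h1 h2
  rw [Z, h2]
  linear_combination -h1

lemma W_sq (l : ℝ) [Fact (0 < l)] : (2 * l + 2) * ∫ x : ℝ, (x:ℂ) * x ∂(W l) = Z l := by
  have h1 := W_ibp l (fun x => (x:ℂ)) (fun _ => 1) (fun x => (hasDerivAt_id (x:ℂ)).comp_ofReal) continuous_const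
  have hcd := Complex.continuous_ofReal
  have e : ∫ x : ℝ, (1 - (x:ℂ) ^ 2) * 1 ∂(W l) = Z l - ∫ x : ℝ, (x:ℂ) * x ∂(W l) := by
    rw [Z, ← integral_sub (W_integrable l (by fun_prop)) (W_integrable l (by fun_prop))]
    congr 1; funext x; ring
  rw [e] at h1
  linear_combination h1

lemma geg_hasDeriv (l : ℂ) (n : ℕ) (s : ℝ) : HasDerivAt (fun s : ℝ => gegenbauer l n s) (2 * l * Y1 (l+1) n s) s := by
    rcases n with _ | n
    · simp only [geg_zero, Y1, if_true, mul_zero]; exact hasDerivAt_const _ _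
    · exact (R2 (l:ℂ) s n).comp_ofReal

lemma W_orth (l : ℝ) [Fact (0 < l)] (n : ℕ) : ∫ x : ℝ, gegenbauer l (n+1) x ∂(W l) = 0 := by
  have hl : (0:ℝ) < l := Fact.out
  have hcd := Complex.continuous_ofReal
  have hY := (Y1_cont (l+1+1) n)
  have hg := (geg_cont (l+1) n)
  have h1 := W_ibp l (fun x => gegenbauer (l+1) n x) _ (fun x => geg_hasDeriv (l+1) n x) (by fun_prop)
  have i1 : Integrable (fun x : ℝ => (x:ℂ) * gegenbauer (l+1) n x) (W l) := W_integrable l (by fun_prop)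
  have i2 : Integrable (fun x : ℝ => (1 - (x:ℂ) ^ 2) * (2 * ((l:ℂ)+1) * Y1 (l+1+1) n x)) (W l) := W_integrable l (by fun_prop)
  have hne : ∀ k : ℕ, (l:ℂ) + k ≠ 0 := lne l hl
  have hne1 : ∀ k : ℕ, (l:ℂ) + 1 + k ≠ 0 := fun k => by have := hne (k+1); push_cast at this; convert this using 1; ring
  have h3 : ∫ x : ℝ, ((2 * (l:ℂ) + 1) * (x * gegenbauer (l+1) n x) - (1 - (x:ℂ) ^ 2) * (2 * ((l:ℂ)+1) * Y1 (l+1+1) n x)) ∂(W l) = 0 := by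
    rw [integral_sub (i1.const_mul _) i2, integral_const_mul, h1, sub_self]
  have hl0 : (l:ℂ) ≠ 0 := by simpa using hne 0
  have h4 : ∀ x : ℝ, ((2 * (l:ℂ) + 1) * (x * gegenbauer (l+1) n x) - (1 - (x:ℂ) ^ 2) * (2 * ((l:ℂ)+1) * Y1 (l+1+1) n x)) =
      ((n + 1) * (n + 1 + 2 * l) / (2 * l)) * gegenbauer l (n+1) x := by
    intro x
    have r5 := R5b l x n hne
    rcases n with _ | n
    · simp [Y1, geg_one, geg_zero]; field_simp; ring
    · have r4 := R4 (l+1) x n hne1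
      simp only [Y1, if_neg (Nat.succ_ne_zero _), Nat.add_sub_cancel]
      rw [r4]
      field_simp
      push_cast at r5 ⊢
      linear_combination (-((n:ℂ) + 2)) * r5
  rw [integral_congr_ae (Filter.Eventually.of_forall h4), integral_const_mul] at h3
  have : ((n:ℂ) + 1) * (n + 1 + 2 * l) / (2 * l) ≠ 0 := by
    apply div_ne_zero
    · apply mul_ne_zero
      · exact_mod_cast Nat.succ_ne_zero n
      · have := lne (1 + 2 * l) (by linarith) n
        push_cast at this; convert this using 1; ring
    · simpa using hl0
  exact (mul_eq_zero.1 h3).resolve_left this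

lemma W_half (g : ℝ → ℂ) (hg : Continuous g) : ∫ x, g x ∂(W (1/2)) = ∫ x in (-1:ℝ)..1, g x := by
  rw [W_integral _ (by norm_num) g hg]
  have := intervalIntegral.integral_deriv_smul_comp (a := 0) (b := Real.pi) (f := Real.cos) (f' := fun x => - Real.sin x) (g := g)
    (fun x _ => Real.hasDerivAt_cos x) (by fun_prop) hg
  simp only [Real.cos_zero, Real.cos_pi, Function.comp] at this
  rw [intervalIntegral.integral_symm 1 (-1), ← this, ← intervalIntegral.integral_neg]
  congr 1; funext θ
  simp
end GB

namespace GB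
open Set

instance fact_succ (l : ℝ) [h : Fact (0 < l)] : Fact (0 < l + 1) := ⟨by have := h.out; linarith⟩

lemma WW_ae (l μ : ℝ) [Fact (0 < l)] [Fact (0 < μ)] : ∀ᵐ q ∂((W l).prod (W μ)), q ∈ Icc (-1:ℝ) 1 ×ˢ Icc (-1:ℝ) 1 := by
  have h1 := (Measure.quasiMeasurePreserving_fst (μ := W l) (ν := W μ)).ae (W_ae l)
  have h2 := (Measure.quasiMeasurePreserving_snd (μ := W l) (ν := W μ)).ae (W_ae μ)
  filter_upwards [h1, h2] with q h1 h2 using ⟨h1, h2⟩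

lemma WW_integrable (l μ : ℝ) [Fact (0 < l)] [Fact (0 < μ)] {g : ℝ × ℝ → ℂ} (hg : Continuous g) :
    Integrable g ((W l).prod (W μ)) := by
  obtain ⟨C, hC⟩ := ((isCompact_Icc (a := (-1:ℝ)) (b := 1)).prod (isCompact_Icc (a := (-1:ℝ)) (b := 1))).exists_bound_of_continuousOn hg.continuousOn
  exact Integrable.of_bound hg.aestronglyMeasurable C ((WW_ae l μ).mono hC)

lemma ibp_s (l μ : ℝ) [Fact (0 < l)] [Fact (0 < μ)] (H H' : ℝ × ℝ → ℂ) (hH : Continuous H) (hH' : Continuous H')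
    (hd : ∀ s t, HasDerivAt (fun s => H (s, t)) (H' (s, t)) s) :
    (2 * l + 1) * ∫ q : ℝ × ℝ, q.1 * H q ∂((W l).prod (W μ)) = ∫ q : ℝ × ℝ, (1 - (q.1:ℂ) ^ 2) * H' q ∂((W l).prod (W μ)) := by
  have hcd := Complex.continuous_ofReal
  rw [integral_prod_symm _ (WW_integrable l μ (by fun_prop)), integral_prod_symm _ (WW_integrable l μ (by fun_prop)),
    ← integral_const_mul]
  congr 1; funext t
  exact W_ibp l (fun s => H (s, t)) (fun s => H' (s, t)) (fun s => hd s t) (by fun_prop)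

lemma ibp_t (l μ : ℝ) [Fact (0 < l)] [Fact (0 < μ)] (H H' : ℝ × ℝ → ℂ) (hH : Continuous H) (hH' : Continuous H')
    (hd : ∀ s t, HasDerivAt (fun t => H (s, t)) (H' (s, t)) t) :
    (2 * μ + 1) * ∫ q : ℝ × ℝ, q.2 * H q ∂((W l).prod (W μ)) = ∫ q : ℝ × ℝ, (1 - (q.2:ℂ) ^ 2) * H' q ∂((W l).prod (W μ)) := by
  have hcd := Complex.continuous_ofReal
  rw [integral_prod _ (WW_integrable l μ (by fun_prop)), integral_prod _ (WW_integrable l μ (by fun_prop)),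
    ← integral_const_mul]
  congr 1; funext s
  exact W_ibp μ (fun t => H (s, t)) (fun t => H' (s, t)) (fun t => hd s t) (by fun_prop)

/-- double integral -/
noncomputable def II (l μ : ℝ) (p : ℂ) : ℂ := ∫ q : ℝ × ℝ, phi p 0 (q.1 - q.2) ∂((W l).prod (W μ))

lemma II_symm (l μ : ℝ) [Fact (0 < l)] [Fact (0 < μ)] (p : ℂ) : II l μ p = II μ l p := by
  rw [II, II, ← integral_prod_swap]
  congr 1; funext q
  simp only [Prod.fst_swap, Prod.snd_swap]
  rw [show q.2 - q.1 = -(q.1 - q.2) by ring, phi_neg]; simp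

lemma II_succ (l μ : ℝ) [Fact (0 < l)] [Fact (0 < μ)] (p : ℂ) (hp : 0 < p.re) :
    II (l+1) μ p = ∫ q : ℝ × ℝ, (1 - (q.1:ℂ) ^ 2) * phi p 0 (q.1 - q.2) ∂((W l).prod (W μ)) := by
  have hcd := Complex.continuous_ofReal
  have hf := phi_cont p hp 0
  rw [II, integral_prod_symm _ (WW_integrable (l+1) μ (by fun_prop)), integral_prod_symm _ (WW_integrable l μ (by fun_prop))]
  congr 1; funext t
  exact W_succ l (fun s => phi p 0 (s - t)) (by fun_prop)

lemma II_rec (l μ : ℝ) [Fact (0 < l)] [Fact (0 < μ)] (p : ℂ) (hp : 1 < p.re) :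
    (2 * l + 2 + p) * (2 * l + 2 * μ + 2 + p) * II (l+1) μ p = (2 * l + 1) * (2 * l + 2 * μ + 2 + 2 * p) * II l μ p := by
  have hcd := Complex.continuous_ofReal
  have hf := phi_cont p (by linarith) 0
  have hg := phi_cont (p-1) (by simp; linarith) 1
  have hfd : ∀ u, HasDerivAt (phi p 0) (p * phi (p-1) 1 u) u := phi_hasDeriv p hp 0
  have hfs : ∀ s t : ℝ, HasDerivAt (fun s => phi p 0 (s - t)) (p * phi (p-1) 1 (s - t)) s := fun s t =>
    (hfd (s - t)).comp_sub_const s t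
  have hft : ∀ s t : ℝ, HasDerivAt (fun t => phi p 0 (s - t)) (-(p * phi (p-1) 1 (s - t))) t := fun s t =>
    (hfd (s - t)).comp_const_sub s t
  have hug : ∀ u : ℝ, (u:ℂ) * phi (p-1) 1 u = phi p 0 u := fun u => by
    have := phi_succ (p-1) (by simp; linarith) 0 u
    rwa [sub_add_cancel] at this
  have hofr : ∀ x : ℝ, HasDerivAt (fun x : ℝ => (x:ℂ)) 1 x := fun x => (hasDerivAt_id (x:ℂ)).comp_ofReal
  have ha := ibp_s l μ (fun q => ((q.1:ℂ) - q.2) * phi p 0 (q.1 - q.2)) (fun q => (1 + p) * phi p 0 (q.1 - q.2))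
    (by fun_prop) (by fun_prop) (fun s t => by
      refine (((hofr s).sub_const (t:ℂ)).mul (hfs s t)).congr_deriv ?_
      have := hug (s - t)
      push_cast at this
      linear_combination p * this)
  have hb := ibp_s l μ (fun q => (q.2:ℂ) * phi p 0 (q.1 - q.2)) (fun q => q.2 * (p * phi (p-1) 1 (q.1 - q.2)))
    (by fun_prop) (by fun_prop) (fun s t => (hfs s t).const_mul (t:ℂ))
  have hc := ibp_t l μ (fun q => (q.1:ℂ) * phi p 0 (q.1 - q.2)) (fun q => q.1 * (-(p * phi (p-1) 1 (q.1 - q.2))))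
    (by fun_prop) (by fun_prop) (fun s t => (hft s t).const_mul (s:ℂ))
  have I : ∀ {g : ℝ × ℝ → ℂ}, Continuous g → Integrable g ((W l).prod (W μ)) := fun h => WW_integrable l μ h
  set M := (W l).prod (W μ) with hM
  set A := ∫ q : ℝ × ℝ, (q.1:ℂ) ^ 2 * phi p 0 (q.1 - q.2) ∂M with hA
  set C := ∫ q : ℝ × ℝ, (q.1:ℂ) * q.2 * phi p 0 (q.1 - q.2) ∂M with hC
  have e1 : ∫ q : ℝ × ℝ, (q.1:ℂ) * (((q.1:ℂ) - q.2) * phi p 0 (q.1 - q.2)) ∂M = A - C := by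
    rw [hA, hC, ← integral_sub (I (by fun_prop)) (I (by fun_prop))]
    congr 1; funext q; ring
  have e2 : ∫ q : ℝ × ℝ, (1 - (q.1:ℂ) ^ 2) * ((1 + p) * phi p 0 (q.1 - q.2)) ∂M = (1 + p) * (II l μ p - A) := by
    rw [hA, II, ← integral_sub (I (by fun_prop)) (I (by fun_prop)), ← integral_const_mul]
    congr 1; funext q; ring
  have e3 : ∫ q : ℝ × ℝ, (q.1:ℂ) * (q.2 * phi p 0 (q.1 - q.2)) ∂M = C := by
    rw [hC]; congr 1; funext q; ring
  have e4 : ∫ q : ℝ × ℝ, (q.2:ℂ) * (q.1 * phi p 0 (q.1 - q.2)) ∂M = C := by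
    rw [hC]; congr 1; funext q; ring
  have e5 : ∫ q : ℝ × ℝ, (1 - (q.1:ℂ) ^ 2) * (q.2 * (p * phi (p-1) 1 (q.1 - q.2))) ∂M +
      ∫ q : ℝ × ℝ, (1 - (q.2:ℂ) ^ 2) * (q.1 * (-(p * phi (p-1) 1 (q.1 - q.2)))) ∂M = -p * (II l μ p + C) := by
    rw [hC, II, ← integral_add (I (by fun_prop)) (I (by fun_prop)), ← integral_add (I (by fun_prop)) (I (by fun_prop)), ← integral_const_mul]
    congr 1; funext q
    have := hug (q.1 - q.2)
    push_cast at this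
    linear_combination (-p * (1 + q.1 * q.2)) * this
  have e6 : II (l+1) μ p = II l μ p - A := by
    rw [II_succ l μ p (by linarith), hA, II, ← integral_sub (I (by fun_prop)) (I (by fun_prop))]
    congr 1; funext q; ring
  rw [e1, e2] at ha
  rw [e3] at hb
  rw [e4] at hc
  rw [← hb, ← hc] at e5
  rw [e6]
  linear_combination (-(2 * l + 2 * μ + 2 + p)) * ha - (2 * l + 1) * e5

/-- normalized -/
noncomputable def ee (l μ : ℝ) (p : ℂ) : ℂ := II l μ p / (Z l * Z μ)

lemma ee_symm (l μ : ℝ) [Fact (0 < l)] [Fact (0 < μ)] (p : ℂ) : ee l μ p = ee μ l p := by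
  rw [ee, ee, II_symm, mul_comm]

lemma ee_rec (l μ : ℝ) [Fact (0 < l)] [Fact (0 < μ)] (ν : ℂ) (hp : 1 < (2*ν).re) :
    (ν + 1 + l) * (ν + 1 + l + μ) * ee (l+1) μ (2*ν) = (l + 1) * (l + μ + 2 * ν + 1) * ee l μ (2*ν) := by
  have h1 := II_rec l μ (2*ν) hp
  have h2 := Z_succ l
  have n1 := Z_ne l
  have n2 := Z_ne (l+1)
  have n3 := Z_ne μ
  have hl : (0:ℝ) < l := Fact.out
  have n4 : (2 * (l:ℂ) + 1) ≠ 0 := by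
    have := lne (2 * l + 1) (by linarith) 0; push_cast at this; simpa using this
  rw [ee, ee]
  generalize II (l+1) μ (2*ν) = X at *
  generalize II l μ (2*ν) = Y at *
  field_simp
  apply mul_left_cancel₀ n4
  linear_combination (Z l * (2 * l + 1) / 4 ) * h1 - (l + μ + 2 * ν + 1) * (2 * l + 1) / 2 * Y * h2
end GB

namespace GB
open Set

/-- gamma quotient -/
noncomputable def Dq (l μ ν : ℂ) : ℂ :=
  Complex.Gamma (l + μ + 2 * ν + 1) * Complex.Gamma (l + 1) / (Complex.Gamma (ν + 1 + l + μ) * Complex.Gamma (ν + 1 + l))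
/-- remaining factor -/
noncomputable def Qq (μ ν : ℂ) : ℂ :=
  Complex.Gamma (μ + 1) * Complex.Gamma (2 * ν + 1) / (2 ^ (2 * ν) * (Complex.Gamma (ν + 1 + μ) * Complex.Gamma (ν + 1)))

lemma b00_eq (l μ ν : ℂ) (hl : l ≠ 0) (hμ : μ ≠ 0) : bCoef l μ ν 0 0 = Dq l μ ν * Qq μ ν := by
  rw [bCoef, Dq, Qq, Complex.Gamma_add_one l hl, Complex.Gamma_add_one μ hμ]
  simp only [Nat.cast_zero, add_zero, pow_zero]
  rw [show ν + 1 + (l + μ) / 2 + l / 2 + μ / 2 = ν + 1 + l + μ by ring,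
    show ν + 1 + (l + μ) / 2 + l / 2 - μ / 2 = ν + 1 + l by ring,
    show ν + 1 + (l + μ) / 2 - l / 2 + μ / 2 = ν + 1 + μ by ring,
    show ν + 1 + (l + μ) / 2 - l / 2 - μ / 2 = ν + 1 by ring]
  rw [div_mul_div_comm]
  congr 1 <;> ring

lemma b00_symm (l μ ν : ℂ) : bCoef l μ ν 0 0 = bCoef μ l ν 0 0 := by
  rw [bCoef, bCoef]
  simp only [Nat.cast_zero, add_zero, pow_zero]
  rw [show ν + 1 + (l + μ) / 2 + l / 2 + μ / 2 = ν + 1 + l + μ by ring,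
    show ν + 1 + (l + μ) / 2 + l / 2 - μ / 2 = ν + 1 + l by ring,
    show ν + 1 + (l + μ) / 2 - l / 2 + μ / 2 = ν + 1 + μ by ring,
    show ν + 1 + (l + μ) / 2 - l / 2 - μ / 2 = ν + 1 by ring,
    show ν + 1 + (μ + l) / 2 + μ / 2 + l / 2 = ν + 1 + l + μ by ring,
    show ν + 1 + (μ + l) / 2 + μ / 2 - l / 2 = ν + 1 + μ by ring,
    show ν + 1 + (μ + l) / 2 - μ / 2 + l / 2 = ν + 1 + l by ring,
    show ν + 1 + (μ + l) / 2 - μ / 2 - l / 2 = ν + 1 by ring, add_comm μ l]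
  congr 1 <;> ring

lemma re_ne (z : ℂ) (h : 0 < z.re) : z ≠ 0 := by rintro rfl; simp at h

lemma Dq_ne (l μ : ℝ) (hl : 0 < l) (hμ : 0 < μ) (ν : ℂ) (hν : 0 < ν.re) : Dq l μ ν ≠ 0 := by
  rw [Dq]
  apply div_ne_zero <;> apply mul_ne_zero <;> apply Complex.Gamma_ne_zero_of_re_pos <;> simp <;> linarith

lemma Dq_succ (l μ : ℝ) (hl : 0 < l) (hμ : 0 < μ) (ν : ℂ) (hν : 0 < ν.re) :
    (ν + 1 + l) * (ν + 1 + l + μ) * Dq ((l + 1 : ℝ) : ℂ) μ ν = (l + 1) * (l + μ + 2 * ν + 1) * Dq l μ ν := by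
  have n1 : (ν + 1 + l) ≠ 0 := re_ne _ (by simp; linarith)
  have n2 : (ν + 1 + l + μ) ≠ 0 := re_ne _ (by simp; linarith)
  have n3 : (l + μ + 2 * ν + 1) ≠ 0 := re_ne _ (by simp; linarith)
  have n4 : (l + 1 : ℂ) ≠ 0 := re_ne _ (by simp; linarith)
  have g1 := Complex.Gamma_ne_zero_of_re_pos (s := ν + 1 + l) (by simp; linarith)
  have g2 := Complex.Gamma_ne_zero_of_re_pos (s := ν + 1 + l + μ) (by simp; linarith)
  rw [Dq, Dq]
  push_cast
  rw [show (l:ℂ) + 1 + μ + 2 * ν + 1 = l + μ + 2 * ν + 1 + 1 by ring, show ν + 1 + ((l:ℂ) + 1) + μ = ν + 1 + l + μ + 1 by ring,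
    show ν + 1 + ((l:ℂ) + 1) = ν + 1 + l + 1 by ring, Complex.Gamma_add_one _ n1, Complex.Gamma_add_one _ n2,
    Complex.Gamma_add_one _ n3, Complex.Gamma_add_one _ n4]
  field_simp

lemma ee_Dq (l μ : ℝ) [Fact (0 < l)] [Fact (0 < μ)] (ν : ℂ) (hp : 1 < (2*ν).re) (n : ℕ) :
    Fact (0 < l + n) ∧ ee (l + n) μ (2*ν) * Dq l μ ν = ee l μ (2*ν) * Dq ((l + n : ℝ) : ℂ) μ ν := by
  have hl : (0:ℝ) < l := Fact.out
  have hμ : (0:ℝ) < μ := Fact.out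
  have hν : 0 < ν.re := by simp at hp; linarith
  induction n with
  | zero => simp; exact ⟨hl⟩
  | succ n ih =>
    obtain ⟨hF, ih⟩ := ih
    have h0 : 0 < l + n := hF.out
    refine ⟨⟨by push_cast; linarith⟩, ?_⟩
    have h1 := ee_rec (l + n) μ ν hp
    have h2 := Dq_succ (l + n) μ h0 hμ ν hν
    push_cast at h1 h2 ih ⊢
    rw [← add_assoc l, ← add_assoc (l:ℂ)]
    have n1 : (ν + 1 + (l + n)) ≠ 0 := re_ne _ (by simp; linarith)
    have n2 : (ν + 1 + (l + n) + μ) ≠ 0 := re_ne _ (by simp; linarith)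
    apply mul_left_cancel₀ (mul_ne_zero n1 n2)
    linear_combination Dq l μ ν * h1 - ee l μ (2*ν) * h2 + (l + n + 1) * (l + n + μ + 2 * ν + 1) * ih

lemma Gamma_tend (s : ℂ) (hs : 0 < s.re) :
    Tendsto (fun n : ℕ => Complex.Gamma (s + (n + 1 : ℕ)) / ((n : ℂ) ^ s * n.factorial)) atTop (nhds 1) := by
  have h1 := Complex.GammaSeq_tendsto_Gamma s
  have g := Complex.Gamma_ne_zero_of_re_pos hs
  have h2 : Tendsto (fun n => Complex.Gamma s / Complex.GammaSeq s n) atTop (nhds (Complex.Gamma s / Complex.Gamma s)) :=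
    tendsto_const_nhds.div h1 g
  rw [div_self g] at h2
  refine h2.congr fun n => ?_
  have hne : ∀ m : ℕ, s + m ≠ 0 := fun m => re_ne _ (by simp; positivity)
  rw [Complex.GammaSeq, Gamma_PP s hne, PP, div_div_eq_mul_div, mul_comm (Complex.Gamma s)]

lemma Dq_tend (l μ : ℝ) (hl : 0 < l) (hμ : 0 < μ) (ν : ℂ) (hν : 0 < ν.re) :
    Tendsto (fun n : ℕ => Dq ((l + (n + 1 : ℕ) : ℝ) : ℂ) μ ν) atTop (nhds 1) := by
  have ta := Gamma_tend (l + μ + 2 * ν + 1) (by simp; linarith)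
  have tb := Gamma_tend (l + 1) (by simp; linarith)
  have tc := Gamma_tend (ν + 1 + l + μ) (by simp; linarith)
  have td := Gamma_tend (ν + 1 + l) (by simp; linarith)
  have := (ta.mul tb).div (tc.mul td) (by simp)
  simp only [mul_one, div_one] at this
  refine this.congr' ?_
  filter_upwards [eventually_gt_atTop 0] with n hn
  have hn0 : (n:ℂ) ≠ 0 := by exact_mod_cast hn.ne'
  have hf : (n.factorial : ℂ) ≠ 0 := by exact_mod_cast n.factorial_ne_zero
  have hk : (n:ℂ) ^ (l + μ + 2 * ν + 1) * (n:ℂ) ^ ((l:ℂ) + 1) = (n:ℂ) ^ (ν + 1 + l + μ) * (n:ℂ) ^ (ν + 1 + l) := by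
    rw [← Complex.cpow_add _ _ hn0, ← Complex.cpow_add _ _ hn0]; congr 1; ring
  have p1 : (n:ℂ) ^ (ν + 1 + l + μ) ≠ 0 := fun h => hn0 ((Complex.cpow_eq_zero_iff _ _).1 h).1
  have p2 : (n:ℂ) ^ (ν + 1 + l) ≠ 0 := fun h => hn0 ((Complex.cpow_eq_zero_iff _ _).1 h).1
  have p3 : (n:ℂ) ^ (l + μ + 2 * ν + 1) ≠ 0 := fun h => hn0 ((Complex.cpow_eq_zero_iff _ _).1 h).1
  have p4 : (n:ℂ) ^ ((l:ℂ) + 1) ≠ 0 := fun h => hn0 ((Complex.cpow_eq_zero_iff _ _).1 h).1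
  simp only [Pi.div_apply]
  rw [Dq]
  have c1 : ((l + (n+1:ℕ) : ℝ) : ℂ) = l + (n+1:ℕ) := by push_cast; ring
  rw [c1, show (l:ℂ) + (n+1:ℕ) + μ + 2 * ν + 1 = l + μ + 2 * ν + 1 + (n+1:ℕ) by ring,
    show (l:ℂ) + (n+1:ℕ) + 1 = l + 1 + (n+1:ℕ) by ring,
    show ν + 1 + ((l:ℂ) + (n+1:ℕ)) + μ = ν + 1 + l + μ + (n+1:ℕ) by ring,
    show ν + 1 + ((l:ℂ) + (n+1:ℕ)) = ν + 1 + l + (n+1:ℕ) by ring]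
  rw [div_mul_div_comm, div_mul_div_comm, div_div_div_eq]
  rw [show (n:ℂ) ^ ((l:ℂ) + μ + 2 * ν + 1) * n.factorial * ((n:ℂ) ^ ((l:ℂ) + 1) * n.factorial) = 
    (n:ℂ) ^ (ν + 1 + l + μ) * n.factorial * ((n:ℂ) ^ (ν + 1 + l) * n.factorial) by linear_combination (n.factorial:ℂ)^2 * hk]
  rw [mul_comm (_ * _ : ℂ) (Complex.Gamma (ν + 1 + l + μ + (n+1:ℕ)) * _)]
  rw [mul_div_mul_right]
  exact mul_ne_zero (mul_ne_zero p1 hf) (mul_ne_zero p2 hf)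
end GB

namespace GB
open Set

lemma phi_lip (p : ℂ) (hp : 1 < p.re) : ∃ L, 0 ≤ L ∧ ∀ a ∈ Icc (-2:ℝ) 2, ∀ b ∈ Icc (-2:ℝ) 2,
    ‖phi p 0 a - phi p 0 b‖ ≤ L * |a - b| := by
  have hg := phi_cont (p-1) (by simp; linarith) 1
  obtain ⟨C, hC⟩ := (isCompact_Icc (a := (-2:ℝ)) (b := 2)).exists_bound_of_continuousOn
    (f := fun u => p * phi (p-1) 1 u) (by fun_prop)
  refine ⟨C, (norm_nonneg _).trans (hC 0 (by norm_num)), fun a ha b hb => ?_⟩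
  have := Convex.norm_image_sub_le_of_norm_hasDerivWithin_le (f := phi p 0) (s := Icc (-2:ℝ) 2) (C := C)
    (f' := fun u => p * phi (p-1) 1 u)
    (fun x hx => (phi_hasDeriv p hp 0 x).hasDerivWithinAt) hC (convex_Icc _ _) hb ha
  simpa using this

lemma W_sq_real (l : ℝ) [Fact (0 < l)] : ∫ x : ℝ, x ^ 2 ∂(W l) = (W l).real univ / (2 * l + 2) := by
  have hl : (0:ℝ) < l := Fact.out
  have h := W_sq l
  rw [Z_eq] at h
  have : ∫ x : ℝ, (x:ℂ) * x ∂(W l) = ((∫ x : ℝ, x ^ 2 ∂(W l) : ℝ) : ℂ) := by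
    rw [← integral_complex_ofReal]; congr 1; funext x; push_cast; ring
  rw [this] at h
  have h2 : (2 * l + 2) * ∫ x : ℝ, x ^ 2 ∂(W l) = (W l).real univ := by exact_mod_cast h
  rw [← h2]; field_simp

lemma WW_integrable_real (l μ : ℝ) [Fact (0 < l)] [Fact (0 < μ)] {g : ℝ × ℝ → ℝ} (hg : Continuous g) :
    Integrable g ((W l).prod (W μ)) := by
  obtain ⟨C, hC⟩ := ((isCompact_Icc (a := (-1:ℝ)) (b := 1)).prod (isCompact_Icc (a := (-1:ℝ)) (b := 1))).exists_bound_of_continuousOn hg.continuousOn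
  exact Integrable.of_bound hg.aestronglyMeasurable C ((WW_ae l μ).mono hC)

/-- one-dim integral -/
noncomputable def e1 (μ : ℝ) (p : ℂ) : ℂ := (∫ t, phi p 0 (-t) ∂(W μ)) / Z μ

lemma ee_near (μ : ℝ) [Fact (0 < μ)] (p : ℂ) (hp : 1 < p.re) : ∃ L, 0 ≤ L ∧ ∀ l : ℝ, Fact (0 < l) →
    ‖ee l μ p - e1 μ p‖ ≤ L * (2 / Real.sqrt (2 * l + 2)) := by
  obtain ⟨L, hL, h⟩ := phi_lip p hp
  refine ⟨L, hL, fun l hF => ?_⟩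
  have hl : (0:ℝ) < l := Fact.out
  have hf := phi_cont p (by linarith) 0
  set r := Real.sqrt (2 * l + 2) with hr
  have hr0 : 0 < r := Real.sqrt_pos.2 (by linarith)
  have hr2 : r ^ 2 = 2 * l + 2 := Real.sq_sqrt (by linarith)
  have hz1 := Z_ne l
  have hz2 := Z_ne μ
  have k1 : ∫ q : ℝ × ℝ, phi p 0 (-q.2) ∂((W l).prod (W μ)) = Z l * ∫ t, phi p 0 (-t) ∂(W μ) := by
    have := integral_prod_mul (μ := W l) (ν := W μ) (fun _ => (1:ℂ)) (fun t => phi p 0 (-t))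
    simpa [Z] using this
  have k2 : ee l μ p - e1 μ p = (∫ q : ℝ × ℝ, (phi p 0 (q.1 - q.2) - phi p 0 (-q.2)) ∂((W l).prod (W μ))) / (Z l * Z μ) := by
    rw [integral_sub (WW_integrable l μ (by fun_prop)) (WW_integrable l μ (by fun_prop)), k1, ee, e1, II]
    field_simp
  have k3 : ∫ q : ℝ × ℝ, (L * (1 / r + r * q.1 ^ 2)) ∂((W l).prod (W μ)) = L * (2 / r) * ((W l).real univ * (W μ).real univ) := by
    have e := integral_prod_mul (μ := W l) (ν := W μ) (fun s : ℝ => s ^ 2) (fun _ => (1:ℝ))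
    simp only [mul_one, integral_const, smul_eq_mul] at e
    rw [integral_const_mul, integral_add (WW_integrable_real l μ (by fun_prop)) (WW_integrable_real l μ (by fun_prop)),
      integral_const_mul, e, W_sq_real, ← hr2]
    have hu : ((W l).prod (W μ)).real univ = (W l).real univ * (W μ).real univ := by
      rw [← univ_prod_univ, measureReal_prod_prod]
    rw [integral_const, smul_eq_mul, hu]
    field_simp; ring
  have k4 : ‖∫ q : ℝ × ℝ, (phi p 0 (q.1 - q.2) - phi p 0 (-q.2)) ∂((W l).prod (W μ))‖ ≤ 
      L * (2 / r) * ((W l).real univ * (W μ).real univ) := by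
    rw [← k3]
    refine norm_integral_le_of_norm_le (WW_integrable_real l μ (by fun_prop)) ?_
    filter_upwards [WW_ae l μ] with q hq
    obtain ⟨⟨h1, h2⟩, ⟨h3, h4⟩⟩ := hq
    refine (h _ ⟨by linarith, by linarith⟩ _ ⟨by linarith, by linarith⟩).trans ?_
    rw [show q.1 - q.2 - -q.2 = q.1 by ring]
    gcongr
    rw [← sq_abs q.1]
    have : 0 ≤ (1 - r * |q.1|) ^ 2 / r := by positivity
    have e : (1 - r * |q.1|) ^ 2 / r = 1 / r + r * |q.1| ^ 2 - 2 * |q.1| := by field_simp; ring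
    have := abs_nonneg q.1
    linarith
  rw [k2, norm_div, norm_mul, Z_eq, Z_eq, Complex.norm_real, Complex.norm_real, Real.norm_of_nonneg (W_pos l).le, Real.norm_of_nonneg (W_pos μ).le,
    div_le_iff₀ (mul_pos (W_pos l) (W_pos μ))]
  exact k4

lemma ee_eq_Dq (l μ : ℝ) [Fact (0 < l)] [Fact (0 < μ)] (ν : ℂ) (hp : 1 < (2*ν).re) :
    e1 μ (2*ν) * Dq l μ ν = ee l μ (2*ν) := by
  have hl : (0:ℝ) < l := Fact.out
  have hμ : (0:ℝ) < μ := Fact.out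
  have hν : 0 < ν.re := by simp at hp; linarith
  obtain ⟨L, hL, h⟩ := ee_near μ (2*ν) hp
  have t1 : Tendsto (fun n : ℕ => ee (l + (n+1:ℕ)) μ (2*ν)) atTop (nhds (e1 μ (2*ν))) := by
    rw [tendsto_iff_norm_sub_tendsto_zero]
    have hb : Tendsto (fun n : ℕ => L * (2 / Real.sqrt (2 * (l + (n+1:ℕ)) + 2))) atTop (nhds (L * 0)) := by
      apply Tendsto.const_mul
      apply Tendsto.div_atTop tendsto_const_nhds
      apply Real.tendsto_sqrt_atTop.comp
      apply tendsto_atTop_mono (f := fun n : ℕ => (n:ℝ)) _ tendsto_natCast_atTop_atTop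
      intro n; push_cast; have : (0:ℝ) ≤ n := by positivity
      linarith
    rw [mul_zero] at hb
    exact squeeze_zero (fun n => norm_nonneg _) (fun n => h _ (ee_Dq l μ ν hp (n+1)).1) hb
  have t2 := (Dq_tend l μ hl hμ ν hν).const_mul (ee l μ (2*ν))
  have t3 := t1.mul_const (Dq l μ ν)
  rw [mul_one] at t2
  refine tendsto_nhds_unique (t3.congr fun n => ?_) t2
  exact (ee_Dq l μ ν hp (n+1)).2

instance fact_half : Fact ((0:ℝ) < 1/2) := ⟨by norm_num⟩

lemma phi_two (p : ℂ) (hp : 0 < p.re) (ε : ℕ) (u : ℝ) : phi p (ε+2) u = phi p ε u := by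
  rcases eq_or_ne u 0 with rfl | hu
  · rw [phi_zero p hp, phi_zero p hp]
  · rw [phi, phi, pow_add]
    have : Real.sign u ^ 2 = 1 := by
      rcases lt_or_gt_of_ne hu with h | h
      · rw [Real.sign_of_neg h]; ring
      · rw [Real.sign_of_pos h]; ring
    rw [this, mul_one]

lemma phi_anti (p : ℂ) (hp : 0 < p.re) (ε : ℕ) (u : ℝ) :
    HasDerivAt (fun u => phi (p+1) (ε+1) u / (p+1)) (phi p ε u) u := by
  have h := (phi_hasDeriv (p+1) (by simp; linarith) (ε+1) u).div_const (p+1)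
  have n : p + 1 ≠ 0 := re_ne _ (by simp; linarith)
  rw [add_sub_cancel_right, add_assoc, phi_two p hp] at h
  refine h.congr_deriv ?_
  field_simp

lemma II_half (p : ℂ) (hp : 0 < p.re) : (p + 1) * (p + 2) * II (1/2) (1/2) p = 2 * 2 ^ (p + 2) := by
  have n1 : p + 1 ≠ 0 := re_ne _ (by simp; linarith)
  have n2 : p + 2 ≠ 0 := re_ne _ (by simp; linarith)
  have hf := phi_cont p (by linarith) 0
  have hf1 := phi_cont (p+1) (by simp; linarith) 1
  have hin : ∀ t : ℝ, ∫ s, phi p 0 (s - t) ∂(W (1/2)) = phi (p+1) 1 (1 - t) / (p+1) - phi (p+1) 1 (-1 - t) / (p+1) := by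
    intro t
    rw [W_half _ (by fun_prop)]
    exact intervalIntegral.integral_eq_sub_of_hasDerivAt (fun s _ => (phi_anti p hp 0 (s - t)).comp_sub_const s t)
      (Continuous.intervalIntegrable (by fun_prop) _ _)
  have h2 : ∀ a : ℝ, ∀ t : ℝ, HasDerivAt (fun t => -(phi (p+1+1) (1+1) (a - t) / (p+1+1))) (phi (p+1) 1 (a - t)) t := by
    intro a t
    have := ((phi_anti (p+1) (by simp; linarith) 1 (a - t)).comp_const_sub a t).neg
    exact this.congr_deriv (by simp)
  rw [II, integral_prod_symm _ (WW_integrable _ _ (by fun_prop))]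
  simp only [hin]
  rw [W_half _ (by fun_prop), intervalIntegral.integral_sub (Continuous.intervalIntegrable (by fun_prop) _ _) (Continuous.intervalIntegrable (by fun_prop) _ _),
    intervalIntegral.integral_div, intervalIntegral.integral_div,
    intervalIntegral.integral_eq_sub_of_hasDerivAt (fun t _ => h2 1 t) (Continuous.intervalIntegrable (by fun_prop) _ _),
    intervalIntegral.integral_eq_sub_of_hasDerivAt (fun t _ => h2 (-1) t) (Continuous.intervalIntegrable (by fun_prop) _ _)]
  have z0 : phi (p+1+1) (1+1) 0 = 0 := phi_zero _ (by simp; linarith) _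
  have z2 : phi (p+1+1) (1+1) 2 = 2 ^ (p+2) := by
    rw [phi_pos _ _ _ (by norm_num)]; push_cast; congr 1; ring
  have z3 : phi (p+1+1) (1+1) (-2) = 2 ^ (p+2) := by
    rw [phi_neg, z2]; norm_num
  rw [show (1:ℝ) - 1 = 0 by ring, show (1:ℝ) - (-1) = 2 by ring, show (-1:ℝ) - 1 = -2 by ring, show (-1:ℝ) - (-1) = 0 by ring,
    z0, z2, z3]
  rw [show p + 1 + 1 = p + 2 by ring]
  field_simp
  ring

lemma Z_half : Z (1/2) = 2 := by
  rw [Z, W_half _ continuous_const]; simp; norm_num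

lemma b00_half (ν : ℂ) (hν : 0 < ν.re) : Dq ((1/2:ℝ):ℂ) ((1/2:ℝ):ℂ) ν * Qq ((1/2:ℝ):ℂ) ν * ((2 * ν + 1) * (2 * ν + 2)) = 2 * 2 ^ (2 * ν) := by
  have hd := Complex.Gamma_mul_Gamma_add_half (ν + 1)
  have n1 : ν + 1 ≠ 0 := re_ne _ (by simp; linarith)
  have n2 : 2 * ν + 1 ≠ 0 := re_ne _ (by simp; linarith)
  have g1 := Complex.Gamma_ne_zero_of_re_pos (s := ν + 1) (by simp; linarith)
  have g2 := Complex.Gamma_ne_zero_of_re_pos (s := ν + 1 + 1/2) (by simp; linarith)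
  have g3 := Complex.Gamma_ne_zero_of_re_pos (s := 2 * ν + 1) (by simp; linarith)
  have r3 := Complex.Gamma_add_one (2*ν+1) n2
  have r1 := Complex.Gamma_add_one (ν+1) n1
  have rh := Complex.Gamma_add_one (1/2) (by norm_num)
  have hpi : ((Real.sqrt Real.pi : ℝ) : ℂ) ^ 2 = Real.pi := by
    rw [← Complex.ofReal_pow, Real.sq_sqrt Real.pi_pos.le]
  have rg : Complex.Gamma (1/2) = (Real.sqrt Real.pi : ℝ) := by
    have := Complex.Gamma_one_half_eq
    rw [this, Real.sqrt_eq_rpow, Complex.ofReal_cpow Real.pi_pos.le]; norm_num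
  have hc : (2:ℂ) ^ (1 - 2 * (ν + 1)) * (2 ^ (2 * ν) * 2) = 1 := by
    have h2 : (2:ℂ) ^ (2 * ν) * 2 = 2 ^ (2 * ν + 1) := by
      rw [Complex.cpow_add _ _ two_ne_zero, Complex.cpow_one]
    rw [h2, ← Complex.cpow_add _ _ two_ne_zero, show 1 - 2 * (ν + 1) + (2 * ν + 1) = 0 by ring, Complex.cpow_zero]
  have p2 : (2:ℂ) ^ (2 * ν) ≠ 0 := fun h => two_ne_zero ((Complex.cpow_eq_zero_iff _ _).1 h).1
  rw [Dq, Qq]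
  push_cast
  rw [show (1/2:ℂ) + 1/2 + 2 * ν + 1 = 2 * ν + 1 + 1 by ring, show ν + 1 + 1/2 + 1/2 = ν + 1 + 1 by ring, rh, r1, r3, rg]
  rw [show 2 * (ν + 1) = 2 * ν + 1 + 1 by ring, r3] at hd
  rw [show 2 * (ν + 1) = 2 * ν + 1 + 1 by ring] at hc
  generalize ((Real.sqrt Real.pi : ℝ) : ℂ) = π at *
  generalize (2:ℂ) ^ (1 - (2 * ν + 1 + 1)) = X at *
  generalize (2:ℂ) ^ (2 * ν) = Y at *
  generalize Complex.Gamma (ν + 1) = A at *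
  generalize Complex.Gamma (ν + 1 + 1/2) = B at *
  generalize Complex.Gamma (2 * ν + 1) = C at *
  have hd2 : A * B * (Y * 2) = (2 * ν + 1) * C * π := by
    rw [hd]; linear_combination ((2 * ν + 1) * C * π) * hc
  field_simp
  linear_combination -(A * B * (Y * 2) + (2 * ν + 1) * C * π) * hd2

lemma ee_half (ν : ℂ) (hν : 0 < ν.re) : ee (1/2) (1/2) (2*ν) = Dq ((1/2:ℝ):ℂ) ((1/2:ℝ):ℂ) ν * Qq ((1/2:ℝ):ℂ) ν := by
  have h1 := II_half (2*ν) (by simp; linarith)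
  have h2 := b00_half ν hν
  have n1 : 2 * ν + 1 ≠ 0 := re_ne _ (by simp; linarith)
  have n2 : 2 * ν + 2 ≠ 0 := re_ne _ (by simp; linarith)
  apply mul_right_cancel₀ (mul_ne_zero n1 n2)
  rw [h2, ee, Z_half]
  have : (2:ℂ) ^ (2 * ν + 2) = 2 ^ (2 * ν) * 4 := by
    rw [Complex.cpow_add _ _ two_ne_zero]; norm_num
  rw [this] at h1
  linear_combination h1 / 4

lemma ee_eq_b00 (l μ : ℝ) [Fact (0 < l)] [Fact (0 < μ)] (ν : ℂ) (hp : 1 < (2*ν).re) :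
    ee l μ (2*ν) = bCoef l μ ν 0 0 := by
  have hl : (0:ℝ) < l := Fact.out
  have hμ : (0:ℝ) < μ := Fact.out
  have hν : 0 < ν.re := by simp at hp; linarith
  have hh : (0:ℝ) < 1/2 := by norm_num
  have l0 : (l:ℂ) ≠ 0 := by exact_mod_cast hl.ne'
  have m0 : (μ:ℂ) ≠ 0 := by exact_mod_cast hμ.ne'
  have h0 : ((1/2:ℝ):ℂ) ≠ 0 := by exact_mod_cast hh.ne'
  have a1 := ee_eq_Dq (1/2) (1/2) ν hp
  have a2 := ee_eq_Dq μ (1/2) ν hp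
  have a3 := ee_eq_Dq (1/2) μ ν hp
  have a4 := ee_eq_Dq l μ ν hp
  have d1 := Dq_ne (1/2) (1/2) hh hh ν hν
  have d2 := Dq_ne (1/2) μ hh hμ ν hν
  have q1 : e1 (1/2) (2*ν) = Qq ((1/2:ℝ):ℂ) ν := by
    rw [ee_half ν hν, mul_comm] at a1
    exact mul_left_cancel₀ d1 a1
  rw [q1, mul_comm, ← b00_eq _ _ _ m0 h0, b00_symm, b00_eq _ _ _ h0 m0, ee_symm, ← a3] at a2
  have q2 : e1 μ (2*ν) = Qq μ ν := by
    rw [mul_comm] at a2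
    exact (mul_right_cancel₀ d2 a2).symm
  rw [← a4, q2, b00_eq _ _ _ l0 m0, mul_comm]
end GB

namespace GB
open Set

lemma term_int (l μ : ℝ) [Fact (0 < l)] [Fact (0 < μ)] (f : ℕ × ℕ → ℝ × ℝ → ℂ) (hf : ∀ p, Continuous (f p))
    (C : ℝ) (hb : ∀ p (s t : ℝ), s ∈ Icc (-1:ℝ) 1 → t ∈ Icc (-1:ℝ) 1 → ‖f p (s, t)‖ ≤ C * V p) (p0 : ℕ × ℕ)
    (hz : ∀ p, p ≠ p0 → ∫ q, f p q ∂((W l).prod (W μ)) = 0) :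
    ∫ q, ∑' p, f p q ∂((W l).prod (W μ)) = ∫ q, f p0 q ∂((W l).prod (W μ)) := by
  have hs : Summable fun p => ∫ q, ‖f p q‖ ∂((W l).prod (W μ)) := by
    refine Summable.of_nonneg_of_le (fun p => integral_nonneg fun q => norm_nonneg _) (fun p => ?_)
      ((V_summable.mul_left C).mul_left (((W l).prod (W μ)).real univ))
    have h := integral_mono_ae (μ := (W l).prod (W μ)) (WW_integrable l μ (hf p)).norm (integrable_const (C * V p))
      ((WW_ae l μ).mono fun q hq => hb p q.1 q.2 hq.1 hq.2)
    rwa [integral_const, smul_eq_mul] at h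
  rw [← integral_tsum_of_summable_integral_norm (fun p => WW_integrable l μ (hf p)) hs]
  exact tsum_eq_single p0 hz

lemma b00_ne (l μ : ℝ) (hl : 0 < l) (hμ : 0 < μ) (ν : ℂ) (hν : 0 < ν.re) : bCoef l μ ν 0 0 ≠ 0 := by
  have l0 : (l:ℂ) ≠ 0 := by exact_mod_cast hl.ne'
  have m0 : (μ:ℂ) ≠ 0 := by exact_mod_cast hμ.ne'
  have p2 : (2:ℂ) ^ (2 * ν) ≠ 0 := fun h => two_ne_zero ((Complex.cpow_eq_zero_iff _ _).1 h).1
  rw [b00_eq _ _ _ l0 m0]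
  refine mul_ne_zero (Dq_ne l μ hl hμ ν hν) ?_
  rw [Qq]
  refine div_ne_zero (mul_ne_zero ?_ ?_) (mul_ne_zero p2 (mul_ne_zero ?_ ?_)) <;>
    apply Complex.Gamma_ne_zero_of_re_pos <;> simp <;> linarith

lemma II_b00 (l μ : ℝ) [Fact (0 < l)] [Fact (0 < μ)] (ν : ℂ) (hp : 1 < (2*ν).re) :
    II l μ (2*ν) = bCoef l μ ν 0 0 * (Z l * Z μ) := by
  rw [← ee_eq_b00 l μ ν hp, ee, div_mul_cancel₀ _ (mul_ne_zero (Z_ne l) (Z_ne μ))]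

lemma geg_int (l : ℝ) [Fact (0 < l)] (n : ℕ) (hn : n ≠ 0) : ∫ x : ℝ, gegenbauer l n x ∂(W l) = 0 := by
  obtain ⟨k, rfl⟩ := Nat.exists_eq_succ_of_ne_zero hn
  exact W_orth l k

lemma Y1_int (l : ℝ) [Fact (0 < l)] (n : ℕ) (hn : n ≠ 1) : ∫ x : ℝ, Y1 l n x ∂(W l) = 0 := by
  rcases n with _ | n
  · simp [Y1]
  · simp only [Y1, Nat.succ_ne_zero, if_false, Nat.add_sub_cancel]
    exact geg_int l n (by omega)

lemma K_const_zero (l μ : ℝ) (hl : 0 < l) (hμ : 0 < μ) (ν : ℂ) (hν : l + μ + 4 < 2 * ν.re) (c : ℂ)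
    (h : ∀ s ∈ Icc (-1:ℝ) 1, ∀ t ∈ Icc (-1:ℝ) 1, K l μ ν 0 s t = c * phi (2*ν) 0 (s-t)) : c = 1 := by
  have : Fact (0 < l) := ⟨hl⟩
  have : Fact (0 < μ) := ⟨hμ⟩
  obtain ⟨C, _, hC⟩ := tm_bound l μ hl hμ ν hν 0
  have e1 : ∀ p, ∫ q : ℝ × ℝ, tm l μ ν 0 p q.1 q.2 ∂((W l).prod (W μ)) =
      chi 0 (p.1+p.2) * bCoef l μ ν p.1 p.2 * ((∫ x : ℝ, gegenbauer l p.1 x ∂(W l)) * ∫ x : ℝ, gegenbauer μ p.2 x ∂(W μ)) := by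
    intro p
    rw [← integral_prod_mul, ← integral_const_mul]
    congr 1; funext q; rw [tm]; ring
  have e2 := term_int l μ (fun p q => tm l μ ν 0 p q.1 q.2) (tm_cont l μ ν 0) C hC (0,0) (by
    intro p hp
    rw [e1]
    rcases p with ⟨a, b⟩
    by_cases ha : a = 0
    · have hb : b ≠ 0 := by rintro rfl; exact hp (by rw [ha])
      rw [geg_int μ b hb]; simp
    · rw [geg_int l a ha]; simp)
  have e3 : ∫ q : ℝ × ℝ, ∑' p, tm l μ ν 0 p q.1 q.2 ∂((W l).prod (W μ)) = c * II l μ (2*ν) := by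
    rw [II, ← integral_const_mul]
    apply integral_congr_ae
    filter_upwards [WW_ae l μ] with q hq
    exact h _ hq.1 _ hq.2
  rw [e1, e3, II_b00 l μ ν (by simp; linarith)] at e2
  simp only [geg_zero, chi] at e2
  have n1 := b00_ne l μ hl hμ ν (by linarith)
  have n2 := mul_ne_zero n1 (mul_ne_zero (Z_ne l) (Z_ne μ))
  apply mul_right_cancel₀ n2
  rw [e2, Z_eq, Z_eq]; simp

lemma b10 (l μ ν : ℂ) (hl : l ≠ 0) (hν : ν ≠ 0) : l * bCoef l μ ν 1 0 = ν * bCoef (l+1) μ (ν - 1/2) 0 0 := by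
  have g1 := Complex.Gamma_add_one l hl
  have g2 := Complex.Gamma_add_one (2*ν) (by simpa using hν)
  have p1 : (2:ℂ) ^ (2 * ν) = 2 ^ (2 * (ν - 1/2)) * 2 := by
    rw [show 2 * ν = 2 * (ν - 1/2) + 1 by ring, Complex.cpow_add _ _ two_ne_zero, Complex.cpow_one]
  rw [bCoef, bCoef, p1]
  simp only [Nat.cast_zero, Nat.cast_one, add_zero, pow_zero]
  rw [show l + 1 + μ + 2 * (ν - 1/2) + 1 = l + μ + 2 * ν + 1 by ring,
    show 2 * (ν - 1/2) + 1 = 2 * ν by ring, g1, g2,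
    show ν - 1/2 + 1 + (l + 1 + μ) / 2 = ν + 1 + (l + μ) / 2 by ring]
  generalize (2:ℂ) ^ (2 * (ν - 1/2)) = X
  simp only [div_eq_mul_inv, mul_inv]
  ring

lemma dK_eq (l μ : ℝ) (hl : 0 < l) (hμ : 0 < μ) (ν : ℂ) (hν : l + μ + 4 < 2 * ν.re) (ε : ℕ) (c : ℂ)
    (h : ∀ s ∈ Icc (-1:ℝ) 1, ∀ t ∈ Icc (-1:ℝ) 1, K l μ ν ε s t = c * phi (2*ν) ε (s-t)) :
    ∀ s ∈ Icc (-1:ℝ) 1, ∀ t ∈ Icc (-1:ℝ) 1, ∑' p, dtm l μ ν ε p s t = c * (2 * ν * phi (2*ν-1) (ε+1) (s-t)) := by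
  intro s hs t ht
  obtain ⟨C, _, hC⟩ := dtm_bound l μ hl hμ ν hν ε
  have hf := phi_cont (2*ν-1) (by simp; linarith) (ε+1)
  have c1 : ContinuousOn (fun s => ∑' p, dtm l μ ν ε p s t) (Icc (-1:ℝ) 1) := by
    have hc : ∀ p, Continuous (fun s : ℝ => dtm l μ ν ε p s t) := fun p =>
      (dtm_cont l μ ν ε p).comp (g := fun q : ℝ × ℝ => dtm l μ ν ε p q.1 q.2) (f := fun s : ℝ => (s, t)) (by fun_prop)
    have hb : ∀ p, ∀ s ∈ Icc (-1:ℝ) 1, ‖dtm l μ ν ε p s t‖ ≤ C * V p := fun p s hs => hC p s t hs ht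
    exact continuousOn_tsum (fun p => (hc p).continuousOn) (V_summable.mul_left C) hb
  have c2 : ContinuousOn (fun s => c * (2 * ν * phi (2*ν-1) (ε+1) (s-t))) (Icc (-1:ℝ) 1) := by fun_prop
  have eo : EqOn (fun s => ∑' p, dtm l μ ν ε p s t) (fun s => c * (2 * ν * phi (2*ν-1) (ε+1) (s-t))) (Ioo (-1:ℝ) 1) := by
    intro s hs
    have d1 := K_hasDeriv l μ hl hμ ν hν ε s t hs ht
    have d2 := ((phi_hasDeriv (2*ν) (by simp; linarith) ε (s-t)).comp_sub_const s t).const_mul c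
    refine d1.unique (d2.congr_of_eventuallyEq ?_)
    filter_upwards [Ioo_mem_nhds hs.1 hs.2] with x hx
    exact h x (Ioo_subset_Icc_self hx) t ht
  have hcl : closure (Ioo (-1:ℝ) 1) = Icc (-1) 1 := closure_Ioo (by norm_num)
  exact eo.of_subset_closure c1 c2 Ioo_subset_Icc_self hcl.ge hs

lemma K_const_one (l μ : ℝ) (hl : 0 < l) (hμ : 0 < μ) (ν : ℂ) (hν : l + μ + 4 < 2 * ν.re) (c : ℂ)
    (h : ∀ s ∈ Icc (-1:ℝ) 1, ∀ t ∈ Icc (-1:ℝ) 1, K l μ ν 1 s t = c * phi (2*ν) 1 (s-t)) : c = 1 := by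
  have : Fact (0 < l) := ⟨hl⟩
  have : Fact (0 < μ) := ⟨hμ⟩
  obtain ⟨C, _, hC⟩ := dtm_bound l μ hl hμ ν hν 1
  have hd := dK_eq l μ hl hμ ν hν 1 c h
  have e1 : ∀ p, ∫ q : ℝ × ℝ, dtm l μ ν 1 p q.1 q.2 ∂((W (l+1)).prod (W μ)) =
      chi 1 (p.1+p.2) * bCoef l μ ν p.1 p.2 * (2 * l) * ((∫ x : ℝ, Y1 ((l+1:ℝ):ℂ) p.1 x ∂(W (l+1))) * ∫ x : ℝ, gegenbauer μ p.2 x ∂(W μ)) := by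
    intro p
    rw [← integral_prod_mul, ← integral_const_mul]
    congr 1; funext q; rw [dtm]; push_cast; ring
  have e2 := term_int (l+1) μ (fun p q => dtm l μ ν 1 p q.1 q.2) (dtm_cont l μ ν 1) C hC (1,0) (by
    intro p hp
    rw [e1]
    rcases p with ⟨a, b⟩
    by_cases ha : a = 1
    · have hb : b ≠ 0 := by rintro rfl; exact hp (by rw [ha])
      rw [geg_int μ b hb]; simp
    · rw [Y1_int (l+1) a ha]; simp)
  have e3 : ∫ q : ℝ × ℝ, ∑' p, dtm l μ ν 1 p q.1 q.2 ∂((W (l+1)).prod (W μ)) = c * (2 * ν) * II (l+1) μ (2*(ν-1/2)) := by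
    rw [II, ← integral_const_mul]
    apply integral_congr_ae
    filter_upwards [WW_ae (l+1) μ] with q hq
    rw [hd _ hq.1 _ hq.2, show 2 * (ν - 1/2) = 2 * ν - 1 by ring, show 1 + 1 = 0 + 2 by rfl, phi_two _ (by simp; linarith)]
    ring
  have n0 : ν ≠ 0 := re_ne _ (by linarith)
  have l0 : (l:ℂ) ≠ 0 := by exact_mod_cast hl.ne'
  rw [e1, e3, II_b00 (l+1) μ (ν-1/2) (by simp; linarith)] at e2
  have hy : ∀ x : ℝ, Y1 ((l+1:ℝ):ℂ) 1 x = 1 := by intro x; simp [Y1, geg_zero]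
  simp only [geg_zero, hy, chi] at e2
  have hb := b10 l μ ν l0 n0
  have n1 := b00_ne (l+1) μ (by linarith) hμ (ν-1/2) (by simp; linarith)
  have n2 := mul_ne_zero (mul_ne_zero (mul_ne_zero two_ne_zero n0) n1) (mul_ne_zero (Z_ne (l+1)) (Z_ne μ))
  apply mul_right_cancel₀ n2
  push_cast at e2 ⊢
  norm_num at e2 ⊢
  norm_num at hb
  rw [← Z_eq, ← Z_eq] at e2
  linear_combination e2 + 2 * Z (l+1) * Z μ * hb
end GB

namespace GB
open Set

lemma tm_ite (l μ : ℝ) (ν : ℂ) (ε : ℕ) (p : ℕ × ℕ) (s t : ℝ) :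
    (if (p.1 + p.2) % 2 = ε % 2 then
            bCoef (l : ℂ) (μ : ℂ) ν p.1 p.2 * gegenbauer (l : ℂ) p.1 (s : ℂ) *
              gegenbauer (μ : ℂ) p.2 (t : ℂ)
          else 0) = tm l μ ν ε p s t := by
  rw [tm, chi]; split_ifs <;> simp

lemma K_eq (l μ : ℝ) (hl : 0 < l) (hμ : 0 < μ) (ν : ℂ) (hν : l + μ + 4 < 2 * ν.re) (ε : ℕ) (hε : ε = 0 ∨ ε = 1)  :
    ∀ s ∈ Icc (-1:ℝ) 1, ∀ t ∈ Icc (-1:ℝ) 1, K l μ ν ε s t = phi (2*ν) ε (s-t) := by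
  obtain ⟨c, hc⟩ := K_eq_const l μ hl hμ ν hν ε
  have : c = 1 := by
    rcases hε with rfl | rfl
    · exact K_const_zero l μ hl hμ ν hν c hc
    · exact K_const_one l μ hl hμ ν hν c hc
  subst this
  simpa using hc
end GB

theorem stmt0 (lam mu : ℝ) (hlam : 0 < lam) (hmu : 0 < mu) (ν : ℂ)
    (hν : lam + mu + 4 < 2 * ν.re) (ε : ℕ) (hε : ε = 0 ∨ ε = 1) :
    (∀ s ∈ Set.Icc (-1 : ℝ) 1, ∀ t ∈ Set.Icc (-1 : ℝ) 1,
      HasSum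
        (fun p : ℕ × ℕ =>
          if (p.1 + p.2) % 2 = ε % 2 then
            bCoef (lam : ℂ) (mu : ℂ) ν p.1 p.2 * gegenbauer (lam : ℂ) p.1 (s : ℂ) *
              gegenbauer (mu : ℂ) p.2 (t : ℂ)
          else 0)
        (((|s - t| : ℝ) : ℂ) ^ (2 * ν) * (((Real.sign (s - t)) ^ ε : ℝ) : ℂ))) ∧
    (∀ s ∈ Set.Icc (-1 : ℝ) 1, ∀ t ∈ Set.Icc (-1 : ℝ) 1,
      Summable
        (fun p : ℕ × ℕ =>
          ‖if (p.1 + p.2) % 2 = ε % 2 then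
              bCoef (lam : ℂ) (mu : ℂ) ν p.1 p.2 * gegenbauer (lam : ℂ) p.1 (s : ℂ) *
                gegenbauer (mu : ℂ) p.2 (t : ℂ)
            else 0‖)) ∧
    TendstoUniformlyOn
      (fun (F : Finset (ℕ × ℕ)) (q : ℝ × ℝ) =>
        ∑ p ∈ F,
          if (p.1 + p.2) % 2 = ε % 2 then
            bCoef (lam : ℂ) (mu : ℂ) ν p.1 p.2 * gegenbauer (lam : ℂ) p.1 (q.1 : ℂ) *
              gegenbauer (mu : ℂ) p.2 (q.2 : ℂ)
          else 0)
      (fun q : ℝ × ℝ =>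
        ((|q.1 - q.2| : ℝ) : ℂ) ^ (2 * ν) * (((Real.sign (q.1 - q.2)) ^ ε : ℝ) : ℂ))
      atTop (Set.Icc (-1 : ℝ) 1 ×ˢ Set.Icc (-1 : ℝ) 1) := by
  simp only [GB.tm_ite]
  have hK := GB.K_eq lam mu hlam hmu ν hν ε hε
  refine ⟨fun s hs t ht => ?_, fun s hs t ht => (GB.tm_summable lam mu hlam hmu ν hν ε s t hs ht).norm, ?_⟩
  · have h := (GB.tm_summable lam mu hlam hmu ν hν ε s t hs ht).hasSum
    have e := hK s hs t ht
    rw [GB.K] at e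
    rw [e] at h
    exact h
  · obtain ⟨C, _, hC⟩ := GB.tm_bound lam mu hlam hmu ν hν ε
    have h := tendstoUniformlyOn_tsum (f := fun p (q : ℝ × ℝ) => GB.tm lam mu ν ε p q.1 q.2)
      (s := Set.Icc (-1 : ℝ) 1 ×ˢ Set.Icc (-1 : ℝ) 1)
      (GB.V_summable.mul_left C) (fun p q hq => hC p q.1 q.2 hq.1 hq.2)
    exact h.congr_right fun q hq => hK q.1 hq.1 q.2 hq.2
end

section
/- Suppose λ, μ ∈ ℂ with Re λ > −1/2, Re μ > −1/2 and Re(λ + μ) < 0. Then ∬_{0≤s<t≤1} t^{λ−1/2}(1−t)^{λ−1/2} s^{μ−1/2}(1−s)^{μ−1/2} |s − t|^{−λ−μ} ds dt + (cos(πλ)/cos(πμ)) · ∬_{0≤t<s≤1} t^{λ−1/2}(1−t)^{λ−1/2} s^{μ−1/2}(1−s)^{μ−1/2} |s − t|^{−λ−μ} ds dt = Γ(λ + 1/2) Γ(1/2 − μ) Γ(μ + 1/2)² / (Γ(λ + 1 − μ) Γ(μ + 1 − λ) Γ(λ + μ + 1)). -/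
open MeasureTheory intervalIntegral

lemma aux_binom (a z : ℂ) (ha : 0 < a.re) (hz : ‖z‖ < 1) :
    HasSum (fun n : ℕ => Complex.Gamma (a + n) / (Complex.Gamma a * n.factorial) * z ^ n)
      ((1 - z) ^ (-a)) := by
  have h := (Complex.one_div_one_sub_cpow_hasFPowerSeriesOnBall_zero a).hasSum (y := z)
    (by rw [← ENNReal.ofReal_one, Metric.eball_ofReal]; simpa using hz)
  have hne : ∀ k : ℕ, a ≠ -k := by
    intro k hk
    rw [hk] at ha
    simp at ha
    have : (0:ℝ) ≤ k := k.cast_nonneg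
    linarith
  have hc : ∀ n : ℕ, Ring.choose (a + n - 1) n
      = Complex.Gamma (a + n) / (Complex.Gamma a * n.factorial) := by
    intro n
    have h1 := Complex.Gamma_add_nat_div_Gamma_eq (n := n) a hne
    have h2 := Ring.factorial_nsmul_multichoose_eq_ascPochhammer a n
    rw [Ring.multichoose_eq, Polynomial.ascPochhammer_smeval_eq_eval, ← h1, nsmul_eq_mul] at h2
    have h3 : (n.factorial : ℂ) ≠ 0 := by exact_mod_cast n.factorial_ne_zero
    rw [← div_div, ← h2]
    field_simp
  simp only [FormalMultilinearSeries.ofScalars_apply_eq, hc, zero_add, smul_eq_mul, one_div,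
    ← Complex.cpow_neg] at h
  exact h

lemma aux_normGamma (z : ℂ) (hz : 0 < z.re) : ‖Complex.Gamma z‖ ≤ Real.Gamma z.re := by
  rw [Complex.Gamma_eq_integral hz, Real.Gamma_eq_integral hz, Complex.GammaIntegral]
  refine (MeasureTheory.norm_integral_le_integral_norm _).trans (le_of_eq ?_)
  refine setIntegral_congr_fun measurableSet_Ioi fun x hx => ?_
  simp only [norm_mul]
  rw [Complex.norm_cpow_eq_rpow_re_of_pos hx, Complex.norm_real]
  simp

lemma aux_h (s : ℂ) (hs : 0 < s.re) :
    Filter.Tendsto (fun n : ℕ => Complex.Gamma (s + (n + 1 : ℕ)) / ((n:ℂ) ^ s * n.factorial))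
      Filter.atTop (nhds 1) := by
  have hne : ∀ k : ℕ, s ≠ -k := by
    intro k hk
    rw [hk] at hs
    simp at hs
    have : (0:ℝ) ≤ k := k.cast_nonneg
    linarith
  have hG := Complex.Gamma_ne_zero_of_re_pos hs
  have h := (tendsto_const_nhds (x := Complex.Gamma s)).div (Complex.GammaSeq_tendsto_Gamma s) hG
  rw [div_self hG] at h
  refine h.congr fun n => ?_
  have h1 := Complex.Gamma_add_nat_div_Gamma_eq (n := n + 1) s hne
  have h2 : (ascPochhammer ℂ (n+1)).eval s = ∏ j ∈ Finset.range (n + 1), (s + j) := by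
    generalize n + 1 = k
    induction k with
    | zero => simp
    | succ k ih => rw [ascPochhammer_succ_eval, ih, Finset.prod_range_succ]
  rw [div_eq_iff hG, h2] at h1
  simp only [Pi.div_apply, Complex.GammaSeq]
  rw [h1, div_div_eq_mul_div]
  ring

lemma aux_g (l m : ℂ) (hl : -(1 / 2 : ℝ) < l.re) (hl' : l.re < 1 / 2)
    (hm : -(1 / 2 : ℝ) < m.re) (hm' : m.re < 1 / 2) :
    Filter.Tendsto (fun n : ℕ => Complex.Gamma (n + 1/2 - m) * Complex.Gamma (n + 1/2 + m) /
      (Complex.Gamma (n + 1/2 - l) * Complex.Gamma (n + 1/2 + l))) Filter.atTop (nhds 1) := by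
  rw [← Filter.tendsto_add_atTop_iff_nat 1]
  have a1 := aux_h (1/2 - m) (by norm_num; linarith)
  have a2 := aux_h (1/2 + m) (by norm_num; linarith)
  have a3 := aux_h (1/2 - l) (by norm_num; linarith)
  have a4 := aux_h (1/2 + l) (by norm_num; linarith)
  have h := (a1.mul a2).div (a3.mul a4) (by norm_num)
  simp only [mul_one, div_one] at h
  refine h.congr' ?_
  filter_upwards [Filter.eventually_ge_atTop 1] with n hn
  have hn0 : (n : ℂ) ≠ 0 := by exact_mod_cast (by omega)
  have hf : (n.factorial : ℂ) ≠ 0 := by exact_mod_cast n.factorial_ne_zero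
  have key : ∀ x : ℂ, (n:ℂ)^(1/2 - x) * n.factorial * ((n:ℂ)^(1/2 + x) * n.factorial)
      = n * n.factorial * n.factorial := by
    intro x
    have : (n:ℂ)^(1/2 - x) * (n:ℂ)^(1/2 + x) = n := by
      rw [← Complex.cpow_add _ _ hn0]
      ring_nf
      simp
    linear_combination (n.factorial:ℂ)^2 * this
  simp only [Pi.div_apply]
  rw [div_mul_div_comm, div_mul_div_comm, key, key,
    div_div_div_cancel_right₀ (by positivity)]
  have e : ∀ x : ℂ, (1/2 - x + (n+1 : ℕ) : ℂ) = (n+1 : ℕ) + 1/2 - x := fun x => by ring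
  have e' : ∀ x : ℂ, (1/2 + x + (n+1 : ℕ) : ℂ) = (n+1 : ℕ) + 1/2 + x := fun x => by ring
  simp only [e, e']

lemma aux_sumx (l : ℂ)  :
    Summable (fun n : ℕ => 1 / (((n:ℂ) + 1/2)^2 - l^2)) := by
  have h1 : Summable (fun n : ℕ => 1 / ((n:ℝ)^2)) := by
    simp
  refine summable_of_isBigO_nat h1 ?_
  have : (fun n : ℕ => ((n:ℂ))^2) =O[Filter.atTop] (fun n : ℕ => ((n:ℂ) + 1/2)^2 - l^2) := by
    refine Asymptotics.IsBigO.of_bound 2 ?_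
    filter_upwards [Filter.eventually_ge_atTop (⌈2 * ‖l‖^2⌉₊ + 2)] with n hn
    have hn' : 2 * ‖l‖^2 + 2 ≤ n := by
      have := Nat.le_ceil (2 * ‖l‖^2)
      have h2 : ((⌈2 * ‖l‖^2⌉₊ + 2 : ℕ) : ℝ) ≤ n := by exact_mod_cast hn
      push_cast at h2
      linarith
    have h3 : ‖((n:ℂ) + 1/2)^2‖ = ((n:ℝ)+1/2)^2 := by
      rw [norm_pow]
      congr 1
      have : ((n:ℂ) + 1/2) = (((n:ℝ)+1/2 : ℝ) : ℂ) := by push_cast; ring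
      rw [this, Complex.norm_real, Real.norm_of_nonneg (by positivity)]
    have h4 := norm_sub_norm_le (((n:ℂ) + 1/2)^2) (l^2)
    rw [h3, norm_pow] at h4
    rw [norm_pow, Complex.norm_natCast]
    nlinarith [sq_nonneg ‖l‖]
  have h5 := this.inv_rev (by
    filter_upwards [Filter.eventually_ge_atTop 1] with n hn h
    have : (n:ℂ) ≠ 0 := by exact_mod_cast (by omega)
    exact absurd h (pow_ne_zero _ this))
  refine (h5.trans (Asymptotics.IsBigO.of_bound 1 ?_)).congr_left (by simp)
  simp

lemma aux_cot (l : ℂ) (hl : -(1 / 2 : ℝ) < l.re) (hl' : l.re < 1 / 2) (h0 : l ≠ 0) :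
    HasSum (fun n : ℕ => 1 / (((n:ℂ) + 1/2)^2 - l^2))
      (Real.pi * Complex.sin (Real.pi * l) / (2 * l * Complex.cos (Real.pi * l))) := by
  rw [(aux_sumx l).hasSum_iff_tendsto_nat]
  set z : ℂ := l + 1/2 with hz
  have hzr : 0 < z.re := by rw [hz]; norm_num; linarith
  have hzr' : z.re < 1 := by rw [hz]; norm_num; linarith
  have hzc : z ∈ Complex.integerComplement := by
    rw [Complex.mem_integerComplement_iff]
    rintro ⟨k, hk⟩
    rw [← hk] at hzr hzr'
    simp at hzr hzr'
    have h1 : 0 < k := by exact_mod_cast hzr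
    have h2 : k < 1 := by exact_mod_cast hzr'
    omega
  have hs : Summable (fun n : ℕ => (1 / (z - (n + 1)) + 1 / (z + (n + 1)))) := summable_cotTerm hzc
  have ht := hs.hasSum.tendsto_sum_nat
  rw [← cot_series_rep' hzc] at ht
  have hp : ∀ n : ℕ, z + n ≠ 0 := by
    intro n h
    have := congrArg Complex.re h
    simp at this
    have hn : (0:ℝ) ≤ n := n.cast_nonneg
    linarith
  have hq : ∀ n : ℕ, z - (n+1) ≠ 0 := by
    intro n h
    have := congrArg Complex.re h
    simp at this
    have hn : (0:ℝ) ≤ n := n.cast_nonneg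
    linarith
  have hinv : Filter.Tendsto (fun n : ℕ => 1 / (z + n)) Filter.atTop (nhds 0) := by
    simp only [one_div]
    refine Filter.tendsto_inv₀_cobounded.comp ?_
    rw [← tendsto_norm_atTop_iff_cobounded]
    refine Filter.tendsto_atTop_mono (f := fun n : ℕ => (n : ℝ)) (fun n => ?_)
      tendsto_natCast_atTop_atTop
    refine le_trans ?_ (Complex.re_le_norm _)
    simp [hzr.le]
  have hlim := ((ht.add (tendsto_const_nhds (x := 1 / z))).sub hinv).const_mul (-1 / (2 * l))
  have hval : -1 / (2 * l) * (Real.pi * (Real.pi * z).cot - 1 / z + 1 / z - 0)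
      = Real.pi * Complex.sin (Real.pi * l) / (2 * l * Complex.cos (Real.pi * l)) := by
    have e : (Real.pi * z : ℂ) = Real.pi * l + Real.pi / 2 := by rw [hz]; ring
    rw [e, Complex.cot, Complex.cos_add_pi_div_two, Complex.sin_add_pi_div_two]
    field_simp
    ring
  rw [hval] at hlim
  refine hlim.congr fun N => ?_
  induction N with
  | zero => simp
  | succ N ih =>
    rw [Finset.sum_range_succ, Finset.sum_range_succ, ← ih]
    have h1 := hp N
    have h2 := hp (N+1)
    have h3 := hq N
    have h5 : ((N:ℂ) + 1/2)^2 - l^2 = - ((z + N) * (z - (N+1))) := by rw [hz]; ring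
    have h6 : 2 * l = (z + N) + (z - (N+1)) := by rw [hz]; ring
    push_cast at h2 ⊢
    rw [h5]
    have h7 : 1 / -((z + N) * (z - (N+1))) = -1/(2*l) * (1 / (z+N) + 1/(z - (N+1))) := by
      field_simp
      rw [h6]
      ring
    rw [h7]
    ring

noncomputable def auxT (l m : ℂ) (n : ℕ) : ℂ :=
  Complex.Gamma (n + 1/2 - m) * Complex.Gamma (n + 1/2 + m) /
      (Complex.Gamma (n + 3/2 - l) * Complex.Gamma (n + 3/2 + l))

noncomputable def auxg (l m : ℂ) (n : ℕ) : ℂ :=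
  Complex.Gamma (n + 1/2 - m) * Complex.Gamma (n + 1/2 + m) /
      (Complex.Gamma (n + 1/2 - l) * Complex.Gamma (n + 1/2 + l))

lemma aux_nz (l : ℂ) (hl : -(1 / 2 : ℝ) < l.re) (n : ℕ) : (n:ℂ) + 1/2 + l ≠ 0 := by
  intro h
  have := congrArg Complex.re h
  norm_num at this
  have hn : (0:ℝ) ≤ n := n.cast_nonneg
  linarith

lemma aux_nz' (l : ℂ) (hl : l.re < 1 / 2) (n : ℕ) : (n:ℂ) + 1/2 - l ≠ 0 := by
  have := aux_nz (-l) (by simp; linarith) n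
  rwa [← sub_eq_add_neg] at this

lemma aux_Gnz (l : ℂ) (hl : -(1 / 2 : ℝ) < l.re) (n : ℕ) :
    Complex.Gamma ((n:ℂ) + 1/2 + l) ≠ 0 := by
  apply Complex.Gamma_ne_zero_of_re_pos
  norm_num
  have hn : (0:ℝ) ≤ n := n.cast_nonneg
  linarith

lemma aux_Gnz' (l : ℂ) (hl : l.re < 1 / 2) (n : ℕ) :
    Complex.Gamma ((n:ℂ) + 1/2 - l) ≠ 0 := by
  have := aux_Gnz (-l) (by simp; linarith) n
  rwa [← sub_eq_add_neg] at this

lemma aux_T (l m : ℂ) (hl : -(1 / 2 : ℝ) < l.re) (hl' : l.re < 1 / 2) (n : ℕ) :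
    auxT l m n = auxg l m n * (1 / (((n:ℂ) + 1/2)^2 - l^2)) := by
  have h1 := aux_nz l hl n
  have h2 := aux_nz' l hl' n
  have e1 : (n:ℂ) + 3/2 - l = (n + 1/2 - l) + 1 := by ring
  have e2 : (n:ℂ) + 3/2 + l = (n + 1/2 + l) + 1 := by ring
  rw [auxT, auxg, e1, e2, Complex.Gamma_add_one _ h1, Complex.Gamma_add_one _ h2, mul_one_div,
    div_div]
  congr 1
  ring

lemma aux_Tsum (l m : ℂ) (hl : -(1 / 2 : ℝ) < l.re) (hl' : l.re < 1 / 2)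
    (hm : -(1 / 2 : ℝ) < m.re) (hm' : m.re < 1 / 2) : Summable (auxT l m) := by
  have hg : Filter.Tendsto (auxg l m) Filter.atTop (nhds 1) := aux_g l m hl hl' hm hm'
  have h := (hg.isBigO_one ℝ).mul
    (Asymptotics.isBigO_refl (fun n : ℕ => 1 / (((n:ℂ) + 1/2)^2 - l^2)) Filter.atTop).norm_right
  refine summable_of_isBigO_nat (aux_sumx l).norm ?_
  refine h.congr (fun n => (aux_T l m hl hl' n).symm) (fun n => by simp)

lemma aux_Tval (l m : ℂ) (hl : -(1 / 2 : ℝ) < l.re) (hl' : l.re < 1 / 2)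
    (hm : -(1 / 2 : ℝ) < m.re) (hm' : m.re < 1 / 2) (hne : l^2 - m^2 ≠ 0) :
    HasSum (auxT l m) ((1 - auxg l m 0) / (l^2 - m^2)) := by
  have hg : Filter.Tendsto (auxg l m) Filter.atTop (nhds 1) := aux_g l m hl hl' hm hm'
  rw [(aux_Tsum l m hl hl' hm hm').hasSum_iff_tendsto_nat]
  refine ((hg.sub_const (auxg l m 0)).div_const (l^2-m^2)).congr fun N => ?_
  induction N with
  | zero => simp
  | succ N ih =>
    rw [Finset.sum_range_succ, ← ih, div_add' _ _ _ hne]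
    congr 1
    have h1 := aux_nz l hl N
    have h2 := aux_nz' l hl' N
    have h3 := aux_nz m hm N
    have h4 := aux_nz' m hm' N
    have h5 : ((N:ℂ) + 1/2)^2 - l^2 ≠ 0 := by
      have := mul_ne_zero h1 h2
      intro h; apply this; rw [← h]; ring
    have : auxg l m (N+1) = auxg l m N * ((((N:ℂ) + 1/2)^2 - m^2) / (((N:ℂ) + 1/2)^2 - l^2)) := by
      have e : ∀ x : ℂ, ((N+1 : ℕ) + 1/2 - x : ℂ) = N + 1/2 - x + 1:= fun x => by push_cast; ring
      have e' : ∀ x : ℂ, ((N+1 : ℕ) + 1/2 + x : ℂ) = N + 1/2 + x + 1 := fun x => by push_cast; ring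
      simp only [auxg, e, e']
      rw [Complex.Gamma_add_one _ h1, Complex.Gamma_add_one _ h2, Complex.Gamma_add_one _ h3,
        Complex.Gamma_add_one _ h4, div_mul_div_comm]
      congr 1 <;> ring
    rw [this, aux_T l m hl hl']
    generalize auxg l m N = g
    generalize auxg l m 0 = g0
    generalize hX : ((N:ℂ) + 1/2)^2 = X at *
    field_simp
    ring

noncomputable def auxc (m : ℂ) (n : ℕ) : ℂ :=
  Complex.Gamma (1/2 - m + n) / (Complex.Gamma (1/2 - m) * n.factorial)

lemma aux_inner (l m : ℂ) (hm : -(1 / 2 : ℝ) < m.re) (hm' : m.re < 1 / 2)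
    (hlm : (l + m).re < 0) (t : ℝ) (ht0 : 0 < t) (ht1 : t < 1) :
    HasSum (fun n : ℕ => auxc m n * (t:ℂ)^n * Complex.betaIntegral (m + 1/2 + n) (1 - l - m))
      (∫ u in (0:ℝ)..1, (u:ℂ)^(m - 1/2) * (1 - (u:ℂ))^(-l-m) * (1 - (t:ℂ) * u)^(m - 1/2)) := by
  simp only [Complex.betaIntegral, integral_of_le zero_le_one]
  have hi : ∀ n : ℕ, IntegrableOn (fun x : ℝ => (x:ℂ)^(m + 1/2 + n - 1) * (1 - (x:ℂ))^(1-l-m-1))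
      (Set.Ioc 0 1) := by
    intro n
    have := Complex.betaIntegral_convergent (u := m + 1/2 + n) (v := 1 - l - m)
      (by norm_num; have hn : (0:ℝ) ≤ n := n.cast_nonneg
          linarith) (by simp at hlm ⊢; linarith)
    rwa [intervalIntegrable_iff_integrableOn_Ioc_of_le zero_le_one] at this
  have hnc : ‖(t:ℂ)‖ < 1 := by rw [Complex.norm_real, Real.norm_of_nonneg ht0.le]; exact ht1
  have hs := (aux_binom (1/2 - m) t (by norm_num; linarith) hnc).summable.norm
  have key := hasSum_integral_of_summable_integral_norm (μ := volume.restrict (Set.Ioc (0:ℝ) 1))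
    (F := fun (n:ℕ) (x:ℝ) => auxc m n * (t:ℂ)^n *
      ((x:ℂ)^(m + 1/2 + n - 1) * (1 - (x:ℂ))^(1-l-m-1))) (fun n => (hi n).const_mul _) ?_
  · simp only [MeasureTheory.integral_const_mul] at key
    refine (congrArg (HasSum _) ?_).mpr key
    refine setIntegral_congr_fun measurableSet_Ioc fun u hu => ?_
    have hu0 : (u:ℂ) ≠ 0 := by exact_mod_cast hu.1.ne'
    have hnu : ‖(t:ℂ) * u‖ < 1 := by
      rw [← Complex.ofReal_mul, Complex.norm_real, Real.norm_of_nonneg (mul_nonneg ht0.le hu.1.le)]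
      nlinarith [hu.1, hu.2]
    have hb := (aux_binom (1/2 - m) (t * u) (by norm_num; linarith) hnu).mul_left
      ((u:ℂ)^(m - 1/2) * (1 - (u:ℂ))^(-l-m))
    rw [show m - 1/2 = -(1/2 - m) by ring] at hb ⊢
    rw [← hb.tsum_eq]
    refine tsum_congr fun n => ?_
    rw [show m + 1/2 + n - 1 = -(1/2 - m) + n by ring, Complex.cpow_add _ _ hu0,
      Complex.cpow_natCast, show 1 - l - m - 1 = -l-m by ring, auxc]
    ring
  · refine Summable.of_nonneg_of_le (fun n => integral_nonneg fun _ => norm_nonneg _) (fun n => ?_)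
      (hs.mul_right (∫ x in Set.Ioc (0:ℝ) 1,
        ‖(x:ℂ)^(m + 1/2 + (0:ℕ) - 1) * (1 - (x:ℂ))^(1-l-m-1)‖))
    simp only [norm_mul (auxc m n * (t:ℂ)^n), MeasureTheory.integral_const_mul]
    refine mul_le_mul_of_nonneg_left ?_ (norm_nonneg _)
    refine setIntegral_mono_on (hi n).norm (hi 0).norm measurableSet_Ioc fun x hx => ?_
    rw [norm_mul, norm_mul]
    refine mul_le_mul_of_nonneg_right ?_ (norm_nonneg _)
    rw [Complex.norm_cpow_eq_rpow_re_of_pos hx.1, Complex.norm_cpow_eq_rpow_re_of_pos hx.1]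
    refine Real.rpow_le_rpow_of_exponent_ge hx.1 hx.2 ?_
    simp

lemma aux_betaNorm (l : ℂ) (hl : -(1 / 2 : ℝ) < l.re) (n : ℕ) :
    ∫ t in Set.Ioc (0:ℝ) 1, ‖(t:ℂ)^((n:ℂ)+1-1) * (1 - (t:ℂ))^(l+1/2-1)‖
      ≤ n.factorial * Real.Gamma (l.re + 1/2) / ‖Complex.Gamma (n + 3/2 + l)‖ := by
  have hn : (0:ℝ) ≤ n := n.cast_nonneg
  have hl2 : 0 < (((l.re + 1/2 : ℝ)):ℂ).re := by rw [Complex.ofReal_re]; linarith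
  have hb := Complex.betaIntegral_eq_Gamma_mul_div (n+1) ((l.re + 1/2 : ℝ))
    (by norm_num; linarith) hl2
  have e : ((∫ t in Set.Ioc (0:ℝ) 1, ‖(t:ℂ)^((n:ℂ)+1-1) * (1 - (t:ℂ))^(l+1/2-1)‖ : ℝ) : ℂ)
      = Complex.betaIntegral (n+1) ((l.re + 1/2 : ℝ)) := by
    rw [Complex.betaIntegral, integral_of_le zero_le_one, ← integral_complex_ofReal,
      integral_Ioc_eq_integral_Ioo, integral_Ioc_eq_integral_Ioo]
    refine setIntegral_congr_fun measurableSet_Ioo fun x hx => ?_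
    have h1 : (0:ℝ) < 1 - x := by linarith [hx.2]
    have e1 : (1 - (x:ℂ)) = ((1 - x : ℝ) : ℂ) := by push_cast; ring
    rw [norm_mul, e1, Complex.norm_cpow_eq_rpow_re_of_pos hx.1,
      Complex.norm_cpow_eq_rpow_re_of_pos h1, Complex.ofReal_mul, Complex.ofReal_cpow hx.1.le,
      Complex.ofReal_cpow h1.le]
    congr 2
    · simp
    · norm_num
  rw [hb, Complex.Gamma_nat_eq_factorial,
    show (n:ℂ) + 1 + ((l.re + 1/2 : ℝ) : ℂ) = ((n + 3/2 + l.re : ℝ) : ℂ) by push_cast; ring,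
    Complex.Gamma_ofReal, Complex.Gamma_ofReal] at e
  have e' : (∫ t in Set.Ioc (0:ℝ) 1, ‖(t:ℂ)^((n:ℂ)+1-1) * (1 - (t:ℂ))^(l+1/2-1)‖)
     = n.factorial * Real.Gamma (l.re + 1/2) / Real.Gamma (n + 3/2 + l.re) := by
    exact_mod_cast e
  rw [e']
  have hp : 0 < ((n:ℂ) + 3/2 + l).re := by norm_num; linarith
  have h3 := aux_normGamma ((n:ℂ) + 3/2 + l) hp
  have h4 : ((n:ℂ) + 3/2 + l).re = n + 3/2 + l.re := by norm_num
  rw [h4] at h3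
  have h5 : 0 < ‖Complex.Gamma (n + 3/2 + l)‖ := norm_pos_iff.2 (Complex.Gamma_ne_zero_of_re_pos hp)
  have h6 : 0 < Real.Gamma (l.re + 1/2) := Real.Gamma_pos_of_pos (by linarith)
  gcongr

lemma aux_outer (l m : ℂ) (hl : -(1 / 2 : ℝ) < l.re) (hl' : l.re < 1 / 2)
    (hm : -(1 / 2 : ℝ) < m.re) (hm' : m.re < 1 / 2) (hlm : (l + m).re < 0) :
    (∫ t in (0:ℝ)..1, (1 - (t:ℂ))^(l - 1/2) *
      ∫ u in (0:ℝ)..1, (u:ℂ)^(m - 1/2) * (1 - (u:ℂ))^(-l-m) * (1 - (t:ℂ) * u)^(m - 1/2))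
    = Complex.Gamma (1 - l - m) * Complex.Gamma (l + 1/2) / Complex.Gamma (1/2 - m) *
      ∑' n, auxT l m n := by
  have hr : 0 < (1 - l - m).re := by simp at hlm ⊢; linarith
  have hl2 : 0 < (l + 1/2).re := by norm_num; linarith
  have hi : ∀ n : ℕ, IntegrableOn (fun x : ℝ => (x:ℂ)^((n:ℂ)+1 - 1) * (1 - (x:ℂ))^(l+1/2-1))
      (Set.Ioc 0 1) := by
    intro n
    have := Complex.betaIntegral_convergent (u := (n:ℂ)+1) (v := l + 1/2)
      (by norm_num; have hn : (0:ℝ) ≤ n := n.cast_nonneg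
          linarith) hl2
    rwa [intervalIntegrable_iff_integrableOn_Ioc_of_le zero_le_one] at this
  set d : ℕ → ℂ := fun n => auxc m n * Complex.betaIntegral (m + 1/2 + n) (1 - l - m) with hd
  have hdv : ∀ n, d n = Complex.Gamma (1 - l - m) / Complex.Gamma (1/2 - m) / n.factorial *
      (Complex.Gamma (n + 1/2 - m) * Complex.Gamma (n + 1/2 + m) / Complex.Gamma (n + 3/2 - l)) := by
    intro n
    have hn : (0:ℝ) ≤ n := n.cast_nonneg
    simp only [hd]
    rw [Complex.betaIntegral_eq_Gamma_mul_div _ _ (by norm_num; linarith) hr, auxc,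
      show m + 1/2 + n + (1 - l - m) = n + 3/2 - l by ring,
      show 1/2 - m + n = n + 1/2 - m by ring, show m + 1/2 + n = n + 1/2 + m by ring]
    field_simp
  have hfac : ∀ n : ℕ, (n.factorial : ℂ) ≠ 0 := fun n => by exact_mod_cast n.factorial_ne_zero
  have key := hasSum_integral_of_summable_integral_norm (μ := volume.restrict (Set.Ioc (0:ℝ) 1))
    (F := fun (n:ℕ) (x:ℝ) => d n *
      ((x:ℂ)^((n:ℂ)+1 - 1) * (1 - (x:ℂ))^(l+1/2-1))) (fun n => (hi n).const_mul _) ?_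
  · simp only [MeasureTheory.integral_const_mul] at key
    rw [integral_of_le zero_le_one, ← tsum_mul_left]
    have h1 : ∀ n : ℕ, d n * (∫ x in Set.Ioc (0:ℝ) 1, (x:ℂ)^((n:ℂ)+1 - 1) * (1 - (x:ℂ))^(l+1/2-1))
        = Complex.Gamma (1 - l - m) * Complex.Gamma (l + 1/2) / Complex.Gamma (1/2 - m) *
          auxT l m n := by
      intro n
      have hn : (0:ℝ) ≤ n := n.cast_nonneg
      have := Complex.betaIntegral_eq_Gamma_mul_div (n+1) (l+1/2) (by norm_num; linarith) hl2
      rw [Complex.betaIntegral, integral_of_le zero_le_one] at this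
      rw [this, hdv, auxT, Complex.Gamma_nat_eq_factorial,
        show (n:ℂ) + 1 + (l + 1/2) = n + 3/2 + l by ring]
      have := hfac n
      field_simp
    simp only [h1] at key
    rw [key.tsum_eq, integral_Ioc_eq_integral_Ioo, integral_Ioc_eq_integral_Ioo]
    refine setIntegral_congr_fun measurableSet_Ioo fun t ht => ?_
    have hb := (aux_inner l m hm hm' hlm t ht.1 ht.2).mul_left ((1 - (t:ℂ))^(l - 1/2))
    beta_reduce
    rw [← hb.tsum_eq]
    refine tsum_congr fun n => ?_
    rw [show (n:ℂ) + 1 - 1 = n by ring, show l + 1/2 - 1 = l - 1/2 by ring, Complex.cpow_natCast]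
    simp only [hd]
    ring
  · have hs := ((aux_Tsum l m hl hl' hm hm').norm.mul_left
      (‖Complex.Gamma (1 - l - m) / Complex.Gamma (1/2 - m)‖ * Real.Gamma (l.re + 1/2)))
    refine Summable.of_nonneg_of_le (fun n => integral_nonneg fun _ => norm_nonneg _) (fun n => ?_) hs
    simp only [norm_mul (d n), MeasureTheory.integral_const_mul]
    refine (mul_le_mul_of_nonneg_left (aux_betaNorm l hl n) (norm_nonneg _)).trans (le_of_eq ?_)
    rw [hdv, auxT]
    have h1 : ((n.factorial:ℕ):ℝ) ≠ 0 := by exact_mod_cast n.factorial_ne_zero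
    simp only [norm_mul, norm_div, Complex.norm_natCast]
    field_simp

lemma aux_A (l m : ℂ) (hl : -(1 / 2 : ℝ) < l.re) (hl' : l.re < 1 / 2)
    (hm : -(1 / 2 : ℝ) < m.re) (hm' : m.re < 1 / 2) (hlm : (l + m).re < 0) :
    (∫ t in (0 : ℝ)..1, ∫ s in (0 : ℝ)..t,
          (t : ℂ) ^ (l - 1 / 2 : ℂ) * ((1 - t : ℝ) : ℂ) ^ (l - 1 / 2 : ℂ) *
            (s : ℂ) ^ (m - 1 / 2 : ℂ) * ((1 - s : ℝ) : ℂ) ^ (m - 1 / 2 : ℂ) *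
            ((|s - t| : ℝ) : ℂ) ^ (-l - m))
    = Complex.Gamma (1 - l - m) * Complex.Gamma (l + 1/2) / Complex.Gamma (1/2 - m) *
      ∑' n, auxT l m n := by
  rw [← aux_outer l m hl hl' hm hm' hlm, integral_of_le zero_le_one, integral_of_le zero_le_one]
  refine setIntegral_congr_fun measurableSet_Ioc fun t ht => ?_
  have ht0 : (t:ℂ) ≠ 0 := by exact_mod_cast ht.1.ne'
  beta_reduce
  rw [← intervalIntegral.integral_const_mul]
  have hsub := smul_integral_comp_mul_left (a := 0) (b := 1) (fun s : ℝ =>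
     (t : ℂ) ^ (l - 1 / 2 : ℂ) * ((1 - t : ℝ) : ℂ) ^ (l - 1 / 2 : ℂ) *
            (s : ℂ) ^ (m - 1 / 2 : ℂ) * ((1 - s : ℝ) : ℂ) ^ (m - 1 / 2 : ℂ) *
            ((|s - t| : ℝ) : ℂ) ^ (-l - m)) t
  rw [mul_zero, mul_one] at hsub
  rw [← hsub, ← intervalIntegral.integral_smul, integral_of_le zero_le_one,
    integral_of_le zero_le_one]
  refine setIntegral_congr_fun measurableSet_Ioc fun u hu => ?_
  have h1 : |t * u - t| = t * (1 - u) := by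
    rw [abs_of_nonpos (by nlinarith [ht.1, hu.2])]; ring
  beta_reduce
  rw [h1, Complex.ofReal_mul t u, Complex.ofReal_mul t (1-u),
    Complex.mul_cpow_ofReal_nonneg ht.1.le hu.1.le,
    Complex.mul_cpow_ofReal_nonneg ht.1.le (by linarith [hu.2]), Complex.real_smul]
  have h2 : (t:ℂ) * ((t:ℂ)^(l-1/2) * (t:ℂ)^(m-1/2) * (t:ℂ)^(-l-m)) = 1 := by
    rw [← Complex.cpow_add _ _ ht0, ← Complex.cpow_add _ _ ht0,
      show l - 1/2 + (m - 1/2) + (-l-m) = -1 by ring, Complex.cpow_neg_one, mul_inv_cancel₀ ht0]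
  push_cast
  linear_combination ((1 - (t:ℂ))^(l - 1/2) * ((u:ℂ)^(m - 1/2) * (1 - (u:ℂ))^(-l-m) * (1 - (t:ℂ) * u)^(m - 1/2))) * h2

lemma aux_cosG (m : ℂ) :
    Complex.Gamma (1/2 - m) * Complex.Gamma (1/2 + m) = Real.pi / Complex.cos (Real.pi * m) := by
  have := Complex.Gamma_mul_Gamma_one_sub (1/2 - m)
  rw [show 1 - (1/2 - m) = 1/2 + m by ring,
    show (Real.pi:ℂ) * (1/2 - m) = Real.pi / 2 - Real.pi * m by ring,
    Complex.sin_pi_div_two_sub] at this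
  exact this

lemma aux_sinG (d : ℂ) (hd : d ≠ 0) :
    Complex.Gamma (1 + d) * Complex.Gamma (1 - d) = Real.pi * d / Complex.sin (Real.pi * d) := by
  have := Complex.Gamma_mul_Gamma_one_sub d
  rw [add_comm, Complex.Gamma_add_one _ hd, mul_assoc, this]
  ring

theorem stmt16 (lam mu : ℂ) (hlam : -(1 / 2 : ℝ) < lam.re) (hmu : -(1 / 2 : ℝ) < mu.re)
    (hsum : (lam + mu).re < 0) :
    (∫ t in (0 : ℝ)..1, ∫ s in (0 : ℝ)..t,
          (t : ℂ) ^ (lam - 1 / 2 : ℂ) * ((1 - t : ℝ) : ℂ) ^ (lam - 1 / 2 : ℂ) *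
            (s : ℂ) ^ (mu - 1 / 2 : ℂ) * ((1 - s : ℝ) : ℂ) ^ (mu - 1 / 2 : ℂ) *
            ((|s - t| : ℝ) : ℂ) ^ (-lam - mu)) +
        (Complex.cos (Real.pi * lam) / Complex.cos (Real.pi * mu)) *
          ∫ s in (0 : ℝ)..1, ∫ t in (0 : ℝ)..s,
            (t : ℂ) ^ (lam - 1 / 2 : ℂ) * ((1 - t : ℝ) : ℂ) ^ (lam - 1 / 2 : ℂ) *
              (s : ℂ) ^ (mu - 1 / 2 : ℂ) * ((1 - s : ℝ) : ℂ) ^ (mu - 1 / 2 : ℂ) *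
              ((|s - t| : ℝ) : ℂ) ^ (-lam - mu) =
      Complex.Gamma (lam + 1 / 2) * Complex.Gamma (1 / 2 - mu) *
          Complex.Gamma (mu + 1 / 2) ^ 2 /
        (Complex.Gamma (lam + 1 - mu) * Complex.Gamma (mu + 1 - lam) *
          Complex.Gamma (lam + mu + 1)) := by
  have hs : lam.re + mu.re < 0 := by simpa using hsum
  have hl' : lam.re < 1/2 := by linarith
  have hm' : mu.re < 1/2 := by linarith
  have hsum' : (mu + lam).re < 0 := by rwa [add_comm]
  have hI1 := aux_A lam mu hlam hl' hmu hm' hsum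
  have hI2 := aux_A mu lam hmu hm' hlam hl' hsum'
  have hI2' : (∫ s in (0 : ℝ)..1, ∫ t in (0 : ℝ)..s,
            (t : ℂ) ^ (lam - 1 / 2 : ℂ) * ((1 - t : ℝ) : ℂ) ^ (lam - 1 / 2 : ℂ) *
              (s : ℂ) ^ (mu - 1 / 2 : ℂ) * ((1 - s : ℝ) : ℂ) ^ (mu - 1 / 2 : ℂ) *
              ((|s - t| : ℝ) : ℂ) ^ (-lam - mu)) =
      Complex.Gamma (1 - lam - mu) * Complex.Gamma (mu + 1/2) / Complex.Gamma (1/2 - lam) *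
      ∑' n, auxT mu lam n := by
    rw [show 1 - lam - mu = 1 - mu - lam by ring, ← hI2]
    congr 1; funext s; congr 1; funext t
    rw [abs_sub_comm, show -lam - mu = -mu - lam by ring]
    ring
  rw [hI1, hI2']
  have hsne : lam + mu ≠ 0 := by
    intro h; rw [h] at hsum; simp at hsum
  have g1 : Complex.Gamma (1/2 + lam) ≠ 0 := Complex.Gamma_ne_zero_of_re_pos (by norm_num; linarith)
  have g2 : Complex.Gamma (1/2 - lam) ≠ 0 := Complex.Gamma_ne_zero_of_re_pos (by norm_num; linarith)
  have g3 : Complex.Gamma (1/2 + mu) ≠ 0 := Complex.Gamma_ne_zero_of_re_pos (by norm_num; linarith)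
  have g4 : Complex.Gamma (1/2 - mu) ≠ 0 := Complex.Gamma_ne_zero_of_re_pos (by norm_num; linarith)
  have g5 : Complex.Gamma (1 - (lam + mu)) ≠ 0 :=
    Complex.Gamma_ne_zero_of_re_pos (by simp; linarith)
  have g6 : Complex.Gamma (1 + (lam + mu)) ≠ 0 :=
    Complex.Gamma_ne_zero_of_re_pos (by simp; linarith)
  have g7 : Complex.Gamma (1 + (lam - mu)) ≠ 0 :=
    Complex.Gamma_ne_zero_of_re_pos (by simp; linarith)
  have g8 : Complex.Gamma (1 - (lam - mu)) ≠ 0 :=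
    Complex.Gamma_ne_zero_of_re_pos (by simp; linarith)
  have hpi : (Real.pi : ℂ) ≠ 0 := by exact_mod_cast Real.pi_ne_zero
  have cl := aux_cosG lam
  have cm := aux_cosG mu
  have s1 := aux_sinG (lam + mu) hsne
  have c1 : Complex.cos (Real.pi * lam) ≠ 0 := by
    intro h; rw [h, div_zero] at cl; exact mul_ne_zero g2 g1 cl
  have c2 : Complex.cos (Real.pi * mu) ≠ 0 := by
    intro h; rw [h, div_zero] at cm; exact mul_ne_zero g4 g3 cm
  have c3 : Complex.sin (Real.pi * (lam + mu)) ≠ 0 := by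
    intro h; rw [h, div_zero] at s1; exact mul_ne_zero g6 g5 s1
  rw [show lam + 1/2 = 1/2 + lam by ring, show mu + 1/2 = 1/2 + mu by ring,
    show 1 - lam - mu = 1 - (lam + mu) by ring, show lam + 1 - mu = 1 + (lam - mu) by ring,
    show mu + 1 - lam = 1 - (lam - mu) by ring, show lam + mu + 1 = 1 + (lam + mu) by ring]
  have e1 : Complex.Gamma (1 + (lam + mu)) = Real.pi * (lam + mu) /
      (Complex.sin (Real.pi * (lam + mu)) * Complex.Gamma (1 - (lam + mu))) := by
    rw [← div_div, ← s1]; field_simp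
  have e2 : Complex.Gamma (1/2 + lam) = Real.pi /
      (Complex.cos (Real.pi * lam) * Complex.Gamma (1/2 - lam)) := by
    rw [← div_div, ← cl, mul_div_cancel_left₀ _ g2]
  have e3 : Complex.Gamma (1/2 + mu) = Real.pi /
      (Complex.cos (Real.pi * mu) * Complex.Gamma (1/2 - mu)) := by
    rw [← div_div, ← cm, mul_div_cancel_left₀ _ g4]
  by_cases hd : lam = mu
  · subst hd
    have hl0 : lam ≠ 0 := by rintro rfl; simp at hsne
    have hT : ∑' n, auxT lam lam n = Real.pi * Complex.sin (Real.pi * lam) /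
        (2 * lam * Complex.cos (Real.pi * lam)) := by
      rw [← (aux_cot lam hlam hl' hl0).tsum_eq]
      refine tsum_congr fun n => ?_
      rw [aux_T lam lam hlam hl', auxg, div_self, one_mul]
      exact mul_ne_zero (aux_Gnz' _ hl' n) (aux_Gnz _ hlam n)
    have hsin : Complex.sin (Real.pi * (lam + lam)) =
        2 * Complex.sin (Real.pi * lam) * Complex.cos (Real.pi * lam) := by
      rw [← Complex.sin_two_mul]; ring_nf
    rw [hT, e1, hsin, e2, sub_self, add_zero, sub_zero, Complex.Gamma_one]
    have c4 : Complex.sin (Real.pi * lam) ≠ 0 := by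
      intro h; apply c3; rw [hsin, h]; ring
    field_simp
    ring
  · have hdne : lam - mu ≠ 0 := sub_ne_zero.2 hd
    have s2 := aux_sinG (lam - mu) hdne
    have c4 : Complex.sin (Real.pi * (lam - mu)) ≠ 0 := by
      intro h; rw [h, div_zero] at s2; exact mul_ne_zero g7 g8 s2
    have hsq : lam^2 - mu^2 ≠ 0 := by
      rw [sq_sub_sq]; exact mul_ne_zero hsne hdne
    have hsq' : mu^2 - lam^2 ≠ 0 := by rw [← neg_ne_zero, neg_sub]; exact hsq
    rw [(aux_Tval lam mu hlam hl' hmu hm' hsq).tsum_eq,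
      (aux_Tval mu lam hmu hm' hlam hl' hsq').tsum_eq]
    have r1 : auxg lam mu 0 = Complex.cos (Real.pi * lam) / Complex.cos (Real.pi * mu) := by
      simp only [auxg, Nat.cast_zero, zero_add]
      rw [cl, cm]; field_simp
    have r2 : auxg mu lam 0 = Complex.cos (Real.pi * mu) / Complex.cos (Real.pi * lam) := by
      simp only [auxg, Nat.cast_zero, zero_add]
      rw [cl, cm]; field_simp
    have e4 : Complex.Gamma (1 + (lam - mu)) * Complex.Gamma (1 - (lam - mu)) =
      Real.pi * (lam - mu) / Complex.sin (Real.pi * (lam - mu)) := s2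
    have hss : Complex.sin (Real.pi * (lam + mu)) * Complex.sin (Real.pi * (lam - mu)) =
        Complex.cos (Real.pi * mu)^2 - Complex.cos (Real.pi * lam)^2 := by
      rw [mul_add, mul_sub, Complex.sin_add, Complex.sin_sub]
      have p1 := Complex.sin_sq_add_cos_sq (Real.pi * lam)
      have p2 := Complex.sin_sq_add_cos_sq (Real.pi * mu)
      linear_combination Complex.cos (Real.pi * mu)^2 * p1 - Complex.cos (Real.pi * lam)^2 * p2
    rw [r1, r2, e4, e1, e2, e3, show mu^2 - lam^2 = -((lam - mu) * (lam + mu)) by ring,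
      show lam^2 - mu^2 = (lam - mu) * (lam + mu) by ring]
    clear hI1 hI2 hI2' cl cm s1 s2 e1 e2 e3 e4 r1 r2
    generalize Complex.sin (Real.pi * (lam + mu)) = S1 at *
    generalize Complex.sin (Real.pi * (lam - mu)) = S2 at *
    generalize Complex.cos (Real.pi * lam) = C1 at *
    generalize Complex.cos (Real.pi * mu) = C2 at *
    generalize Complex.Gamma (1 - (lam + mu)) = G5 at *
    generalize Complex.Gamma (1 / 2 - lam) = G2 at *
    generalize Complex.Gamma (1 / 2 - mu) = G4 at *
    generalize lam - mu = d at *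
    generalize lam + mu = s at *
    generalize (Real.pi : ℂ) = p at *
    have : p / (C1 * G2) * G4 * (p / (C2 * G4))^2 / (p * d / S2 * (p * s / (S1 * G5))) =
        p * G5 / (C1 * G2 * C2^2 * G4 * d * s) * (S1 * S2) := by
      field_simp
    rw [this, hss]
    field_simp
    ring
end
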